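/- Assume ε = 1/6 or ε = −1/6. Then there exist h₀ > 0 and C > 0, depending only on V₁ and V₂, such that for every C^∞ 1-periodic φ : ℝ → ℂ, every 1-periodic v ∈ C²(ℝ, ℂ), and every positive integer N with h = 1/N ≤ h₀, the Nyström system with data g = Wφ has a unique solution (φ₀,…,φ_{N−1}), and the postprocessed quadrature satisfies | h Σ_{j=0}^{N−1} φ_j v(t_j) − ∫₀¹ φ(t) v(t) dt | ≤ C h² ‖φ‖₃ ‖v‖₂. -/

import Mathlib

/-!
The argument takes place entirely on the side of Fourier coefficients.

Write the kernels as Fourier series in both variables times the periodic logarithm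
`Lg x = log(4 sin² πx)`, plus smooth parts (`ker_rep`). Since convolution with `Lg` multiplies the
`k`-th character by `Lh k = -1/|k|`, the operator `W` sends frequency `n` to the frequencies
`n + p + q`, with a symbol `om n (p, q)` (`Wop_hasSum`). The Nyström matrix acts on the discrete
Fourier coefficients `xv` of grid values in the same way (`D_res`): its symbol `omN` is obtained from
`om` on replacing `πn` by `sn N n = N sin(πn/N)`, and `Lh k` by the discrete Fourier coefficient
`gN N ε k` of `Lg` on the shifted grid.

The choice `ε = ±1/6` enters through `gN`. By aliasing, `gN` equals `Lh` plus a lattice sum plus the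
contribution `Lg ε / N` (`gN_eq`), and `Lg ε = log(4 sin²(π/6)) = 0`. Hence `gN - Lh` is of second
order in `h` (`gN_approx`), and so is `om - omN` (`om_sub_omN`). The real part of the lattice sum is
nonnegative (`re_Sx_nonneg`), so that `gN` is no smaller than `Lh` in modulus (`gN_lower`).

Stability (`stability`) holds in the maximum norm of discrete Fourier coefficients. As `A₁(s,s) = α`,
the anti-diagonal sums of the Fourier coefficients of `A₁` vanish off frequency `0` (`diag_hasSum`);
the leading part of the discrete system is therefore diagonal in frequency and of order one, up to a
perturbation bounded uniformly in `N` (`key_ineq`, `omN_rem`). If stability failed, the frequencies at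
which normalized counterexamples attain their maximum would be bounded, a diagonal subsequence would
converge pointwise to a nonzero bounded sequence annihilated by `om`, the ellipticity estimate would
make that sequence rapidly decaying (`RD1_bootstrap`), and injectivity of `W` would be contradicted
(`symbol_inj`).

For consistency, inserting the samples of the exact solution into the scheme leaves a residual in which
only `om - omN` appears (`residual_hasSum`); since `|φ̂(n)| ≲ ‖φ‖₃ ⟨n⟩⁻³`, it is `O(h² ‖φ‖₃)` at every
frequency (`residual_bound`). Thus the discrete Fourier coefficients of `φ_j - φ(t_j)` are
`O(h² ‖φ‖₃)`. Testing against `v`, whose Fourier coefficients are absolutely summable with sum at most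
a multiple of `‖v‖₂`, costs no power of `h` (`quad_error`), and the trapezoidal rule for `φ v` has an
error of order `h²` (`trapezoid_error`).
-/

noncomputable section

/-- Smooth kernel data, 1-periodic in each variable. -/
def SPK (A : ℝ → ℝ → ℂ) : Prop :=
  ContDiff ℝ (⊤ : ℕ∞) (fun p : ℝ × ℝ => A p.1 p.2) ∧
    (∀ s t, A (s + 1) t = A s t) ∧ (∀ s t, A s (t + 1) = A s t)

/-- Logarithmic kernel `V(s,t) = (i/(2π)) A(s,t) log(sin²(π(s−t))) + K(s,t)`. -/
def logKer (A K : ℝ → ℝ → ℂ) (s t : ℝ) : ℂ :=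
  Complex.I / (2 * Real.pi) * A s t * (Real.log (Real.sin (Real.pi * (s - t)) ^ 2) : ℂ) + K s t

/-- Grid point `s_{j+ε} = (j − 1/2 + ε)h`. -/
def sg (h ε : ℝ) (j : ℤ) : ℝ := ((j : ℝ) - 1 / 2 + ε) * h

/-- Grid point `t_{j+ε} = (j + ε)h`. -/
def tg (h ε : ℝ) (j : ℤ) : ℝ := ((j : ℝ) + ε) * h

/-- Integral operator with kernel `V`. -/
def Vop (V : ℝ → ℝ → ℂ) (φ : ℝ → ℂ) (s : ℝ) : ℂ := ∫ t in (0:ℝ)..1, V s t * φ t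

/-- Hypersingular operator `W = −D V₁ D + V₂`. -/
def Wop (V1 V2 : ℝ → ℝ → ℂ) (φ : ℝ → ℂ) (s : ℝ) : ℂ :=
  -deriv (Vop V1 (deriv φ)) s + Vop V2 φ s

/-- Nyström matrix entries `W^ε_{ij}`. -/
def Wmat (V1 V2 : ℝ → ℝ → ℂ) (h ε : ℝ) (i j : ℤ) : ℂ :=
  V1 (sg h ε (i + 1)) (sg h 0 (j + 1)) - V1 (sg h ε i) (sg h 0 (j + 1))
    - V1 (sg h ε (i + 1)) (sg h 0 j) + V1 (sg h ε i) (sg h 0 j)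
    + (h : ℂ) ^ 2 * V2 (tg h ε i) (tg h 0 j)

/-- Fourier coefficient of a 1-periodic function. -/
def fc (u : ℝ → ℂ) (m : ℤ) : ℂ :=
  ∫ t in (0:ℝ)..1, u t * Complex.exp (-(2 * Real.pi * Complex.I * (m : ℂ) * (t : ℂ)))

/-- Periodic Sobolev norm of order `r`. -/
def sobNorm (r : ℝ) (u : ℝ → ℂ) : ℝ :=
  Real.sqrt (‖fc u 0‖ ^ 2 +
    ∑' m : ℤ, if m = 0 then 0 else |(m : ℝ)| ^ (2 * r) * ‖fc u m‖ ^ 2)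

/-- 1-periodic step function on the ε-shifted grid with coefficients `v`. -/
def stepf (N : ℕ) (ε : ℝ) (v : ZMod N → ℂ) (s : ℝ) : ℂ :=
  v ((⌊s * N + 1 / 2 - ε⌋ : ℤ) : ZMod N)

/-- Midpoint quadrature error matrix entries `E^ε_{ij}`. -/
def Emat (V2 : ℝ → ℝ → ℂ) (h ε : ℝ) (i j : ℤ) : ℂ :=
  (∫ s in (sg h ε i)..(sg h ε (i + 1)), ∫ t in (sg h 0 j)..(sg h 0 (j + 1)), V2 s t)
    - (h : ℂ) ^ 2 * V2 (tg h ε i) (tg h 0 j)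

/-- Spectral (ℓ²-operator) norm of a complex `N×N` matrix. -/
def specNorm {N : ℕ} (M : Matrix (Fin N) (Fin N) ℂ) : ℝ :=
  ‖LinearMap.toContinuousLinearMap (Matrix.toEuclideanLin M)‖

/-- The function `C̄₁(t) = −(1/(2πi)) log(4 sin²(πt))`. -/
def Cbar1 (t : ℝ) : ℂ :=
  -(1 / (2 * Real.pi * Complex.I)) * (Real.log (4 * Real.sin (Real.pi * t) ^ 2) : ℂ)

end

/-- The Nyström linear system with data `g = Wφ`:
`Σ_j W^ε_{ij} v_j = h (Wφ)(t_{i+ε})`, `i = 0,…,N−1`. -/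
def Nys (V1 V2 : ℝ → ℝ → ℂ) (ε : ℝ) (N : ℕ) [NeZero N] (φ : ℝ → ℂ)
    (v : ZMod N → ℂ) : Prop :=
  ∀ i : ZMod N,
    (∑ j : ZMod N,
        Wmat V1 V2 (1 / (N : ℝ)) ε ((i.val : ℕ) : ℤ) ((j.val : ℕ) : ℤ) * v j)
      = (1 / (N : ℂ)) * Wop V1 V2 φ (tg (1 / (N : ℝ)) ε ((i.val : ℕ) : ℤ))

open Complex Filter Topology MeasureTheory

/-! ### Characters and Fourier coefficients -/

/-- The character `e_n(t) = exp(2πi n t)`. -/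
noncomputable def ee (n : ℤ) (t : ℝ) : ℂ := Complex.exp (2 * Real.pi * Complex.I * (n : ℂ) * (t : ℂ))

lemma ee_add_left (m n : ℤ) (t : ℝ) : ee (m + n) t = ee m t * ee n t := by
  unfold ee; rw [← Complex.exp_add]; push_cast; ring_nf

lemma ee_add_right (n : ℤ) (s t : ℝ) : ee n (s + t) = ee n s * ee n t := by
  unfold ee; rw [← Complex.exp_add]; push_cast; ring_nf

@[simp] lemma ee_zero_left (t : ℝ) : ee 0 t = 1 := by simp [ee]
@[simp] lemma ee_zero_right (n : ℤ) : ee n 0 = 1 := by simp [ee]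

lemma norm_ee (n : ℤ) (t : ℝ) : ‖ee n t‖ = 1 := by
  unfold ee
  have : 2 * Real.pi * Complex.I * (n : ℂ) * (t : ℂ) = ((2 * Real.pi * n * t : ℝ) : ℂ) * Complex.I := by
    push_cast; ring
  rw [this, Complex.norm_exp_ofReal_mul_I]

lemma ee_ne_zero (n : ℤ) (t : ℝ) : ee n t ≠ 0 := Complex.exp_ne_zero _

lemma ee_neg_left (n : ℤ) (t : ℝ) : ee (-n) t * ee n t = 1 := by
  rw [← ee_add_left]; simp

lemma ee_neg_right (n : ℤ) (t : ℝ) : ee n (-t) = ee (-n) t := by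
  unfold ee; push_cast; ring_nf

lemma ee_mul_int (n k : ℤ) (t : ℝ) : ee n ((k : ℝ) * t) = ee (n * k) t := by
  unfold ee; push_cast; ring_nf

@[simp] lemma ee_int (n k : ℤ) : ee n (k : ℝ) = 1 := by
  unfold ee
  rw [Complex.exp_eq_one_iff]
  exact ⟨n * k, by push_cast; ring⟩

lemma ee_add_one (n : ℤ) (t : ℝ) : ee n (t + 1) = ee n t := by
  rw [ee_add_right]
  have := ee_int n 1
  rw [show (1:ℝ) = ((1:ℤ):ℝ) by norm_num, this, mul_one]

lemma hasDerivAt_ee (n : ℤ) (t : ℝ) :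
    HasDerivAt (ee n) (2 * Real.pi * Complex.I * n * ee n t) t := by
  have h1 : HasDerivAt (fun x : ℝ => 2 * Real.pi * Complex.I * (n : ℂ) * (x : ℂ))
      (2 * Real.pi * Complex.I * n) t := by
    simpa using (Complex.ofRealCLM.hasDerivAt (x := t)).const_mul (2 * Real.pi * Complex.I * (n : ℂ))
  have := h1.cexp
  unfold ee
  convert this using 1
  ring

@[fun_prop] lemma continuous_ee (n : ℤ) : Continuous (ee n) :=
  continuous_iff_continuousAt.2 fun t => (hasDerivAt_ee n t).continuousAt

lemma two_pi_I_ne : (2 * Real.pi * Complex.I : ℂ) ≠ 0 := by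
  simp [Real.pi_ne_zero]

lemma integral_ee (n : ℤ) : ∫ t in (0:ℝ)..1, ee n t = if n = 0 then 1 else 0 := by
  split_ifs with h
  · subst h; simp
  · have hn : (2 * Real.pi * Complex.I * n : ℂ) ≠ 0 :=
      mul_ne_zero two_pi_I_ne (by exact_mod_cast h)
    have hd : ∀ x ∈ Set.uIcc (0:ℝ) 1,
        HasDerivAt (fun t => ee n t / (2 * Real.pi * Complex.I * n)) (ee n x) x := by
      intro x _
      have := (hasDerivAt_ee n x).div_const (2 * Real.pi * Complex.I * n)
      rwa [mul_div_cancel_left₀ _ hn] at this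
    rw [intervalIntegral.integral_eq_sub_of_hasDerivAt hd ((continuous_ee n).intervalIntegrable _ _)]
    have := ee_int n 1
    push_cast at this
    simp [this]

lemma fc_eq (u : ℝ → ℂ) (m : ℤ) : fc u m = ∫ t in (0:ℝ)..1, u t * ee (-m) t := by
  unfold fc ee
  congr 1; ext t; congr 2; push_cast; ring

/-- Integration by parts for Fourier coefficients of a `C¹` periodic function. -/
lemma fc_deriv {u u' : ℝ → ℂ} (hu : ∀ t, HasDerivAt u (u' t) t) (hc : Continuous u')
    (hp : Function.Periodic u 1) (n : ℤ) : fc u' n = 2 * Real.pi * Complex.I * n * fc u n := by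
  rw [fc_eq, fc_eq]
  have := intervalIntegral.integral_deriv_mul_eq_sub (a := 0) (b := 1) (u := u) (v := ee (-n))
    (u' := u') (v' := fun t => 2 * Real.pi * Complex.I * ((-n : ℤ) : ℂ) * ee (-n) t)
    (fun x _ => hu x) (fun x _ => hasDerivAt_ee _ x) (hc.intervalIntegrable _ _)
    ((by fun_prop : Continuous _).intervalIntegrable _ _)
  have h1 : ee (-n) 1 = 1 := by simpa using ee_int (-n) 1
  have hu1 : u 1 = u 0 := by simpa using hp 0
  have hcu : Continuous u := continuous_iff_continuousAt.2 fun t => (hu t).continuousAt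
  rw [h1, ee_zero_right, hu1, sub_self, intervalIntegral.integral_add
    ((by fun_prop : Continuous _).intervalIntegrable _ _)
    ((by fun_prop : Continuous _).intervalIntegrable _ _)] at this
  rw [eq_neg_of_add_eq_zero_left this, ← intervalIntegral.integral_const_mul,
    ← intervalIntegral.integral_neg]
  congr 1; ext t; push_cast; ring

lemma norm_fc_le {u : ℝ → ℂ} {C : ℝ} (hC : ∀ t, ‖u t‖ ≤ C) (n : ℤ) : ‖fc u n‖ ≤ C := by
  rw [fc_eq]
  have := intervalIntegral.norm_integral_le_of_norm_le_const (a := 0) (b := 1)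
    (f := fun t => u t * ee (-n) t) (C := C) (fun t _ => by rw [norm_mul, norm_ee, mul_one]; exact hC t)
  simpa using this

/-- The continuous function on the circle induced by a continuous periodic function. -/
noncomputable def circ (u : ℝ → ℂ) (hc : Continuous u) (hp : Function.Periodic u 1) :
    C(AddCircle (1:ℝ), ℂ) :=
  ⟨hp.lift, continuous_coinduced_dom.mpr hc⟩

lemma fourier_eq_ee (n : ℤ) (t : ℝ) : fourier n (t : AddCircle (1:ℝ)) = ee n t := by
  rw [fourier_coe_apply]; unfold ee; simp

lemma fourierCoeff_circ (u : ℝ → ℂ) (hc : Continuous u) (hp : Function.Periodic u 1) (n : ℤ) :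
    fourierCoeff (circ u hc hp) n = fc u n := by
  rw [fourierCoeff_eq_intervalIntegral _ n 0, fc_eq]
  simp only [zero_add, div_one, one_smul, fourier_eq_ee, smul_eq_mul]
  congr 1; ext t; rw [mul_comm]; rfl

/-- Pointwise convergence of an absolutely summable Fourier series to the function itself. -/
lemma hasSum_fc {u : ℝ → ℂ} (hc : Continuous u) (hp : Function.Periodic u 1)
    (hs : Summable (fun n => ‖fc u n‖)) (t : ℝ) : HasSum (fun n => fc u n * ee n t) (u t) := by
  have h : Summable (fourierCoeff (circ u hc hp)) := by
    refine Summable.of_norm ?_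
    simpa only [fourierCoeff_circ] using hs
  have := has_pointwise_sum_fourier_series_of_summable h (t : AddCircle (1:ℝ))
  simp only [fourierCoeff_circ, fourier_eq_ee, smul_eq_mul] at this
  exact this

lemma summable_sq_fc {u : ℝ → ℂ} (hc : Continuous u) (hp : Function.Periodic u 1) :
    Summable (fun n => ‖fc u n‖ ^ 2) := by
  have := (hasSum_sq_fourierCoeff (ContinuousMap.toLp (E := ℂ) 2 AddCircle.haarAddCircle ℂ
    (circ u hc hp))).summable
  simpa only [fourierCoeff_toLp, fourierCoeff_circ] using this

/-- The Japanese bracket `⟨n⟩ = 1 + |n|`. -/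
noncomputable def jb (n : ℤ) : ℝ := 1 + |(n : ℝ)|

lemma one_le_jb (n : ℤ) : 1 ≤ jb n := by unfold jb; linarith [abs_nonneg (n : ℝ)]
lemma jb_pos (n : ℤ) : 0 < jb n := lt_of_lt_of_le one_pos (one_le_jb n)
lemma abs_le_jb (n : ℤ) : |(n : ℝ)| ≤ jb n := by unfold jb; linarith
lemma jb_neg (n : ℤ) : jb (-n) = jb n := by simp [jb]
lemma jb_add (m n : ℤ) : jb (m + n) ≤ jb m * jb n := by
  unfold jb; push_cast
  nlinarith [abs_add_le (m : ℝ) n, abs_nonneg (m : ℝ), abs_nonneg (n : ℝ),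
    mul_nonneg (abs_nonneg (m : ℝ)) (abs_nonneg (n : ℝ))]
lemma jb_sub (m n : ℤ) : jb (m - n) ≤ jb m * jb n := by
  rw [sub_eq_add_neg, ← jb_neg n]; exact jb_add _ _
lemma jb_le_two {n : ℤ} (h : n ≠ 0) : jb n ≤ 2 * |(n : ℝ)| := by
  have : (1:ℝ) ≤ |(n : ℝ)| := by exact_mod_cast Int.one_le_abs h
  unfold jb; linarith

lemma summable_jb : Summable (fun n : ℤ => (jb n ^ 2)⁻¹) := by
  have h1 : Summable (fun n : ℤ => 1 / (n : ℝ) ^ 2) := by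
    simpa using Real.summable_one_div_int_pow (p := 2) |>.2 (by norm_num)
  have h2 : Summable (fun n : ℤ => if n = 0 then (1:ℝ) else 0) :=
    summable_of_ne_finset_zero (s := {0}) (by intro b hb; simp at hb; simp [hb])
  refine Summable.of_nonneg_of_le (fun n => by have := jb_pos n; positivity) (fun n => ?_) (h1.add h2)
  by_cases h : n = 0
  · subst h; simp [jb]
  · simp only [h, if_false, add_zero]
    rw [← one_div]
    have : (0:ℝ) < |(n : ℝ)| := by positivity
    rw [← sq_abs (n : ℝ)]
    gcongr
    exact abs_le_jb n

/-- Rapid decay of a sequence indexed by `ℤ`. -/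
def RD1 (y : ℤ → ℂ) : Prop := ∀ k : ℕ, ∃ C : ℝ, ∀ n, jb n ^ k * ‖y n‖ ≤ C

lemma RD1.summable {y : ℤ → ℂ} (hy : RD1 y) (k : ℕ) : Summable (fun n => jb n ^ k * ‖y n‖) := by
  obtain ⟨C, hC⟩ := hy (k + 2)
  refine Summable.of_nonneg_of_le (fun n => by have := jb_pos n; positivity) (fun n => ?_)
    (summable_jb.mul_left C)
  have := jb_pos n
  rw [← div_eq_mul_inv, le_div_iff₀ (by positivity)]
  calc _ = jb n ^ (k + 2) * ‖y n‖ := by ring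
    _ ≤ C := hC n

lemma RD1.summable_norm {y : ℤ → ℂ} (hy : RD1 y) : Summable (fun n => ‖y n‖) := by
  simpa using hy.summable 0

lemma one_add_pow_le {x : ℝ} (hx : 0 ≤ x) (k : ℕ) : (1 + x) ^ k ≤ 2 ^ k * (1 + x ^ k) := by
  have h := add_pow_le (zero_le_one) hx k
  have h2 : (2:ℝ) ^ (k - 1) ≤ 2 ^ k := pow_le_pow_right₀ (by norm_num) (by omega)
  simp only [one_pow] at h
  exact h.trans (by gcongr)

/-! ### Rapid decay and Fourier series -/

lemma bounded_of_periodic {u : ℝ → ℂ} (hc : Continuous u) (hp : Function.Periodic u 1) :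
    ∃ C, ∀ t, ‖u t‖ ≤ C := by
  obtain ⟨C, hC⟩ := (isCompact_Icc (a := (0:ℝ)) (b := 1)).exists_bound_of_continuousOn hc.continuousOn
  refine ⟨C, fun t => ?_⟩
  obtain ⟨y, hy, hyt⟩ := hp.exists_mem_Ico₀ one_pos t
  rw [hyt]
  exact hC y ⟨hy.1, hy.2.le⟩

lemma smooth_deriv {u : ℝ → ℂ} (hu : ContDiff ℝ (⊤ : ℕ∞) u) :
    ContDiff ℝ (⊤ : ℕ∞) (deriv u) := (contDiff_infty_iff_deriv.1 hu).2

lemma periodic_deriv {u : ℝ → ℂ} (hp : Function.Periodic u 1) : Function.Periodic (deriv u) 1 := by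
  intro t
  have : (fun s => u (s + 1)) = u := funext hp
  rw [← deriv_comp_add_const, this]

lemma norm_fc_deriv_eq {u u' : ℝ → ℂ} (hu : ∀ t, HasDerivAt u (u' t) t) (hc : Continuous u')
    (hp : Function.Periodic u 1) (n : ℤ) : |(n : ℝ)| * ‖fc u n‖ ≤ ‖fc u' n‖ := by
  rw [fc_deriv hu hc hp]
  simp only [norm_mul, Complex.norm_I, Complex.norm_real, mul_one, Complex.norm_intCast,
    Complex.norm_ofNat, Real.norm_eq_abs, abs_of_pos Real.pi_pos]
  have := mul_nonneg (abs_nonneg (n : ℝ)) (norm_nonneg (fc u n))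
  nlinarith [Real.pi_gt_three]

lemma RD1_of_pow {y : ℤ → ℂ} (h : ∀ k : ℕ, ∃ C, ∀ n : ℤ, |(n : ℝ)| ^ k * ‖y n‖ ≤ C) : RD1 y := by
  intro k
  obtain ⟨C0, h0⟩ := h 0
  obtain ⟨C1, h1⟩ := h k
  refine ⟨2 ^ k * (C0 + C1), fun n => ?_⟩
  have h2 := one_add_pow_le (abs_nonneg (n : ℝ)) k
  have h0 := h0 n
  have h1 := h1 n
  calc jb n ^ k * ‖y n‖ ≤ 2 ^ k * (1 + |(n : ℝ)| ^ k) * ‖y n‖ := by unfold jb; gcongr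
    _ = 2 ^ k * (|(n : ℝ)| ^ 0 * ‖y n‖ + |(n : ℝ)| ^ k * ‖y n‖) := by ring
    _ ≤ _ := by gcongr

lemma RD1_fc {u : ℝ → ℂ} (hu : ContDiff ℝ (⊤ : ℕ∞) u) (hp : Function.Periodic u 1) :
    RD1 (fc u) := by
  refine RD1_of_pow fun k => ?_
  induction k generalizing u with
  | zero =>
    obtain ⟨C, hC⟩ := bounded_of_periodic hu.continuous hp
    exact ⟨C, fun n => by simpa using norm_fc_le hC n⟩
  | succ k ih =>
    obtain ⟨C, hC⟩ := ih (smooth_deriv hu) (periodic_deriv hp)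
    refine ⟨C, fun n => le_trans ?_ (hC n)⟩
    have := norm_fc_deriv_eq (fun t => (hu.differentiable (by simp) t).hasDerivAt)
      (smooth_deriv hu).continuous hp n
    calc _ = |(n : ℝ)| ^ k * (|(n : ℝ)| * ‖fc u n‖) := by ring
      _ ≤ _ := by gcongr

/-- The function with Fourier coefficients `y`. -/
noncomputable def ser (y : ℤ → ℂ) (t : ℝ) : ℂ := ∑' n, y n * ee n t

lemma summable_ser {y : ℤ → ℂ} (hy : Summable fun n => ‖y n‖) (t : ℝ) :
    Summable fun n => y n * ee n t :=
  Summable.of_norm (by simpa only [norm_mul, norm_ee, mul_one] using hy)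

/-- A summable family is recovered from its Fourier series by orthogonality. -/
lemma fc_ser {y : ℤ → ℂ} (hy : Summable fun n => ‖y n‖) (m : ℤ) : fc (ser y) m = y m := by
  rw [fc_eq]
  have h := intervalIntegral.hasSum_integral_of_dominated_convergence (a := 0) (b := 1)
    (μ := volume) (F := fun n t => y n * ee (n - m) t) (f := fun t => ser y t * ee (-m) t)
    (fun n _ => ‖y n‖) (fun n => (by fun_prop : Continuous _).aestronglyMeasurable)
    (fun n => by simp [norm_ee]) (by simp [hy]) (by simp)
    (by
      refine Eventually.of_forall fun t _ => ?_
      have := ((summable_ser hy t).hasSum).mul_right (ee (-m) t)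
      simp only [mul_assoc, ← ee_add_left, ← sub_eq_add_neg] at this
      exact this)
  rw [← h.tsum_eq, tsum_eq_single m]
  · rw [intervalIntegral.integral_const_mul, integral_ee]; simp
  · intro n hn
    rw [intervalIntegral.integral_const_mul, integral_ee]; simp [sub_eq_zero, hn]

lemma RD1.smul_n {y : ℤ → ℂ} (hy : RD1 y) : RD1 (fun n => 2 * Real.pi * Complex.I * n * y n) := by
  intro k
  obtain ⟨C, hC⟩ := hy (k + 1)
  refine ⟨2 * Real.pi * C, fun n => ?_⟩
  simp only [norm_mul, Complex.norm_I, Complex.norm_real, mul_one, Complex.norm_intCast,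
    Complex.norm_ofNat, Real.norm_eq_abs, abs_of_pos Real.pi_pos]
  have := jb_pos n
  have h2 := Real.pi_pos
  calc _ ≤ jb n ^ k * (2 * Real.pi * jb n * ‖y n‖) := by
        gcongr; exact abs_le_jb n
    _ = 2 * Real.pi * (jb n ^ (k + 1) * ‖y n‖) := by ring
    _ ≤ _ := by gcongr; exact hC n

lemma hasDerivAt_ser {y : ℤ → ℂ} (hy : RD1 y) (t : ℝ) :
    HasDerivAt (ser y) (ser (fun n => 2 * Real.pi * Complex.I * n * y n) t) t := by
  have := hasDerivAt_tsum (u := fun n => ‖2 * Real.pi * Complex.I * n * y n‖)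
    (g := fun n t => y n * ee n t) (g' := fun n t => 2 * Real.pi * Complex.I * n * y n * ee n t)
    hy.smul_n.summable_norm (y₀ := 0)
    (fun n s => ((hasDerivAt_ee n s).const_mul (y n)).congr_deriv (by ring))
    (fun n s => by rw [norm_mul, norm_ee, mul_one]) (summable_ser hy.summable_norm 0) t
  exact this

lemma deriv_ser {y : ℤ → ℂ} (hy : RD1 y) :
    deriv (ser y) = ser (fun n => 2 * Real.pi * Complex.I * n * y n) :=
  funext fun t => (hasDerivAt_ser hy t).deriv

lemma contDiff_ser {y : ℤ → ℂ} (hy : RD1 y) : ContDiff ℝ (⊤ : ℕ∞) (ser y) := by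
  rw [contDiff_infty]
  intro k
  induction k generalizing y with
  | zero =>
    rw [Nat.cast_zero, contDiff_zero]
    exact continuous_iff_continuousAt.2 fun t => (hasDerivAt_ser hy t).continuousAt
  | succ k ih =>
    rw [Nat.cast_succ, contDiff_succ_iff_deriv]
    refine ⟨fun t => (hasDerivAt_ser hy t).differentiableAt, by simp, ?_⟩
    rw [deriv_ser hy]
    exact ih hy.smul_n

lemma periodic_ser (y : ℤ → ℂ) : Function.Periodic (ser y) 1 := by
  intro t; unfold ser; simp only [ee_add_one]

lemma eq_ser {u : ℝ → ℂ} (hu : ContDiff ℝ (⊤ : ℕ∞) u) (hp : Function.Periodic u 1) :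
    u = ser (fc u) :=
  funext fun t => (hasSum_fc hu.continuous hp (RD1_fc hu hp).summable_norm t).tsum_eq.symm

/-! ### Double Fourier series of smooth doubly periodic functions -/

/-- Double Fourier coefficient of `A`. -/
noncomputable def c2 (A : ℝ → ℝ → ℂ) (p q : ℤ) : ℂ := fc (fun t => fc (fun s => A s t) p) q

lemma SPK.swap {A : ℝ → ℝ → ℂ} (hA : SPK A) : SPK (fun s t => A t s) :=
  ⟨hA.1.comp (contDiff_snd.prodMk contDiff_fst), fun s t => hA.2.2 t s, fun s t => hA.2.1 t s⟩

lemma SPK.cont {A : ℝ → ℝ → ℂ} (hA : SPK A) : Continuous (fun p : ℝ × ℝ => A p.1 p.2) :=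
  hA.1.continuous

lemma SPK.left {A : ℝ → ℝ → ℂ} (hA : SPK A) (t : ℝ) : ContDiff ℝ (⊤ : ℕ∞) (fun s => A s t) :=
  hA.1.comp (contDiff_id.prodMk contDiff_const)

lemma SPK.D1 {A : ℝ → ℝ → ℂ} (hA : SPK A) : SPK (fun s t => deriv (fun x => A x t) s) := by
  refine ⟨?_, fun s t => ?_, fun s t => ?_⟩
  · have h : ContDiff ℝ (⊤ : ℕ∞) (fun p : ℝ × ℝ =>
        fderiv ℝ (fun p : ℝ × ℝ => A p.1 p.2) p ((1 : ℝ), (0 : ℝ))) :=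
      (hA.1.fderiv_right (by simp)).clm_apply contDiff_const
    convert h using 1
    ext p
    have h1 : HasFDerivAt (fun p : ℝ × ℝ => A p.1 p.2)
        (fderiv ℝ (fun p : ℝ × ℝ => A p.1 p.2) (p.1, p.2)) (p.1, p.2) :=
      (hA.1.differentiable (by simp) _).hasFDerivAt
    have h2 : HasDerivAt (fun x : ℝ => (x, p.2)) ((1 : ℝ), (0 : ℝ)) p.1 :=
      (hasDerivAt_id _).prodMk (hasDerivAt_const _ _)
    exact (h1.comp_hasDerivAt p.1 h2).deriv
  · exact periodic_deriv (u := fun x => A x t) (fun x => hA.2.1 x t) s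
  · simp only [hA.2.2]

lemma SPK.bdd {A : ℝ → ℝ → ℂ} (hA : SPK A) : ∃ C, ∀ s t, ‖A s t‖ ≤ C := by
  obtain ⟨C, hC⟩ := ((isCompact_Icc (a := (0:ℝ)) (b := 1)).prod
    (isCompact_Icc (a := (0:ℝ)) (b := 1))).exists_bound_of_continuousOn hA.cont.continuousOn
  refine ⟨C, fun s t => ?_⟩
  have hp1 : Function.Periodic (fun x => A x t) 1 := fun x => hA.2.1 x t
  obtain ⟨y, hy, hyt⟩ := hp1.exists_mem_Ico₀ one_pos s
  have hp2 : Function.Periodic (fun x => A y x) 1 := fun x => hA.2.2 y x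
  obtain ⟨z, hz, hzt⟩ := hp2.exists_mem_Ico₀ one_pos t
  have e1 : A s t = A y t := hyt
  have e2 : A y t = A y z := hzt
  rw [e1, e2]
  exact hC (y, z) ⟨⟨hy.1, hy.2.le⟩, ⟨hz.1, hz.2.le⟩⟩

lemma SPK.bdd_c2 {A : ℝ → ℝ → ℂ} (hA : SPK A) : ∃ C, ∀ p q, ‖c2 A p q‖ ≤ C := by
  obtain ⟨C, hC⟩ := hA.bdd
  exact ⟨C, fun p q => norm_fc_le (fun t => norm_fc_le (fun s => hC s t) p) q⟩

lemma SPK.continuous_fc {A : ℝ → ℝ → ℂ} (hA : SPK A) (p : ℤ) :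
    Continuous (fun t => fc (fun s => A s t) p) := by
  simp only [fc_eq]
  refine intervalIntegral.continuous_parametric_intervalIntegral_of_continuous' ?_ 0 1
  have := hA.cont.comp (continuous_snd.prodMk continuous_fst : Continuous fun p : ℝ × ℝ => (p.2, p.1))
  exact this.mul ((continuous_ee _).comp continuous_snd)

lemma c2_swap {A : ℝ → ℝ → ℂ} (hA : SPK A) (p q : ℤ) : c2 A p q = c2 (fun s t => A t s) q p := by
  unfold c2
  simp only [fc_eq, ← intervalIntegral.integral_mul_const]
  have hi : IntegrableOn (Function.uncurry fun t s => A s t * ee (-p) s * ee (-q) t)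
      (Set.uIoc (0:ℝ) 1 ×ˢ Set.uIoc (0:ℝ) 1) := by
    have hc : Continuous (Function.uncurry fun t s => A s t * ee (-p) s * ee (-q) t) := by
      have h1 := hA.cont.comp
        (continuous_snd.prodMk continuous_fst : Continuous fun p : ℝ × ℝ => (p.2, p.1))
      exact (h1.mul ((continuous_ee _).comp continuous_snd)).mul
        ((continuous_ee _).comp continuous_fst)
    refine (hc.continuousOn.integrableOn_compact
      ((isCompact_Icc (a := (0:ℝ)) (b := 1)).prod (isCompact_Icc (a := (0:ℝ)) (b := 1)))).mono_set ?_
    rw [Set.uIoc_of_le zero_le_one]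
    exact Set.prod_mono Set.Ioc_subset_Icc_self Set.Ioc_subset_Icc_self
  rw [intervalIntegral_intervalIntegral_swap hi]
  congr 1; ext s; congr 1; ext t; ring

lemma c2_D1 {A : ℝ → ℝ → ℂ} (hA : SPK A) (p q : ℤ) :
    |(p : ℝ)| * ‖c2 A p q‖ ≤ ‖c2 (fun s t => deriv (fun x => A x t) s) p q‖ := by
  have h : ∀ t, fc (fun s => deriv (fun x => A x t) s) p
      = 2 * Real.pi * Complex.I * p * fc (fun s => A s t) p := fun t =>
    fc_deriv (fun s => ((hA.left t).differentiable (by simp) s).hasDerivAt)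
      (smooth_deriv (hA.left t)).continuous (fun x => hA.2.1 x t) p
  have h2 : c2 (fun s t => deriv (fun x => A x t) s) p q = 2 * Real.pi * Complex.I * p * c2 A p q := by
    unfold c2
    simp only [h]
    simp only [fc_eq, mul_assoc, intervalIntegral.integral_const_mul]
  rw [h2]
  simp only [norm_mul, Complex.norm_I, Complex.norm_real, mul_one, Complex.norm_intCast,
    Complex.norm_ofNat, Real.norm_eq_abs, abs_of_pos Real.pi_pos]
  have := mul_nonneg (abs_nonneg (p : ℝ)) (norm_nonneg (c2 A p q))
  nlinarith [Real.pi_gt_three]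

/-- Repeated integration by parts in both variables. -/
lemma c2_dec {A : ℝ → ℝ → ℂ} (hA : SPK A) (i j : ℕ) :
    ∃ C, ∀ p q : ℤ, |(p : ℝ)| ^ i * |(q : ℝ)| ^ j * ‖c2 A p q‖ ≤ C := by
  induction i generalizing A with
  | zero =>
    suffices h : ∀ A : ℝ → ℝ → ℂ, SPK A → ∃ C, ∀ p q : ℤ, |(p : ℝ)| ^ j * ‖c2 A p q‖ ≤ C by
      obtain ⟨C, hC⟩ := h _ hA.swap
      exact ⟨C, fun p q => by rw [c2_swap hA]; simpa using hC q p⟩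
    clear hA A
    induction j with
    | zero =>
      intro A hA
      obtain ⟨C, hC⟩ := hA.bdd_c2
      exact ⟨C, fun p q => by simpa using hC p q⟩
    | succ j ih =>
      intro A hA
      obtain ⟨C, hC⟩ := ih _ hA.D1
      refine ⟨C, fun p q => le_trans ?_ (hC p q)⟩
      calc _ = |(p : ℝ)| ^ j * (|(p : ℝ)| * ‖c2 A p q‖) := by ring
        _ ≤ _ := by gcongr; exact c2_D1 hA p q
  | succ i ih =>
    obtain ⟨C, hC⟩ := ih hA.D1
    refine ⟨C, fun p q => le_trans ?_ (hC p q)⟩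
    calc _ = |(p : ℝ)| ^ i * |(q : ℝ)| ^ j * (|(p : ℝ)| * ‖c2 A p q‖) := by ring
      _ ≤ _ := by gcongr; exact c2_D1 hA p q

/-- The weight `⟨p⟩⟨q⟩` on `ℤ × ℤ`. -/
noncomputable def J (x : ℤ × ℤ) : ℝ := jb x.1 * jb x.2

lemma one_le_J (x : ℤ × ℤ) : 1 ≤ J x := one_le_mul_of_one_le_of_one_le (one_le_jb _) (one_le_jb _)
lemma J_pos (x : ℤ × ℤ) : 0 < J x := lt_of_lt_of_le one_pos (one_le_J x)
lemma jb_fst_le_J (x : ℤ × ℤ) : jb x.1 ≤ J x :=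
  le_mul_of_one_le_right (jb_pos _).le (one_le_jb _)
lemma jb_snd_le_J (x : ℤ × ℤ) : jb x.2 ≤ J x :=
  le_mul_of_one_le_left (jb_pos _).le (one_le_jb _)
lemma jb_add_le_J (x : ℤ × ℤ) : jb (x.1 + x.2) ≤ J x := jb_add _ _

/-- Rapid decay of a family indexed by `ℤ × ℤ`. -/
def RD2 (a : ℤ × ℤ → ℂ) : Prop := ∀ k : ℕ, ∃ C : ℝ, ∀ x, J x ^ k * ‖a x‖ ≤ C

lemma summable_J : Summable (fun x : ℤ × ℤ => (J x ^ 2)⁻¹) := by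
  have := summable_jb.mul_of_nonneg summable_jb (fun n => by have := jb_pos n; positivity)
    (fun n => by have := jb_pos n; positivity)
  refine this.congr fun x => ?_
  simp only [J]; rw [mul_pow, mul_inv]

lemma RD2.summable {a : ℤ × ℤ → ℂ} (ha : RD2 a) (k : ℕ) : Summable (fun x => J x ^ k * ‖a x‖) := by
  obtain ⟨C, hC⟩ := ha (k + 2)
  refine Summable.of_nonneg_of_le (fun n => by have := J_pos n; positivity) (fun n => ?_)
    (summable_J.mul_left C)
  have := J_pos n
  rw [← div_eq_mul_inv, le_div_iff₀ (by positivity)]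
  calc _ = J n ^ (k + 2) * ‖a n‖ := by ring
    _ ≤ C := hC n

lemma RD2.summable_norm {a : ℤ × ℤ → ℂ} (ha : RD2 a) : Summable (fun x => ‖a x‖) := by
  simpa using ha.summable 0

lemma RD2.sub_smul {a b : ℤ × ℤ → ℂ} (ha : RD2 a) (hb : RD2 b) (c : ℂ) :
    RD2 (fun x => a x - c * b x) := by
  intro k
  obtain ⟨C, hC⟩ := ha k
  obtain ⟨D, hD⟩ := hb k
  refine ⟨C + ‖c‖ * D, fun x => ?_⟩
  have := J_pos x
  calc J x ^ k * ‖a x - c * b x‖ ≤ J x ^ k * (‖a x‖ + ‖c‖ * ‖b x‖) := by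
        gcongr; exact (norm_sub_le _ _).trans_eq (by rw [norm_mul])
    _ = J x ^ k * ‖a x‖ + ‖c‖ * (J x ^ k * ‖b x‖) := by ring
    _ ≤ _ := by gcongr; exacts [hC x, hD x]

lemma SPK.RD2 {A : ℝ → ℝ → ℂ} (hA : SPK A) : RD2 (fun x => c2 A x.1 x.2) := by
  intro k
  obtain ⟨C00, h00⟩ := c2_dec hA 0 0
  obtain ⟨C10, h10⟩ := c2_dec hA k 0
  obtain ⟨C01, h01⟩ := c2_dec hA 0 k
  obtain ⟨C11, h11⟩ := c2_dec hA k k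
  refine ⟨2 ^ k * 2 ^ k * (C00 + C10 + C01 + C11), fun x => ?_⟩
  have hp := one_add_pow_le (abs_nonneg (x.1 : ℝ)) k
  have hq := one_add_pow_le (abs_nonneg (x.2 : ℝ)) k
  have e00 := h00 x.1 x.2
  have e10 := h10 x.1 x.2
  have e01 := h01 x.1 x.2
  have e11 := h11 x.1 x.2
  calc J x ^ k * ‖c2 A x.1 x.2‖
      = (1 + |(x.1 : ℝ)|) ^ k * (1 + |(x.2 : ℝ)|) ^ k * ‖c2 A x.1 x.2‖ := by
        unfold J jb; rw [mul_pow]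
    _ ≤ (2 ^ k * (1 + |(x.1 : ℝ)| ^ k)) * (2 ^ k * (1 + |(x.2 : ℝ)| ^ k)) * ‖c2 A x.1 x.2‖ := by
        gcongr
    _ = 2 ^ k * 2 ^ k * (|(x.1 : ℝ)| ^ 0 * |(x.2 : ℝ)| ^ 0 * ‖c2 A x.1 x.2‖
        + |(x.1 : ℝ)| ^ k * |(x.2 : ℝ)| ^ 0 * ‖c2 A x.1 x.2‖
        + |(x.1 : ℝ)| ^ 0 * |(x.2 : ℝ)| ^ k * ‖c2 A x.1 x.2‖
        + |(x.1 : ℝ)| ^ k * |(x.2 : ℝ)| ^ k * ‖c2 A x.1 x.2‖) := by ring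
    _ ≤ _ := by gcongr

lemma SPK.hasSum {A : ℝ → ℝ → ℂ} (hA : SPK A) (s t : ℝ) :
    HasSum (fun x : ℤ × ℤ => c2 A x.1 x.2 * (ee x.1 s * ee x.2 t)) (A s t) := by
  have hsm : Summable (fun x : ℤ × ℤ => c2 A x.1 x.2 * (ee x.1 s * ee x.2 t)) :=
    Summable.of_norm (by simpa only [norm_mul, norm_ee, mul_one] using hA.RD2.summable_norm)
  have h1 : ∀ p, HasSum (fun q => c2 A p q * (ee p s * ee q t)) (fc (fun s => A s t) p * ee p s) := by
    intro p
    have hs : Summable (fun q => ‖c2 A p q‖) := hA.RD2.summable_norm.prod_factor p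
    have := (hasSum_fc (hA.continuous_fc p) (fun t => by simp only [hA.2.2]) hs t).mul_right (ee p s)
    have e : (fun q => c2 A p q * (ee p s * ee q t))
        = fun q => c2 A p q * ee q t * ee p s := by funext q; ring
    rw [e]; exact this
  have h2 := hsm.hasSum.prod_fiberwise h1
  have h3 := hasSum_fc (hA.left t).continuous (fun x => hA.2.1 x t)
    (RD1_fc (hA.left t) (fun x => hA.2.1 x t)).summable_norm s
  have h4 := h3.unique h2
  rw [show A s t = _ from h4]
  exact hsm.hasSum

/-! ### The periodic logarithm -/

/-- The periodic logarithm `log(4 sin²(πx))`. -/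
noncomputable def Lg (x : ℝ) : ℝ := Real.log (4 * Real.sin (Real.pi * x) ^ 2)

/-- Fourier coefficients `-1/|k|` of `Lg`, with value `0` at `k = 0`. -/
noncomputable def Lh (k : ℤ) : ℝ := -(|(k : ℝ)|)⁻¹

/-- The Abel regularization `log |1 - r e^{2πix}|²` of `Lg`. -/
noncomputable def Lr (r x : ℝ) : ℝ := Real.log (‖1 - (r : ℂ) * ee 1 x‖ ^ 2)

/-- Fourier coefficients of `Lr r`. -/
noncomputable def lrc (r : ℝ) (n : ℤ) : ℝ := -(r ^ n.natAbs / n.natAbs)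

lemma norm_one_sub_ee (x : ℝ) : ‖1 - ee 1 x‖ ^ 2 = 4 * Real.sin (Real.pi * x) ^ 2 := by
  have h := Complex.norm_exp_I_mul_ofReal_sub_one (2 * Real.pi * x)
  have e : ee 1 x = cexp (I * ((2 * Real.pi * x : ℝ) : ℂ)) := by
    unfold ee; push_cast; ring_nf
  rw [norm_sub_rev, e, h, Real.norm_eq_abs, sq_abs]
  rw [show 2 * Real.pi * x / 2 = Real.pi * x by ring]; ring

lemma Lr_one (x : ℝ) : Lr 1 x = Lg x := by
  unfold Lr Lg; rw [← norm_one_sub_ee]; simp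

lemma ee_pow (x : ℝ) (n : ℕ) : ee 1 x ^ n = ee n x := by
  unfold ee; rw [← Complex.exp_nat_mul]; push_cast; ring_nf

lemma conj_ee (n : ℤ) (x : ℝ) : (starRingEnd ℂ) (ee n x) = ee (-n) x := by
  unfold ee; rw [← Complex.exp_conj]; congr 1; simp
  exact Or.inl (Or.inl (map_ofNat _ 2))

/-- The power series of `-log(1 - z)` at `z = r e^{2πix}`, combined with its conjugate. -/
lemma hasSum_Lr {r : ℝ} (h0 : 0 ≤ r) (h1 : r < 1) (x : ℝ) :
    HasSum (fun n : ℤ => (lrc r n : ℂ) * ee n x) (Lr r x : ℂ) := by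
  obtain ⟨z, hz⟩ : ∃ z : ℂ, z = (r : ℂ) * ee 1 x := ⟨_, rfl⟩
  have hzn : ‖z‖ < 1 := by
    rw [hz, norm_mul, norm_ee, mul_one, Complex.norm_real, Real.norm_of_nonneg h0]; exact h1
  have e1 : HasSum (fun n : ℕ => z ^ n / (n : ℂ)) (-log (1 - z)) :=
    Complex.hasSum_taylorSeries_neg_log hzn
  have e2 : HasSum (fun n : ℕ => (starRingEnd ℂ) (z ^ n / (n : ℂ))) ((starRingEnd ℂ) (-log (1 - z))) :=
    Complex.hasSum_conj'.2 (by simpa using e1)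
  have f1 : ∀ n : ℕ, z ^ n / (n : ℂ) = -((lrc r (n : ℤ) : ℂ) * ee (n : ℤ) x) := by
    intro n; rw [hz, mul_pow, ee_pow]; unfold lrc; push_cast; simp; ring
  have f2 : ∀ n : ℕ, (starRingEnd ℂ) (z ^ n / (n : ℂ))
      = -((lrc r (-(n : ℤ)) : ℂ) * ee (-(n : ℤ)) x) := by
    intro n
    rw [f1, map_neg, map_mul, conj_ee, Complex.conj_ofReal]
    unfold lrc; simp
  simp only [f1] at e1
  simp only [f2] at e2
  have e1' := e1.neg
  have e2' := e2.neg
  simp only [neg_neg] at e1' e2'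
  have := HasSum.of_nat_of_neg (f := fun n : ℤ => (lrc r n : ℂ) * ee n x) e1' e2'
  have hv : log (1 - z) + -(starRingEnd ℂ) (-log (1 - z)) - (lrc r 0 : ℂ) * ee 0 x = (Lr r x : ℂ) := by
    rw [map_neg, neg_neg, Complex.add_conj, Complex.log_re]
    unfold Lr lrc
    rw [Real.log_pow, hz]; simp
  rw [hv] at this
  exact this

lemma abs_lrc_le {r : ℝ} (h0 : 0 ≤ r) (n : ℤ) : |lrc r n| ≤ r ^ n.natAbs := by
  unfold lrc
  rw [abs_neg, abs_of_nonneg (by positivity)]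
  rcases Nat.eq_zero_or_pos n.natAbs with h | h
  · simp [h]
  · exact div_le_self (by positivity) (by exact_mod_cast h)

lemma summable_lrc {r : ℝ} (h0 : 0 ≤ r) (h1 : r < 1) : Summable (fun n => ‖(lrc r n : ℂ)‖) := by
  have g := summable_geometric_of_lt_one h0 h1
  have : Summable (fun n : ℤ => r ^ n.natAbs) := by
    refine Summable.of_nat_of_neg ?_ ?_ <;> simpa using g
  refine Summable.of_nonneg_of_le (fun _ => norm_nonneg _) (fun n => ?_) this
  rw [Complex.norm_real]; exact abs_lrc_le h0 n

lemma fc_Lr {r : ℝ} (h0 : 0 ≤ r) (h1 : r < 1) (k : ℤ) :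
    fc (fun x => (Lr r x : ℂ)) k = lrc r k := by
  have : (fun x => (Lr r x : ℂ)) = ser (fun n => (lrc r n : ℂ)) :=
    funext fun x => (hasSum_Lr h0 h1 x).tsum_eq.symm
  rw [this, fc_ser (summable_lrc h0 h1)]

lemma tendsto_lrc (k : ℤ) : Tendsto (fun r => (lrc r k : ℂ)) (𝓝[<] 1) (𝓝 (Lh k : ℂ)) := by
  have h : Continuous (fun r => lrc r k) := by unfold lrc; fun_prop
  have h2 : lrc 1 k = Lh k := by
    unfold lrc Lh; rw [one_pow, one_div, Nat.cast_natAbs]; simp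
  rw [← h2]
  exact ((Complex.continuous_ofReal.comp h).tendsto 1).mono_left nhdsWithin_le_nhds

lemma ev_Ico : ∀ᶠ r : ℝ in 𝓝[<] 1, 0 ≤ r ∧ r < 1 := by
  filter_upwards [Ioo_mem_nhdsLT (show (0:ℝ) < 1 by norm_num)] with r hr using ⟨hr.1.le, hr.2⟩

lemma tendsto_Lr {x : ℝ} (hx : Real.sin (Real.pi * x) ≠ 0) :
    Tendsto (fun r => (Lr r x : ℂ)) (𝓝[<] 1) (𝓝 (Lg x : ℂ)) := by
  have h : ContinuousAt (fun r => Lr r x) 1 := by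
    unfold Lr
    refine ContinuousAt.log (by fun_prop) ?_
    have := norm_one_sub_ee x
    simp only [ofReal_one, one_mul]
    rw [this]; positivity
  have := (Complex.continuous_ofReal.continuousAt.comp h).tendsto
  simp only [Function.comp_apply, Lr_one] at this
  exact this.mono_left nhdsWithin_le_nhds

lemma continuous_Lr {r : ℝ} (h0 : 0 ≤ r) (h1 : r < 1) : Continuous (Lr r) := by
  unfold Lr
  refine Continuous.log (by fun_prop) fun x => ?_
  have : 1 - (r : ℂ) * ee 1 x ≠ 0 := by
    intro h
    have h2 : ‖(r : ℂ) * ee 1 x‖ = 1 := by rw [← sub_eq_zero.1 h]; simp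
    rw [norm_mul, norm_ee, mul_one, Complex.norm_real, Real.norm_of_nonneg h0] at h2
    linarith
  have := norm_pos_iff.2 this
  positivity

lemma abs_Lr_le {r : ℝ} (h0 : 0 ≤ r) (h1 : r < 1) {x : ℝ} (hx : Real.sin (Real.pi * x) ≠ 0) :
    |Lr r x| ≤ |Lg x| + Real.log 4 := by
  have hz : ‖(r : ℂ) * ee 1 x‖ = r := by
    rw [norm_mul, norm_ee, mul_one, Complex.norm_real, Real.norm_of_nonneg h0]
  have a1 : ‖1 - (r : ℂ) * ee 1 x‖ ≤ 2 := by
    have := norm_sub_le 1 ((r : ℂ) * ee 1 x)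
    rw [hz, norm_one] at this; linarith
  have a2 : 1 - r ≤ ‖1 - (r : ℂ) * ee 1 x‖ := by
    have := norm_sub_norm_le 1 ((r : ℂ) * ee 1 x)
    rw [hz, norm_one] at this; linarith
  have a3 : ‖1 - ee 1 x‖ ≤ 2 * ‖1 - (r : ℂ) * ee 1 x‖ := by
    have e : 1 - ee 1 x = (1 - (r : ℂ) * ee 1 x) - ((1 - r : ℝ) : ℂ) * ee 1 x := by push_cast; ring
    have := norm_sub_le (1 - (r : ℂ) * ee 1 x) (((1 - r : ℝ) : ℂ) * ee 1 x)
    rw [← e, norm_mul, norm_ee, mul_one, Complex.norm_real, Real.norm_of_nonneg (by linarith)] at this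
    linarith
  have p1 : 0 < ‖1 - ee 1 x‖ ^ 2 := by rw [norm_one_sub_ee]; positivity
  have p2 : 0 < ‖1 - (r : ℂ) * ee 1 x‖ := by linarith
  have b1 : Lr r x ≤ Real.log 4 := by
    unfold Lr; refine Real.log_le_log (by positivity) (by nlinarith)
  have b2 : Lg x ≤ Real.log 4 + Lr r x := by
    unfold Lr Lg
    rw [← norm_one_sub_ee, ← Real.log_mul (by norm_num) (by positivity)]
    refine Real.log_le_log p1 ?_
    have := pow_le_pow_left₀ (norm_nonneg _) a3 2
    linarith
  have b3 : 0 ≤ Real.log 4 := Real.log_nonneg (by norm_num)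
  rw [abs_le]
  constructor
  · linarith [neg_abs_le (Lg x)]
  · linarith [abs_nonneg (Lg x)]

lemma abs_Lg_le (x : ℝ) : |Lg x| ≤ 2 * |Real.log (Real.sin (Real.pi * x))| + Real.log 4 := by
  have b3 : 0 ≤ Real.log 4 := Real.log_nonneg (by norm_num)
  unfold Lg
  by_cases h : Real.sin (Real.pi * x) = 0
  · simp [h]; exact b3
  · rw [Real.log_mul (by norm_num) (by positivity), Real.log_pow]
    refine (abs_add_le _ _).trans ?_
    rw [abs_mul, abs_of_nonneg b3]; push_cast; simp; linarith

lemma measurable_Lg : Measurable Lg := by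
  unfold Lg; fun_prop

lemma intervalIntegrable_log_sin_pi (a b : ℝ) :
    IntervalIntegrable (fun x => Real.log (Real.sin (Real.pi * x))) volume a b := by
  have := (intervalIntegrable_log_sin (a := a * Real.pi) (b := b * Real.pi)).comp_mul_left (c := Real.pi)
  simpa [Function.comp_def, Real.pi_ne_zero] using this

lemma intervalIntegrable_Lg (a b : ℝ) : IntervalIntegrable Lg volume a b := by
  refine IntervalIntegrable.mono_fun (f := fun x => 2 * |Real.log (Real.sin (Real.pi * x))| + Real.log 4) ?_
    measurable_Lg.aestronglyMeasurable ?_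
  · exact ((intervalIntegrable_log_sin_pi a b).abs.const_mul 2).add intervalIntegrable_const
  · refine Eventually.of_forall fun x => ?_
    simp only [Real.norm_eq_abs]
    exact (abs_Lg_le x).trans (le_abs_self _)

lemma ae_sin_ne : ∀ᵐ x : ℝ, x ∈ Set.uIoc (0:ℝ) 1 → Real.sin (Real.pi * x) ≠ 0 := by
  have : ∀ᵐ x : ℝ, x ≠ 1 := by simp [ae_iff, measure_singleton]
  filter_upwards [this] with x hx hm
  rw [Set.uIoc_of_le zero_le_one] at hm
  have : 0 < Real.sin (Real.pi * x) := by
    apply Real.sin_pos_of_pos_of_lt_pi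
    · have := hm.1; positivity
    · have := lt_of_le_of_ne hm.2 hx
      nlinarith [Real.pi_pos]
  exact this.ne.symm

/-- The Fourier coefficients of the periodic logarithm. -/
lemma fc_Lg (k : ℤ) : fc (fun x => (Lg x : ℂ)) k = Lh k := by
  have h1 : Tendsto (fun r => fc (fun x => (Lr r x : ℂ)) k) (𝓝[<] 1) (𝓝 (fc (fun x => (Lg x : ℂ)) k)) := by
    simp only [fc_eq]
    refine intervalIntegral.tendsto_integral_filter_of_dominated_convergence
      (fun x => |Lg x| + Real.log 4) ?_ ?_ ?_ ?_
    · filter_upwards [ev_Ico] with r hr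
      have := continuous_Lr hr.1 hr.2
      exact (by fun_prop : Continuous (fun x => (Lr r x : ℂ) * ee (-k) x)).aestronglyMeasurable
    · filter_upwards [ev_Ico] with r hr
      filter_upwards [ae_sin_ne] with x hx hm
      rw [norm_mul, norm_ee, mul_one, Complex.norm_real]
      exact abs_Lr_le hr.1 hr.2 (hx hm)
    · exact (intervalIntegrable_Lg 0 1).abs.add intervalIntegrable_const
    · filter_upwards [ae_sin_ne] with x hx hm
      exact (tendsto_Lr (hx hm)).mul_const _
  refine tendsto_nhds_unique h1 ((tendsto_lrc k).congr' ?_)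
  filter_upwards [ev_Ico] with r hr using (fc_Lr hr.1 hr.2 k).symm

lemma Lg_periodic : Function.Periodic Lg 1 := by
  intro x; unfold Lg
  rw [show Real.pi * (x + 1) = Real.pi * x + Real.pi by ring, Real.sin_add_pi, neg_sq]

lemma Lg_neg (x : ℝ) : Lg (-x) = Lg x := by
  unfold Lg; rw [mul_neg, Real.sin_neg, neg_sq]

/-- The convolution with the periodic logarithm acts on characters by `Lh`. -/
lemma integral_Lg_ee (k : ℤ) (s : ℝ) :
    ∫ t in (0:ℝ)..1, (Lg (s - t) : ℂ) * ee k t = Lh k * ee k s := by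
  have h := intervalIntegral.integral_comp_sub_left (a := 0) (b := 1)
    (fun u => (Lg u : ℂ) * ee (-k) u * ee k s) s
  have e : ∀ t, (Lg (s - t) : ℂ) * ee (-k) (s - t) * ee k s = (Lg (s - t) : ℂ) * ee k t := by
    intro t
    rw [sub_eq_add_neg, ee_add_right, ee_neg_right, neg_neg]
    calc _ = (Lg (s + -t) : ℂ) * ee k t * (ee (-k) s * ee k s) := by ring
      _ = _ := by rw [ee_neg_left, mul_one]
  simp only [e] at h
  rw [h, intervalIntegral.integral_mul_const, ← fc_Lg, fc_eq]
  have hp : Function.Periodic (fun u => (Lg u : ℂ) * ee (-k) u) 1 := fun u => by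
    simp only [Lg_periodic u, ee_add_one]
  have := hp.intervalIntegral_add_eq (s - 1) 0
  simp only [sub_add_cancel, zero_add] at this
  simp only [sub_zero, this]

lemma integrable_Lg_sub (s : ℝ) :
    IntervalIntegrable (fun t => |Lg (s - t)|) volume 0 1 := by
  have := ((intervalIntegrable_Lg s (s - 1)).comp_sub_left s).abs
  simpa using this

/-! ### Averages over shifted grids -/

/-- The average of `u` over the shifted grid `t_{j+ε}`, `0 ≤ j < N`. -/
noncomputable def av (N : ℕ) (ε : ℝ) (u : ℝ → ℂ) : ℂ :=
  (1 / (N : ℂ)) * ∑ j ∈ Finset.range N, u (tg (1 / (N : ℝ)) ε (j : ℤ))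

lemma av_congr {N : ℕ} {ε : ℝ} {u v : ℝ → ℂ}
    (h : ∀ j : ℤ, u (tg (1 / (N : ℝ)) ε j) = v (tg (1 / (N : ℝ)) ε j)) : av N ε u = av N ε v := by
  unfold av; congr 1; exact Finset.sum_congr rfl fun j _ => h j

lemma av_mul_const (N : ℕ) (ε : ℝ) (u : ℝ → ℂ) (c : ℂ) :
    av N ε (fun t => u t * c) = av N ε u * c := by
  unfold av; rw [← Finset.sum_mul, mul_assoc]

lemma av_add (N : ℕ) (ε : ℝ) (u v : ℝ → ℂ) :
    av N ε (fun t => u t + v t) = av N ε u + av N ε v := by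
  unfold av; rw [Finset.sum_add_distrib, mul_add]

lemma av_const_mul (N : ℕ) (ε : ℝ) (u : ℝ → ℂ) (c : ℂ) :
    av N ε (fun t => c * u t) = c * av N ε u := by
  simp only [mul_comm c, av_mul_const]

lemma av_hasSum {ι : Type*} {N : ℕ} {ε : ℝ} {f : ι → ℝ → ℂ} {u : ℝ → ℂ}
    (h : ∀ j : ℤ, HasSum (fun i => f i (tg (1 / (N : ℝ)) ε j)) (u (tg (1 / (N : ℝ)) ε j))) :
    HasSum (fun i => av N ε (f i)) (av N ε u) := by
  unfold av
  exact (hasSum_sum (s := Finset.range N) fun j _ => h (j : ℤ)).mul_left _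

lemma norm_av_le {N : ℕ} {ε : ℝ} {u : ℝ → ℂ} {C : ℝ} (hN : 0 < N)
    (h : ∀ j : ℤ, ‖u (tg (1 / (N : ℝ)) ε j)‖ ≤ C) : ‖av N ε u‖ ≤ C := by
  unfold av
  have hN' : (0:ℝ) < N := by exact_mod_cast hN
  rw [norm_mul]
  have h1 : ‖(1 / (N : ℂ))‖ = 1 / (N : ℝ) := by simp
  have h2 : ‖∑ j ∈ Finset.range N, u (tg (1 / (N : ℝ)) ε (j : ℤ))‖ ≤ N * C := by
    refine (norm_sum_le _ _).trans ((Finset.sum_le_sum (s := Finset.range N) fun j _ => h (j : ℤ)).trans ?_)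
    simp
  rw [h1]
  calc 1 / (N : ℝ) * _ ≤ 1 / (N : ℝ) * (N * C) := by gcongr
    _ = C := by field_simp

lemma tendsto_av {N : ℕ} {ε : ℝ} {u : ℝ → ℂ} {l : Filter ℝ} {F : ℝ → ℝ → ℂ}
    (h : ∀ j : ℤ, Tendsto (fun r => F r (tg (1 / (N : ℝ)) ε j)) l (𝓝 (u (tg (1 / (N : ℝ)) ε j)))) :
    Tendsto (fun r => av N ε (F r)) l (𝓝 (av N ε u)) := by
  unfold av
  exact (tendsto_finsetSum (Finset.range N) fun j _ => h (j : ℤ)).const_mul _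

lemma sum_range_shift {N : ℕ} {f : ℤ → ℂ} (hf : ∀ j, f (j + N) = f j) (c : ℤ) :
    ∑ j ∈ Finset.range N, f ((j : ℤ) + c) = ∑ j ∈ Finset.range N, f j := by
  have key : ∀ c : ℤ, ∑ j ∈ Finset.range N, f ((j : ℤ) + (c + 1)) = ∑ j ∈ Finset.range N, f ((j : ℤ) + c) := by
    intro c
    have h1 := Finset.sum_range_succ (fun j : ℕ => f ((j : ℤ) + c)) N
    have h2 := Finset.sum_range_succ' (fun j : ℕ => f ((j : ℤ) + c)) N
    rw [h1] at h2
    have h3 : f ((N : ℤ) + c) = f c := by rw [add_comm, hf]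
    simp only [Nat.cast_zero, zero_add, h3, add_left_inj] at h2
    rw [h2]
    refine Finset.sum_congr rfl fun j _ => ?_
    congr 1; push_cast; ring
  induction c using Int.induction_on with
  | zero => simp
  | succ i ih => rw [key, ih]
  | pred i ih => rw [← ih, ← key]; simp

lemma tg_add (N : ℕ) (ε : ℝ) (j : ℤ) (hN : 0 < N) :
    tg (1 / (N : ℝ)) ε (j + N) = tg (1 / (N : ℝ)) ε j + 1 := by
  have hN' : (N : ℝ) ≠ 0 := by exact_mod_cast hN.ne'
  unfold tg; push_cast; field_simp; ring

lemma ee_tg (N : ℕ) (ε : ℝ) (k : ℤ) (j : ℕ) :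
    ee k (tg (1 / (N : ℝ)) ε (j : ℤ)) = ee k (1 / (N : ℝ)) ^ j * ee k (ε / N) := by
  have : tg (1 / (N : ℝ)) ε (j : ℤ) = ((j : ℤ) : ℝ) * (1 / (N : ℝ)) + ε / N := by
    unfold tg; ring
  rw [this, ee_add_right, ee_mul_int]
  congr 1
  unfold ee; rw [← Complex.exp_nat_mul]; push_cast; ring_nf

lemma ee_mul_N {N : ℕ} (hN : 0 < N) (l : ℤ) (ε : ℝ) (j : ℤ) :
    ee (l * N) (tg (1 / (N : ℝ)) ε j) = ee l ε := by
  have hN' : (N : ℝ) ≠ 0 := by exact_mod_cast hN.ne'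
  have : ee (l * (N : ℤ)) (tg (1 / (N : ℝ)) ε j) = ee l (((N : ℤ) : ℝ) * (tg (1 / (N : ℝ)) ε j)) := by
    rw [ee_mul_int]
  rw [this]
  have h2 : ((N : ℤ) : ℝ) * (tg (1 / (N : ℝ)) ε j) = (j : ℝ) + ε := by
    unfold tg; push_cast; field_simp
  rw [h2, ee_add_right, ee_int, one_mul]

lemma av_one {N : ℕ} (hN : 0 < N) (ε : ℝ) (c : ℂ) : av N ε (fun _ => c) = c := by
  have hN' : (N : ℂ) ≠ 0 := by exact_mod_cast hN.ne'
  unfold av; simp; field_simp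

lemma av_ee_mul {N : ℕ} (hN : 0 < N) (ε : ℝ) (l : ℤ) : av N ε (ee (l * N)) = ee l ε := by
  rw [av_congr (v := fun _ => ee l ε) (fun j => ee_mul_N hN l ε j), av_one hN]

lemma av_ee_not {N : ℕ} (hN : 0 < N) (ε : ℝ) {k : ℤ} (hk : ¬ (N : ℤ) ∣ k) : av N ε (ee k) = 0 := by
  have hN' : (N : ℂ) ≠ 0 := by exact_mod_cast hN.ne'
  have hz : ee k (1 / (N : ℝ)) ≠ 1 := by
    intro h
    unfold ee at h
    rw [Complex.exp_eq_one_iff] at h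
    obtain ⟨n, hn⟩ := h
    apply hk
    refine ⟨n, ?_⟩
    have h2 : (2 * Real.pi * Complex.I : ℂ) * (k / N) = 2 * Real.pi * Complex.I * n := by
      push_cast at hn
      rw [mul_comm _ (n : ℂ), ← hn]; field_simp
    have h3 := mul_left_cancel₀ two_pi_I_ne h2
    rw [div_eq_iff hN'] at h3
    have : (k : ℂ) = ((N * n : ℤ) : ℂ) := by push_cast; rw [h3]; ring
    exact_mod_cast this
  have hzN : ee k (1 / (N : ℝ)) ^ N = 1 := by
    have h := ee_tg N 0 k N
    simp only [zero_div, ee_zero_right, mul_one] at h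
    rw [← h]
    have : tg (1 / (N : ℝ)) 0 ((N : ℕ) : ℤ) = ((1 : ℤ) : ℝ) := by
      have hN' : (N : ℝ) ≠ 0 := by exact_mod_cast hN.ne'
      unfold tg; push_cast; field_simp; ring
    rw [this, ee_int]
  unfold av
  simp only [ee_tg]
  rw [← Finset.sum_mul, geom_sum_eq hz, hzN]; simp

/-- Discrete Fourier coefficients of the periodic logarithm on the shifted grid. -/
noncomputable def gN (N : ℕ) (ε : ℝ) (k : ℤ) : ℂ := av N ε (fun t => (Lg t : ℂ) * ee (-k) t)

/-- Discrete Fourier coefficients of the constant `1` on the shifted grid. -/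
noncomputable def kN (N : ℕ) (ε : ℝ) (k : ℤ) : ℂ := av N ε (ee (-k))

lemma gN_shift {N : ℕ} (hN : 0 < N) (ε : ℝ) (k l : ℤ) :
    gN N ε (k + l * N) = ee (-l) ε * gN N ε k := by
  unfold gN
  rw [← av_const_mul]
  refine av_congr fun j => ?_
  rw [show -(k + l * (N : ℤ)) = -k + (-l) * N by ring, ee_add_left, ee_mul_N hN]; ring

lemma kN_shift {N : ℕ} (hN : 0 < N) (ε : ℝ) (k l : ℤ) :
    kN N ε (k + l * N) = ee (-l) ε * kN N ε k := by
  unfold kN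
  rw [← av_const_mul]
  refine av_congr fun j => ?_
  rw [show -(k + l * (N : ℤ)) = -k + (-l) * N by ring, ee_add_left, ee_mul_N hN]; ring

lemma norm_kN_le {N : ℕ} (hN : 0 < N) (ε : ℝ) (k : ℤ) : ‖kN N ε k‖ ≤ 1 :=
  norm_av_le hN fun j => by rw [norm_ee]

lemma kN_not {N : ℕ} (hN : 0 < N) (ε : ℝ) {k : ℤ} (hk : ¬ (N : ℤ) ∣ k) : kN N ε k = 0 :=
  av_ee_not hN ε (by rwa [Int.dvd_neg])

lemma kN_zero {N : ℕ} (hN : 0 < N) (ε : ℝ) : kN N ε 0 = 1 := by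
  unfold kN
  have := av_ee_mul hN ε 0
  simpa using this

/-- Aliasing formula for the discrete Fourier coefficients of the regularized logarithm. -/
lemma hasSum_av_Lr {N : ℕ} (hN : 0 < N) (ε : ℝ) (k : ℤ) {r : ℝ} (h0 : 0 ≤ r) (h1 : r < 1) :
    HasSum (fun l : ℤ => (lrc r (k + l * N) : ℂ) * ee l ε)
      (av N ε (fun t => (Lr r t : ℂ) * ee (-k) t)) := by
  have h : HasSum (fun n : ℤ => av N ε (fun t => (lrc r n : ℂ) * ee (n - k) t))
      (av N ε (fun t => (Lr r t : ℂ) * ee (-k) t)) := by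
    refine av_hasSum fun j => ?_
    have := (hasSum_Lr h0 h1 (tg (1 / (N : ℝ)) ε j)).mul_right (ee (-k) (tg (1 / (N : ℝ)) ε j))
    simp only [mul_assoc, ← ee_add_left] at this
    exact this
  have hinj : Function.Injective (fun l : ℤ => k + l * (N : ℤ)) := by
    intro a b hab
    have hN' : (N : ℤ) ≠ 0 := by exact_mod_cast hN.ne'
    exact mul_right_cancel₀ hN' (add_left_cancel hab)
  have h2 := (hinj.hasSum_iff (f := fun n : ℤ => av N ε (fun t => (lrc r n : ℂ) * ee (n - k) t)) ?_).2 h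
  · refine h2.congr_fun fun l => ?_
    simp only [Function.comp]
    rw [av_const_mul, show k + l * (N : ℤ) - k = l * N by ring, av_ee_mul hN]
  · intro n hn
    rw [av_const_mul, av_ee_not hN, mul_zero]
    rintro ⟨c, hc⟩
    exact hn ⟨c, by simp only; linarith [mul_comm (N : ℤ) c]⟩

/-! ### The aliasing lattice sum -/

lemma abel_pow_le {r : ℝ} (h0 : 0 ≤ r) (h1 : r ≤ 1) (a : ℕ) : r ^ a * (1 - r) * (a + 1) ≤ 1 := by
  have h := mul_neg_geom_sum r (a + 1)
  have h2 : ((a : ℝ) + 1) * r ^ a ≤ ∑ i ∈ Finset.range (a + 1), r ^ i := by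
    have : ∑ i ∈ Finset.range (a + 1), r ^ a ≤ ∑ i ∈ Finset.range (a + 1), r ^ i :=
      Finset.sum_le_sum fun i hi => pow_le_pow_of_le_one h0 h1 (by
        have := Finset.mem_range.1 hi; omega)
    simpa using this
  have h3 : (0:ℝ) ≤ r ^ (a + 1) := by positivity
  nlinarith [mul_le_mul_of_nonneg_left h2 (sub_nonneg.2 h1)]

lemma abel_diff_aux {r : ℝ} (h0 : 0 ≤ r) (h1 : r ≤ 1) {a b : ℕ} (ha : 0 < a) (hab : a ≤ b) :
    |r ^ a / a - r ^ b / b| ≤ 2 * |(b : ℝ) - a| / (a * b) := by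
  obtain ⟨d, rfl⟩ := Nat.exists_eq_add_of_le hab
  have ha' : (0:ℝ) < a := by exact_mod_cast ha
  have hd : (0:ℝ) ≤ d := by positivity
  have hp : r ^ a ≤ 1 := pow_le_one₀ h0 h1
  have hp0 : 0 ≤ r ^ a := by positivity
  have hd1 : 1 - r ^ d ≤ d * (1 - r) := by
    have := one_add_mul_le_pow (a := r - 1) (by linarith) d
    simp only [add_sub_cancel] at this; linarith
  have hd0 : r ^ d ≤ 1 := pow_le_one₀ h0 h1
  have hk := abel_pow_le h0 h1 a
  have key : r ^ a * (1 - r ^ d) * a ≤ d := by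
    have s1 : r ^ a * (1 - r ^ d) * a ≤ r ^ a * (d * (1 - r)) * a := by gcongr
    have s2 : r ^ a * (1 - r) * a ≤ 1 := by
      have : 0 ≤ r ^ a * (1 - r) := mul_nonneg hp0 (by linarith)
      linarith
    nlinarith [mul_le_mul_of_nonneg_left s2 hd]
  have key0 : 0 ≤ r ^ a * (1 - r ^ d) * a := by
    have : 0 ≤ 1 - r ^ d := by linarith
    positivity
  have e : r ^ a / a - r ^ (a + d) / ((a + d : ℕ) : ℝ)
      = (r ^ a * d + r ^ a * (1 - r ^ d) * a) / (a * ((a + d : ℕ) : ℝ)) := by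
    push_cast; rw [pow_add]; field_simp; ring
  have hb : (0:ℝ) < ((a + d : ℕ) : ℝ) := by push_cast; linarith
  rw [e, abs_of_nonneg (by positivity)]
  have : |((a + d : ℕ) : ℝ) - a| = d := by push_cast; simp
  rw [this]
  gcongr
  nlinarith [mul_le_mul_of_nonneg_right hp hd]

/-- The Abel factors `r^a / a` vary with `a` like `1 / a`, uniformly in `r ≤ 1`. This dominates the
aliasing sums as `r → 1`. -/
lemma abel_diff {r : ℝ} (h0 : 0 ≤ r) (h1 : r ≤ 1) {a b : ℕ} (ha : 0 < a) (hb : 0 < b) :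
    |r ^ a / a - r ^ b / b| ≤ 2 * |(b : ℝ) - a| / (a * b) := by
  rcases le_total a b with h | h
  · exact abel_diff_aux h0 h1 ha h
  · rw [abs_sub_comm, abs_sub_comm (b : ℝ), mul_comm (a : ℝ)]
    exact abel_diff_aux h0 h1 hb h

/-- The summands of the lattice sum `S(x) = Σ_l ω^l (1/|l+x| - 1/|l|)`. -/
noncomputable def sT (x : ℝ) (l : ℤ) : ℝ := |(l : ℝ) + x|⁻¹ - |(l : ℝ)|⁻¹

lemma sep {x : ℝ} (hx : |x| ≤ 3 / 4) {l : ℤ} (hl : l ≠ 0) : |(l : ℝ)| / 4 ≤ |(l : ℝ) + x| := by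
  have h1 : (1:ℝ) ≤ |(l : ℝ)| := by exact_mod_cast Int.one_le_abs hl
  have h2 := abs_sub_abs_le_abs_sub (l : ℝ) (-x)
  rw [abs_neg, sub_neg_eq_add] at h2
  linarith

lemma sT_lip {x y : ℝ} (hx : |x| ≤ 3 / 4) (hy : |y| ≤ 3 / 4) {l : ℤ} (hl : l ≠ 0) :
    |sT x l - sT y l| ≤ 16 * |x - y| * ((l : ℝ) ^ 2)⁻¹ := by
  have h1 : (1:ℝ) ≤ |(l : ℝ)| := by exact_mod_cast Int.one_le_abs hl
  have sx := sep hx hl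
  have sy := sep hy hl
  have px : 0 < |(l : ℝ) + x| := by linarith
  have py : 0 < |(l : ℝ) + y| := by linarith
  unfold sT
  have e : |(l : ℝ) + x|⁻¹ - |(l : ℝ)|⁻¹ - (|(l : ℝ) + y|⁻¹ - |(l : ℝ)|⁻¹)
      = (|(l : ℝ) + y| - |(l : ℝ) + x|) / (|(l : ℝ) + x| * |(l : ℝ) + y|) := by
    field_simp; ring
  rw [e, abs_div, abs_of_pos (mul_pos px py)]
  have hn : abs (|(l : ℝ) + y| - |(l : ℝ) + x|) ≤ |x - y| := by
    refine (abs_abs_sub_abs_le_abs_sub _ _).trans ?_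
    rw [add_sub_add_left_eq_sub, abs_sub_comm]
  have hd : (l : ℝ) ^ 2 / 16 ≤ |(l : ℝ) + x| * |(l : ℝ) + y| := by
    rw [← sq_abs]
    nlinarith [mul_le_mul sx sy (by positivity) px.le]
  have hl2 : 0 < (l : ℝ) ^ 2 := by rw [← sq_abs]; positivity
  calc _ ≤ |x - y| / ((l : ℝ) ^ 2 / 16) := by gcongr
    _ = _ := by field_simp

lemma sT_zero (l : ℤ) : sT 0 l = 0 := by simp [sT]

lemma summable_inv_sq : Summable (fun l : ℤ => ((l : ℝ) ^ 2)⁻¹) := by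
  simpa using (Real.summable_one_div_int_pow (p := 2)).2 (by norm_num)

/-- The lattice sum `S(x)` without its `l = 0` term. -/
noncomputable def Sx (ε x : ℝ) : ℂ := ∑' l : ℤ, if l = 0 then 0 else ee l ε * (sT x l : ℂ)

lemma norm_Sx_term {ε x : ℝ} (hx : |x| ≤ 3 / 4) (l : ℤ) :
    ‖(if l = 0 then 0 else ee l ε * (sT x l : ℂ))‖ ≤ 16 * |x| * ((l : ℝ) ^ 2)⁻¹ := by
  split_ifs with h
  · simp [h]
  · rw [norm_mul, norm_ee, one_mul, Complex.norm_real, Real.norm_eq_abs]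
    have := sT_lip hx (y := 0) (by norm_num) h
    simpa [sT_zero] using this

lemma summable_Sx {ε x : ℝ} (hx : |x| ≤ 3 / 4) :
    Summable (fun l : ℤ => if l = 0 then 0 else ee l ε * (sT x l : ℂ)) :=
  Summable.of_norm_bounded (summable_inv_sq.mul_left (16 * |x|)) (norm_Sx_term hx)

/-- The value `Σ_{l ≠ 0} 1/l²`; the term `l = 0` of the sum is `0⁻¹ = 0`. -/
noncomputable def Z2 : ℝ := ∑' l : ℤ, ((l : ℝ) ^ 2)⁻¹

lemma Z2_nonneg : 0 ≤ Z2 := tsum_nonneg fun l => by positivity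

lemma Sx_lip {ε x y : ℝ} (hx : |x| ≤ 3 / 4) (hy : |y| ≤ 3 / 4) :
    ‖Sx ε x - Sx ε y‖ ≤ 16 * Z2 * |x - y| := by
  unfold Sx
  rw [← (summable_Sx hx).tsum_sub (summable_Sx hy)]
  have hb : ∀ l : ℤ, ‖(if l = 0 then 0 else ee l ε * (sT x l : ℂ))
      - (if l = 0 then 0 else ee l ε * (sT y l : ℂ))‖ ≤ 16 * |x - y| * ((l : ℝ) ^ 2)⁻¹ := by
    intro l
    split_ifs with h
    · simp [h]
    · rw [← mul_sub, norm_mul, norm_ee, one_mul, ← Complex.ofReal_sub, Complex.norm_real]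
      exact sT_lip hx hy h
  have := tsum_of_norm_bounded (summable_inv_sq.mul_left (16 * |x - y|)).hasSum hb
  refine this.trans (le_of_eq ?_)
  rw [tsum_mul_left]; unfold Z2; ring

lemma Sx_zero (ε : ℝ) : Sx ε 0 = 0 := by simp [Sx, sT_zero]

lemma lrc_mul {N : ℕ} (r : ℝ) (l : ℤ) : lrc r (l * N) = (1 / (N : ℝ)) * lrc (r ^ N) l := by
  unfold lrc
  rw [Int.natAbs_mul, Int.natAbs_natCast, mul_comm, pow_mul]; push_cast
  ring

lemma Lg_eps {ε : ℝ} (hε : ε = 1 / 6 ∨ ε = -(1 / 6)) : Lg ε = 0 := by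
  have h : Lg (1 / 6) = 0 := by
    unfold Lg; rw [show Real.pi * (1 / 6) = Real.pi / 6 by ring, Real.sin_pi_div_six]; norm_num
  rcases hε with rfl | rfl
  · exact h
  · rw [Lg_neg]; exact h

lemma sin_eps {ε : ℝ} (hε : ε = 1 / 6 ∨ ε = -(1 / 6)) : Real.sin (Real.pi * ε) ≠ 0 := by
  rcases hε with rfl | rfl
  · rw [show Real.pi * (1 / 6) = Real.pi / 6 by ring, Real.sin_pi_div_six]; norm_num
  · rw [show Real.pi * (-(1 / 6)) = -(Real.pi / 6) by ring, Real.sin_neg, Real.sin_pi_div_six]; norm_num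

/-- On the shifted grids with `ε = ±1/6` no node meets the singularity of the logarithm. -/
lemma sin_grid {ε : ℝ} (hε : ε = 1 / 6 ∨ ε = -(1 / 6)) {N : ℕ} (hN : 0 < N) (j : ℤ) :
    Real.sin (Real.pi * tg (1 / (N : ℝ)) ε j) ≠ 0 := by
  intro h
  have hN' : (N : ℝ) ≠ 0 := by exact_mod_cast hN.ne'
  rw [Real.sin_eq_zero_iff] at h
  obtain ⟨n, hn⟩ := h
  rw [mul_comm] at hn
  have h1 := mul_left_cancel₀ Real.pi_ne_zero hn
  unfold tg at h1
  field_simp at h1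
  have h2 : ((n * N - j : ℤ) : ℝ) * 6 = ε * 6 := by push_cast; linarith
  rcases hε with rfl | rfl
  · norm_num at h2
    have : (n * N - j) * 6 = 1 := by exact_mod_cast h2
    omega
  · norm_num at h2
    have : (n * N - j) * 6 = -1 := by exact_mod_cast h2
    omega

/-- At frequency `0` the regularized grid average tends to `0`: it is `Lg ε / N` in the limit, and
`Lg ε = 0` for `ε = ±1/6`. -/
lemma tendsto_av_zero {ε : ℝ} (hε : ε = 1 / 6 ∨ ε = -(1 / 6)) {N : ℕ} (hN : 0 < N) :
    Tendsto (fun r => av N ε (fun t => (Lr r t : ℂ) * ee (-0) t)) (𝓝[<] 1) (𝓝 0) := by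
  have h1 : ∀ᶠ r : ℝ in 𝓝[<] 1, (1 / (N : ℂ)) * (Lr (r ^ N) ε : ℂ)
      = av N ε (fun t => (Lr r t : ℂ) * ee (-0) t) := by
    filter_upwards [ev_Ico] with r hr
    have a := hasSum_av_Lr hN ε 0 hr.1 hr.2
    have b := (hasSum_Lr (r := r ^ N) (pow_nonneg hr.1 _) (pow_lt_one₀ hr.1 hr.2 hN.ne') ε).mul_left
      (1 / (N : ℂ))
    refine b.unique (a.congr_fun fun l => ?_)
    rw [zero_add, lrc_mul]; push_cast; ring
  have h2 : Tendsto (fun r : ℝ => r ^ N) (𝓝[<] 1) (𝓝[<] 1) := by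
    refine tendsto_nhdsWithin_iff.2 ⟨?_, ?_⟩
    · have : Tendsto (fun r : ℝ => r ^ N) (𝓝 1) (𝓝 (1 ^ N)) := (continuous_pow N).tendsto 1
      rw [one_pow] at this
      exact this.mono_left nhdsWithin_le_nhds
    · filter_upwards [ev_Ico] with r hr using pow_lt_one₀ hr.1 hr.2 hN.ne'
  have h3 := ((tendsto_Lr (sin_eps hε)).comp h2).const_mul (1 / (N : ℂ))
  rw [Lg_eps hε, ofReal_zero, mul_zero] at h3
  exact h3.congr' h1

lemma abs_div_le {N : ℕ} (hN : 0 < N) {k : ℤ} (hk : |(k : ℝ)| ≤ 3 / 4 * N) : |(k : ℝ) / N| ≤ 3 / 4 := by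
  have hN' : (0:ℝ) < N := by exact_mod_cast hN
  rw [abs_div, abs_of_pos hN', div_le_iff₀ hN']; exact hk

/-- The aliasing formula for `gN` in the limit `r → 1`. The contribution of frequency `0`, subtracted in the
lattice sum, vanishes since
`4 sin²(πε) = 1`, which is the reason for the choice `ε = ±1/6`. -/
lemma gN_eq {ε : ℝ} (hε : ε = 1 / 6 ∨ ε = -(1 / 6)) {N : ℕ} (hN : 0 < N) {k : ℤ}
    (hk : |(k : ℝ)| ≤ 3 / 4 * N) :
    gN N ε k = Lh k - (1 / (N : ℂ)) * Sx ε (k / N) := by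
  have hN' : (0:ℝ) < N := by exact_mod_cast hN
  have hx := abs_div_le hN hk
  have h1 : Tendsto (fun r => av N ε (fun t => (Lr r t : ℂ) * ee (-k) t)
      - av N ε (fun t => (Lr r t : ℂ) * ee (-0) t)) (𝓝[<] 1) (𝓝 (gN N ε k - 0)) := by
    refine Tendsto.sub (tendsto_av fun j => ?_) (tendsto_av_zero hε hN)
    exact (tendsto_Lr (sin_grid hε hN j)).mul_const _
  rw [sub_zero] at h1
  have h2 : Tendsto (fun r => ∑' l : ℤ, ((lrc r (k + l * N) : ℂ) * ee l ε
      - (lrc r (0 + l * N) : ℂ) * ee l ε)) (𝓝[<] 1)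
      (𝓝 (∑' l : ℤ, ((Lh (k + l * N) : ℂ) * ee l ε - (Lh (0 + l * N) : ℂ) * ee l ε))) := by
    refine tendsto_tsum_of_dominated_convergence
      (bound := fun l : ℤ => (if l = 0 then 1 else 0) + 8 * ((l : ℝ) ^ 2)⁻¹) ?_ ?_ ?_
    · refine Summable.add ?_ (summable_inv_sq.mul_left 8)
      exact summable_of_ne_finset_zero (s := {0}) fun l hl => by
        rw [Finset.mem_singleton] at hl; simp [hl]
    · intro l
      exact ((tendsto_lrc _).mul_const _).sub ((tendsto_lrc _).mul_const _)
    · filter_upwards [ev_Ico] with r hr l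
      rw [← sub_mul, norm_mul, norm_ee, mul_one, ← Complex.ofReal_sub, Complex.norm_real, Real.norm_eq_abs]
      by_cases hl : l = 0
      · subst hl
        simp only [zero_mul, add_zero]
        have e : lrc r 0 = 0 := by simp [lrc]
        rw [e, sub_zero]
        have := (abs_lrc_le hr.1 k).trans (pow_le_one₀ hr.1 hr.2.le)
        simpa using this
      · rw [zero_add]
        simp only [hl, if_false, zero_add]
        have hl1 : (1:ℝ) ≤ |(l : ℝ)| := by exact_mod_cast Int.one_le_abs hl
        have ca : (((k + l * (N:ℤ)).natAbs : ℕ) : ℝ) = N * |(l : ℝ) + k / N| := by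
          rw [Nat.cast_natAbs]; push_cast
          rw [← abs_of_pos hN', ← abs_mul, abs_of_pos hN']; congr 1; field_simp; ring
        have cb : (((l * (N:ℤ)).natAbs : ℕ) : ℝ) = N * |(l : ℝ)| := by
          rw [Nat.cast_natAbs]; push_cast; rw [abs_mul, abs_of_pos hN']; ring
        have hs := sep hx hl
        have pa : 0 < |(l : ℝ) + k / N| := by linarith
        have pa' : 0 < (k + l * (N:ℤ)).natAbs := by
          have : (0:ℝ) < (((k + l * (N:ℤ)).natAbs : ℕ) : ℝ) := by rw [ca]; positivity
          exact_mod_cast this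
        have pb' : 0 < (l * (N:ℤ)).natAbs := by
          have : (0:ℝ) < (((l * (N:ℤ)).natAbs : ℕ) : ℝ) := by rw [cb]; positivity
          exact_mod_cast this
        have hd := abel_diff hr.1 hr.2.le pa' pb'
        unfold lrc
        rw [show ∀ a b : ℝ, -a - -b = -(a - b) by intros; ring, abs_neg]
        refine hd.trans ?_
        rw [ca, cb]
        have hl2 : 0 < (l : ℝ) ^ 2 := by rw [← sq_abs]; positivity
        have n1 : abs ((N : ℝ) * |(l : ℝ)| - N * |(l : ℝ) + k / N|) ≤ N := by
          rw [← mul_sub, abs_mul, abs_of_pos hN']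
          have := abs_abs_sub_abs_le_abs_sub (l : ℝ) ((l : ℝ) + k / N)
          rw [show (l : ℝ) - ((l : ℝ) + k / N) = -(k / N) by ring, abs_neg] at this
          have h5 : abs (|(l : ℝ)| - |(l : ℝ) + k / N|) ≤ 1 := by linarith
          nlinarith
        have n2 : (N:ℝ) ^ 2 * ((l : ℝ) ^ 2 / 4) ≤ N * |(l : ℝ) + k / N| * (N * |(l : ℝ)|) := by
          have : (l : ℝ) ^ 2 / 4 ≤ |(l : ℝ) + k / N| * |(l : ℝ)| := by
            rw [← sq_abs]; nlinarith
          nlinarith [mul_le_mul_of_nonneg_left this (sq_nonneg (N : ℝ))]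
        have hN1 : (1:ℝ) ≤ N := by exact_mod_cast hN
        calc _ ≤ 2 * N / ((N:ℝ) ^ 2 * ((l : ℝ) ^ 2 / 4)) := by gcongr
          _ = (8 * ((l : ℝ) ^ 2)⁻¹) * (1 / N) := by field_simp; norm_num
          _ ≤ (8 * ((l : ℝ) ^ 2)⁻¹) * 1 := by
              gcongr; rw [div_le_iff₀ hN']; linarith
          _ = _ := mul_one _
  have h3 : ∀ᶠ r : ℝ in 𝓝[<] 1, ∑' l : ℤ, ((lrc r (k + l * N) : ℂ) * ee l ε
      - (lrc r (0 + l * N) : ℂ) * ee l ε) = av N ε (fun t => (Lr r t : ℂ) * ee (-k) t)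
      - av N ε (fun t => (Lr r t : ℂ) * ee (-0) t) := by
    filter_upwards [ev_Ico] with r hr
    exact ((hasSum_av_Lr hN ε k hr.1 hr.2).sub (hasSum_av_Lr hN ε 0 hr.1 hr.2)).tsum_eq
  rw [tendsto_nhds_unique h1 (h2.congr' h3)]
  have h4 : ∀ l : ℤ, ((Lh (k + l * N) : ℂ) * ee l ε - (Lh (0 + l * N) : ℂ) * ee l ε)
      = (if l = 0 then (Lh k : ℂ) else 0)
        - (1 / (N : ℂ)) * (if l = 0 then 0 else ee l ε * (sT (k / N) l : ℂ)) := by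
    intro l
    by_cases hl : l = 0
    · subst hl; simp [Lh]
    · have : Lh (k + l * N) - Lh (0 + l * N) = -(1 / (N : ℝ)) * sT (k / N) l := by
        unfold Lh sT; push_cast
        have e1 : |(k : ℝ) + l * N| = N * |(l : ℝ) + k / N| := by
          rw [← abs_of_pos hN', ← abs_mul, abs_of_pos hN']; congr 1; field_simp; ring
        have e2 : |0 + (l : ℝ) * N| = N * |(l : ℝ)| := by
          rw [zero_add, abs_mul, abs_of_pos hN']; ring
        rw [e1, e2, mul_inv, mul_inv]; ring
      simp only [hl, if_false]
      rw [← sub_mul, ← Complex.ofReal_sub, this]; push_cast; ring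
  simp only [h4]
  have h5 : HasSum (fun l : ℤ => if l = 0 then (Lh k : ℂ) else 0) (Lh k : ℂ) := by
    have := hasSum_ite_eq (0 : ℤ) (Lh k : ℂ)
    exact this
  exact (h5.sub ((summable_Sx hx).hasSum.mul_left _)).tsum_eq

/-! ### Discrete Fourier coefficients of the logarithm -/

lemma gN_zero {ε : ℝ} (hε : ε = 1 / 6 ∨ ε = -(1 / 6)) {N : ℕ} (hN : 0 < N) : gN N ε 0 = 0 := by
  rw [gN_eq hε hN (by simp)]; simp [Lh, Sx_zero]

/-- Lipschitz constant of the lattice sum. -/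
noncomputable def C0 : ℝ := 16 * Z2

lemma C0_nonneg : 0 ≤ C0 := mul_nonneg (by norm_num) Z2_nonneg

/-- The error `gN - Lh` is Lipschitz in the frequency with constant `O(N⁻²)`. Applied to two nearby
frequencies, this controls commutators with the smooth coefficients. -/
lemma gN_lip {ε : ℝ} (hε : ε = 1 / 6 ∨ ε = -(1 / 6)) {N : ℕ} (hN : 0 < N) {k m : ℤ}
    (hk : |(k : ℝ)| ≤ 3 / 4 * N) (hm : |(m : ℝ)| ≤ 3 / 4 * N) :
    ‖(gN N ε k - Lh k) - (gN N ε m - Lh m)‖ ≤ C0 * |(k : ℝ) - m| / (N : ℝ) ^ 2 := by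
  have hN' : (0:ℝ) < N := by exact_mod_cast hN
  rw [gN_eq hε hN hk, gN_eq hε hN hm]
  have e : (Lh k : ℂ) - (1 / (N : ℂ)) * Sx ε (k / N) - Lh k - (Lh m - (1 / (N : ℂ)) * Sx ε (m / N) - Lh m)
      = (1 / (N : ℂ)) * (Sx ε (m / N) - Sx ε (k / N)) := by ring
  rw [e, norm_mul]
  have h1 : ‖(1 / (N : ℂ))‖ = 1 / (N : ℝ) := by simp
  have h2 := Sx_lip (ε := ε) (abs_div_le hN hm) (abs_div_le hN hk)
  have h3 : |(m : ℝ) / N - k / N| = |(k : ℝ) - m| / N := by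
    rw [← sub_div, abs_div, abs_of_pos hN', abs_sub_comm]
  rw [h3] at h2
  rw [h1]
  calc _ ≤ 1 / (N : ℝ) * (16 * Z2 * (|(k : ℝ) - m| / N)) := by gcongr
    _ = _ := by unfold C0; field_simp

/-- Second-order accuracy of the discrete Fourier coefficients of the logarithm; this uses that both
`gN` and `Lh` vanish at frequency `0`. -/
lemma gN_approx {ε : ℝ} (hε : ε = 1 / 6 ∨ ε = -(1 / 6)) {N : ℕ} (hN : 0 < N) {k : ℤ}
    (hk : |(k : ℝ)| ≤ 3 / 4 * N) :
    ‖gN N ε k - Lh k‖ ≤ C0 * |(k : ℝ)| / (N : ℝ) ^ 2 := by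
  have := gN_lip hε hN hk (m := 0) (by simp)
  simpa [gN_zero hε hN, Lh] using this

lemma re_ee (l : ℤ) (ε : ℝ) : (ee l ε).re = Real.cos (2 * Real.pi * l * ε) := by
  unfold ee
  have : 2 * Real.pi * Complex.I * (l : ℂ) * (ε : ℂ) = ((2 * Real.pi * l * ε : ℝ) : ℂ) * Complex.I := by
    push_cast; ring
  rw [this, Complex.exp_ofReal_mul_I_re]

lemma cos_eps {ε : ℝ} (hε : ε = 1 / 6 ∨ ε = -(1 / 6)) : Real.cos (2 * Real.pi * ε) = 1 / 2 := by
  rcases hε with rfl | rfl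
  · rw [show 2 * Real.pi * (1 / 6) = Real.pi / 3 by ring, Real.cos_pi_div_three]
  · rw [show 2 * Real.pi * (-(1 / 6)) = -(Real.pi / 3) by ring, Real.cos_neg, Real.cos_pi_div_three]

lemma sT_pair {x : ℝ} (hx : |x| ≤ 1 / 2) {n : ℕ} (hn : 1 ≤ n) :
    sT x n + sT x (-(n : ℤ)) = 2 * x ^ 2 / (n * ((n : ℝ) ^ 2 - x ^ 2)) := by
  have hn' : (1:ℝ) ≤ n := by exact_mod_cast hn
  have ⟨h1, h2⟩ := abs_le.1 hx
  unfold sT; push_cast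
  rw [abs_neg, abs_of_pos (by linarith : (0:ℝ) < (n : ℝ)), abs_of_pos (by linarith : (0:ℝ) < (n : ℝ) + x),
    abs_of_neg (by linarith : -(n : ℝ) + x < 0)]
  have a1 : (n : ℝ) + x ≠ 0 := by linarith
  have a2 : (n : ℝ) - x ≠ 0 := by linarith
  have a4 : (n : ℝ) ≠ 0 := by linarith
  have e : (n : ℝ) ^ 2 - x ^ 2 = ((n : ℝ) + x) * ((n : ℝ) - x) := by ring
  rw [e, show -(-(n : ℝ) + x) = (n : ℝ) - x by ring]; field_simp; ring

/-- The real part of the lattice sum is nonnegative: the term `|l| = 1`, with weight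
`cos(π/3) = 1/2`, dominates the rest by telescoping. -/
lemma re_Sx_nonneg {ε : ℝ} (hε : ε = 1 / 6 ∨ ε = -(1 / 6)) {x : ℝ} (hx : |x| ≤ 1 / 2) :
    0 ≤ (Sx ε x).re := by
  have hs := (summable_Sx (ε := ε) (x := x) (by linarith)).hasSum
  have h1 := Complex.hasSum_re hs
  have h2 := h1.nat_add_neg
  simp only [if_true, Complex.zero_re, add_zero] at h2
  have x2 : x ^ 2 ≤ 1 / 4 := by rw [← sq_abs]; nlinarith [abs_nonneg x]
  have hg : ∀ n : ℕ, 1 ≤ n →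
      (if (n : ℤ) = 0 then (0:ℂ) else ee n ε * (sT x n : ℂ)).re
        + (if -(n : ℤ) = 0 then (0:ℂ) else ee (-(n : ℤ)) ε * (sT x (-(n : ℤ)) : ℂ)).re
      = Real.cos (2 * Real.pi * n * ε) * (2 * x ^ 2 / (n * ((n : ℝ) ^ 2 - x ^ 2))) := by
    intro n hn
    have n0 : (n : ℤ) ≠ 0 := by exact_mod_cast (by omega : n ≠ 0)
    rw [if_neg n0, if_neg (neg_ne_zero.2 n0), Complex.re_mul_ofReal, Complex.re_mul_ofReal, re_ee, re_ee,
      ← sT_pair hx hn]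
    have : Real.cos (2 * Real.pi * ((-(n : ℤ) : ℤ) : ℝ) * ε) = Real.cos (2 * Real.pi * n * ε) := by
      rw [← Real.cos_neg]; congr 1; push_cast; ring
    rw [this]; push_cast; ring
  have hpart : ∀ M : ℕ, 2 * x ^ 2 * (1 / 4 + 1 / (2 * ((M : ℝ) + 1) * (M + 2))) ≤
      ∑ n ∈ Finset.range (M + 2), ((if (n : ℤ) = 0 then (0:ℂ) else ee n ε * (sT x n : ℂ)).re
        + (if -(n : ℤ) = 0 then (0:ℂ) else ee (-(n : ℤ)) ε * (sT x (-(n : ℤ)) : ℂ)).re) := by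
    intro M
    induction M with
    | zero =>
      rw [Finset.sum_range_succ, Finset.sum_range_one, hg 1 le_rfl]
      have : Real.cos (2 * Real.pi * ((1:ℕ):ℝ) * ε) = 1 / 2 := by
        rw [← cos_eps hε]; congr 1; push_cast; ring
      rw [this]; simp
      have h1 : 0 < 1 - x ^ 2 := by linarith
      have h3 : 2 * x ^ 2 ≤ 2 * x ^ 2 / (1 - x ^ 2) := by
        rw [le_div_iff₀ h1]; nlinarith [sq_nonneg x]
      linarith
    | succ M ih =>
      rw [Finset.sum_range_succ, hg (M + 2) (by omega)]
      have hc := Real.neg_one_le_cos (2 * Real.pi * ((M + 2 : ℕ) : ℝ) * ε)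
      set c := Real.cos (2 * Real.pi * ((M + 2 : ℕ) : ℝ) * ε)
      have hM : (0:ℝ) ≤ M := by positivity
      have hq : 0 < (((M + 2 : ℕ) : ℝ)) ^ 2 - x ^ 2 := by push_cast; nlinarith
      have t1 : 2 * x ^ 2 / (((M + 2 : ℕ) : ℝ) * (((M + 2 : ℕ) : ℝ) ^ 2 - x ^ 2))
          ≤ 2 * x ^ 2 / (((M:ℝ) + 2) * ((M + 1) * (M + 3))) := by
        push_cast
        gcongr
        nlinarith
      have t0 : 0 ≤ 2 * x ^ 2 / (((M + 2 : ℕ) : ℝ) * (((M + 2 : ℕ) : ℝ) ^ 2 - x ^ 2)) := by positivity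
      have t2 : 2 * x ^ 2 / (((M:ℝ) + 2) * ((M + 1) * (M + 3)))
          = 2 * x ^ 2 * (1 / 4 + 1 / (2 * ((M : ℝ) + 1) * (M + 2)))
            - 2 * x ^ 2 * (1 / 4 + 1 / (2 * (((M + 1 : ℕ) : ℝ) + 1) * (((M + 1 : ℕ) : ℝ) + 2))) := by
        push_cast; field_simp; ring
      nlinarith
  refine ge_of_tendsto (h2.tendsto_sum_nat.comp (tendsto_add_atTop_nat 2)) (Eventually.of_forall fun M => ?_)
  refine le_trans ?_ (hpart M)
  positivity

/-- The discrete coefficient is at least as large as the exact one `|k|⁻¹`: both terms of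
its real part `Lh k - N⁻¹ Re Sx` are nonpositive. -/
lemma gN_lower {ε : ℝ} (hε : ε = 1 / 6 ∨ ε = -(1 / 6)) {N : ℕ} (hN : 0 < N) {k : ℤ}
    (hk : |(k : ℝ)| ≤ 1 / 2 * N) : |(k : ℝ)|⁻¹ ≤ ‖gN N ε k‖ := by
  have hN' : (0:ℝ) < N := by exact_mod_cast hN
  rw [gN_eq hε hN (by linarith)]
  have hx : |(k : ℝ) / N| ≤ 1 / 2 := by
    rw [abs_div, abs_of_pos hN', div_le_iff₀ hN']; exact hk
  have h1 := Complex.abs_re_le_norm ((Lh k : ℂ) - (1 / (N : ℂ)) * Sx ε (k / N))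
  refine le_trans ?_ h1
  have h2 : ((Lh k : ℂ) - (1 / (N : ℂ)) * Sx ε (k / N)).re = -(|(k : ℝ)|⁻¹ + 1 / (N : ℝ) * (Sx ε (k / N)).re) := by
    have : (1 / (N : ℂ)) = ((1 / (N : ℝ) : ℝ) : ℂ) := by push_cast; rfl
    rw [this, Complex.sub_re, Complex.re_ofReal_mul, Complex.ofReal_re]; unfold Lh; ring
  rw [h2, abs_neg]
  refine le_trans ?_ (le_abs_self _)
  have := re_Sx_nonneg hε hx
  have : 0 ≤ 1 / (N : ℝ) * (Sx ε (k / N)).re := by positivity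
  linarith

/-- The discrete replacement `N sin(πn/N)` of `πn`. -/
noncomputable def sn (N : ℕ) (n : ℤ) : ℝ := N * Real.sin (Real.pi * n / N)

lemma abs_sn_le (N : ℕ) (n : ℤ) : |sn N n| ≤ Real.pi * |(n : ℝ)| := by
  unfold sn
  rcases Nat.eq_zero_or_pos N with h | h
  · subst h; simp; positivity
  · have hN' : (0:ℝ) < N := by exact_mod_cast h
    rw [abs_mul, abs_of_pos hN']
    have := Real.abs_sin_le_abs (x := Real.pi * n / N)
    calc _ ≤ (N : ℝ) * |Real.pi * n / N| := by gcongr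
      _ = _ := by rw [abs_div, abs_mul, abs_of_pos hN', abs_of_pos Real.pi_pos]; field_simp

lemma sn_add_mul {N : ℕ} (hN : 0 < N) (n l : ℤ) : |sn N (n + l * N)| = |sn N n| := by
  have hN' : (N : ℝ) ≠ 0 := by exact_mod_cast hN.ne'
  unfold sn
  have e : Real.pi * ((n + l * N : ℤ) : ℝ) / N = Real.pi * n / N + l * Real.pi := by
    push_cast; field_simp
  rw [e, Real.sin_add_int_mul_pi, abs_mul, abs_mul, abs_mul]
  simp

lemma sn_mul_sn {N : ℕ} (hN : 0 < N) (n m l : ℤ) :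
    sn N (n + l * N) * sn N (m + l * N) = sn N n * sn N m := by
  have hN' : (N : ℝ) ≠ 0 := by exact_mod_cast hN.ne'
  have e : ∀ n : ℤ, Real.pi * ((n + l * N : ℤ) : ℝ) / N = Real.pi * n / N + l * Real.pi := by
    intro n; push_cast; field_simp
  unfold sn
  rw [e, e, Real.sin_add_int_mul_pi, Real.sin_add_int_mul_pi]
  have : ((-1 : ℝ) ^ l) * (-1) ^ l = 1 := by rw [← mul_zpow]; simp
  linear_combination (N * Real.sin (Real.pi * n / N) * (N * Real.sin (Real.pi * m / N))) * this

lemma abs_sn_add (N : ℕ) (n m : ℤ) : |sn N (n + m)| ≤ |sn N n| + |sn N m| := by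
  unfold sn
  have e : Real.pi * ((n + m : ℤ) : ℝ) / N = Real.pi * n / N + Real.pi * m / N := by push_cast; ring
  rw [e, Real.sin_add, abs_mul, abs_mul, abs_mul, ← mul_add]
  gcongr
  refine (abs_add_le _ _).trans ?_
  rw [abs_mul, abs_mul]
  have h1 := Real.abs_cos_le_one (Real.pi * n / N)
  have h2 := Real.abs_cos_le_one (Real.pi * m / N)
  have h3 := abs_nonneg (Real.sin (Real.pi * n / N))
  have h4 := abs_nonneg (Real.sin (Real.pi * m / N))
  nlinarith

lemma sn_zero (N : ℕ) : sn N 0 = 0 := by simp [sn]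

/-- Jordan's inequality in terms of `sn`. -/
lemma sn_lower {N : ℕ} (hN : 0 < N) {n : ℤ} (hn : |(n : ℝ)| ≤ 1 / 2 * N) : 2 * |(n : ℝ)| ≤ |sn N n| := by
  have hN' : (0:ℝ) < N := by exact_mod_cast hN
  unfold sn
  have h : |Real.pi * n / N| ≤ Real.pi / 2 := by
    rw [abs_div, abs_mul, abs_of_pos hN', abs_of_pos Real.pi_pos, div_le_iff₀ hN']
    nlinarith [Real.pi_pos]
  have := Real.mul_abs_le_abs_sin h
  rw [abs_mul, abs_of_pos hN']
  calc 2 * |(n : ℝ)| = N * (2 / Real.pi * |Real.pi * n / N|) := by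
        rw [abs_div, abs_mul, abs_of_pos hN', abs_of_pos Real.pi_pos]; field_simp
    _ ≤ _ := by gcongr

/-- Every integer has a representative modulo `N` in `[-N/2, N/2]`. -/
lemma exists_reduce {N : ℕ} (hN : 0 < N) (k : ℤ) :
    ∃ l m : ℤ, k = m + l * N ∧ |(m : ℝ)| ≤ 1 / 2 * N := by
  have hN' : (0:ℝ) < N := by exact_mod_cast hN
  refine ⟨round ((k : ℝ) / N), k - round ((k : ℝ) / N) * N, by ring, ?_⟩
  have := abs_sub_round ((k : ℝ) / N)
  push_cast
  have e : (k : ℝ) - round ((k : ℝ) / N) * N = ((k : ℝ) / N - round ((k : ℝ) / N)) * N := by field_simp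
  rw [e, abs_mul, abs_of_pos hN']; gcongr

/-- Uniform bound for `gN` and for `sn * gN`. -/
noncomputable def C1 : ℝ := Real.pi * (1 + C0)

lemma one_le_C1 : 1 ≤ C1 := by
  unfold C1; nlinarith [C0_nonneg, Real.pi_gt_three]

/-- Bounds valid at every frequency, obtained by reduction modulo `N`. -/
lemma gN_bounds {ε : ℝ} (hε : ε = 1 / 6 ∨ ε = -(1 / 6)) {N : ℕ} (hN : 0 < N) (k : ℤ) :
    ‖gN N ε k‖ ≤ C1 ∧ |sn N k| * ‖gN N ε k‖ ≤ C1 := by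
  have hN' : (0:ℝ) < N := by exact_mod_cast hN
  obtain ⟨l, m, rfl, hm⟩ := exists_reduce hN k
  rw [sn_add_mul hN, gN_shift hN, norm_mul, norm_ee, one_mul]
  by_cases h0 : m = 0
  · subst h0; rw [gN_zero hε hN]; simp; linarith [one_le_C1]
  have h1 : (1:ℝ) ≤ |(m : ℝ)| := by exact_mod_cast Int.one_le_abs h0
  have h2 := gN_approx hε hN (k := m) (by linarith)
  have h3 : ‖(Lh m : ℂ)‖ = |(m : ℝ)|⁻¹ := by
    rw [Complex.norm_real, Lh, norm_neg, norm_inv]; simp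
  have h4 : ‖gN N ε m‖ ≤ |(m : ℝ)|⁻¹ + C0 * |(m : ℝ)| / (N : ℝ) ^ 2 := by
    have := norm_add_le (gN N ε m - Lh m) (Lh m)
    rw [sub_add_cancel, h3] at this; linarith
  have h5 : |(m : ℝ)| * ‖gN N ε m‖ ≤ 1 + C0 := by
    have a1 : |(m : ℝ)| * ‖gN N ε m‖ ≤ |(m : ℝ)| * (|(m : ℝ)|⁻¹ + C0 * |(m : ℝ)| / (N : ℝ) ^ 2) := by gcongr
    have a2 : |(m : ℝ)| * (|(m : ℝ)|⁻¹ + C0 * |(m : ℝ)| / (N : ℝ) ^ 2) = 1 + C0 * (|(m : ℝ)| ^ 2 / (N : ℝ) ^ 2) := by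
      field_simp
    have a3 : |(m : ℝ)| ^ 2 / (N : ℝ) ^ 2 ≤ 1 := by
      rw [div_le_one (by positivity)]; gcongr; linarith
    nlinarith [mul_le_mul_of_nonneg_left a3 C0_nonneg]
  have hC : 1 + C0 ≤ C1 := by unfold C1; nlinarith [C0_nonneg, Real.pi_gt_three]
  constructor
  · nlinarith [norm_nonneg (gN N ε m)]
  · have := abs_sn_le N m
    calc |sn N m| * ‖gN N ε m‖ ≤ Real.pi * |(m : ℝ)| * ‖gN N ε m‖ := by gcongr
      _ = Real.pi * (|(m : ℝ)| * ‖gN N ε m‖) := by ring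
      _ ≤ Real.pi * (1 + C0) := by have := Real.pi_pos; gcongr

/-! ### The symbol of the hypersingular operator -/

/-- Fourier coefficients of the factor of `Lg(s-t)` in the logarithmic kernel. -/
noncomputable def kerA (A : ℝ → ℝ → ℂ) (x : ℤ × ℤ) : ℂ := Complex.I / (2 * Real.pi) * c2 A x.1 x.2

/-- Fourier coefficients of the smooth part of the logarithmic kernel, after `log(sin²)` has been
replaced by `Lg = log(4 sin²)`. -/
noncomputable def kerB (A K : ℝ → ℝ → ℂ) (x : ℤ × ℤ) : ℂ :=
  c2 K x.1 x.2 - (Complex.I / (2 * Real.pi) * (Real.log 4 : ℂ)) * c2 A x.1 x.2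

lemma RD2.smul {a : ℤ × ℤ → ℂ} (ha : RD2 a) (c : ℂ) : RD2 (fun x => c * a x) := by
  intro k
  obtain ⟨C, hC⟩ := ha k
  refine ⟨‖c‖ * C, fun x => ?_⟩
  calc J x ^ k * ‖c * a x‖ = ‖c‖ * (J x ^ k * ‖a x‖) := by rw [norm_mul]; ring
    _ ≤ _ := by gcongr; exact hC x

lemma RD2_kerA {A : ℝ → ℝ → ℂ} (hA : SPK A) : RD2 (kerA A) := hA.RD2.smul _

lemma RD2_kerB {A K : ℝ → ℝ → ℂ} (hA : SPK A) (hK : SPK K) : RD2 (kerB A K) :=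
  hK.RD2.sub_smul hA.RD2 _

/-- Fourier expansion of the logarithmic kernel off its singularity. -/
lemma ker_rep {A K : ℝ → ℝ → ℂ} (hA : SPK A) (hK : SPK K) {s t : ℝ}
    (h : Real.sin (Real.pi * (s - t)) ≠ 0) :
    HasSum (fun x : ℤ × ℤ => (kerA A x * Lg (s - t) + kerB A K x) * (ee x.1 s * ee x.2 t))
      (logKer A K s t) := by
  have h1 := (hA.hasSum s t).mul_left (Complex.I / (2 * Real.pi) * (Real.log (Real.sin (Real.pi * (s - t)) ^ 2) : ℂ))
  have h2 := h1.add (hK.hasSum s t)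
  have e : Complex.I / (2 * Real.pi) * (Real.log (Real.sin (Real.pi * (s - t)) ^ 2) : ℂ) * A s t + K s t
      = logKer A K s t := by unfold logKer; ring
  rw [e] at h2
  refine h2.congr_fun fun x => ?_
  have e2 : (Lg (s - t) : ℂ) = (Real.log 4 : ℂ) + (Real.log (Real.sin (Real.pi * (s - t)) ^ 2) : ℂ) := by
    unfold Lg; rw [Real.log_mul (by norm_num) (by positivity)]; push_cast; rfl
  rw [e2]; unfold kerA kerB; ring

/-- Symbol of the convolution part: `a_x Lh(k) + b_x δ_{k0}`. -/
noncomputable def sig (a b : ℤ × ℤ → ℂ) (k : ℤ) (x : ℤ × ℤ) : ℂ :=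
  a x * Lh k + b x * (if k = 0 then 1 else 0)

lemma abs_Lh_le (k : ℤ) : ‖(Lh k : ℂ)‖ ≤ 1 := by
  rw [Complex.norm_real, Lh, norm_neg, norm_inv, norm_abs_eq_norm, Real.norm_eq_abs]
  by_cases h : k = 0
  · simp [h]
  · have h1 : (1:ℝ) ≤ |(k : ℝ)| := by exact_mod_cast Int.one_le_abs h
    exact inv_le_one_of_one_le₀ h1

lemma norm_sig_le (a b : ℤ × ℤ → ℂ) (k : ℤ) (x : ℤ × ℤ) : ‖sig a b k x‖ ≤ ‖a x‖ + ‖b x‖ := by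
  unfold sig
  refine (norm_add_le _ _).trans ?_
  rw [norm_mul, norm_mul]
  have h1 := abs_Lh_le k
  have h2 : ‖(if k = 0 then (1:ℂ) else 0)‖ ≤ 1 := by split_ifs <;> simp
  have := norm_nonneg (a x); have := norm_nonneg (b x)
  nlinarith

lemma summable_prod {y : ℤ → ℂ} (hy : RD1 y) {a b : ℤ × ℤ → ℂ} (ha : RD2 a) (hb : RD2 b) (k : ℕ) :
    Summable (fun z : ℤ × (ℤ × ℤ) => (jb z.1 ^ k * ‖y z.1‖) * (J z.2 ^ k * (‖a z.2‖ + ‖b z.2‖))) := by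
  have h2 : Summable (fun x => J x ^ k * (‖a x‖ + ‖b x‖)) := by
    simp only [mul_add]; exact (ha.summable k).add (hb.summable k)
  exact (hy.summable k).mul_of_nonneg h2 (fun n => by have := jb_pos n; positivity)
    (fun x => by have := J_pos x; positivity)

lemma ae_sin_sub_ne (s : ℝ) : ∀ᵐ t : ℝ, Real.sin (Real.pi * (s - t)) ≠ 0 := by
  have hc : (Set.range fun n : ℤ => s - n).Countable := Set.countable_range _
  filter_upwards [hc.ae_notMem volume] with t ht h
  apply ht
  rw [Real.sin_eq_zero_iff] at h
  obtain ⟨n, hn⟩ := h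
  rw [mul_comm] at hn
  have := mul_left_cancel₀ Real.pi_ne_zero hn
  exact ⟨n, by simp only; linarith⟩

/-- Fourier representation of the integral operator with logarithmic kernel. The mode `x` of the
kernel sends frequency `z.1` to frequency `z.1 + (x.1 + x.2)`. -/
lemma Vop_hasSum {A K : ℝ → ℝ → ℂ} (hA : SPK A) (hK : SPK K) {y : ℤ → ℂ} (hy : RD1 y) (s : ℝ) :
    HasSum (fun z : ℤ × (ℤ × ℤ) => y z.1 * sig (kerA A) (kerB A K) (z.1 + z.2.2) z.2
      * ee (z.1 + (z.2.1 + z.2.2)) s) (Vop (logKer A K) (ser y) s) := by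
  have ha := RD2_kerA hA
  have hb := RD2_kerB hA hK
  have hsum := summable_prod hy ha hb 0
  simp only [pow_zero, one_mul] at hsum
  have h := intervalIntegral.hasSum_integral_of_dominated_convergence (a := 0) (b := 1)
    (μ := volume) (F := fun (z : ℤ × (ℤ × ℤ)) t =>
      y z.1 * ((kerA A z.2 * Lg (s - t) + kerB A K z.2) * (ee z.2.1 s * ee (z.1 + z.2.2) t)))
    (f := fun t => logKer A K s t * ser y t)
    (fun z t => ‖y z.1‖ * (‖kerA A z.2‖ + ‖kerB A K z.2‖) * (|Lg (s - t)| + 1)) ?_ ?_ ?_ ?_ ?_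
  · refine h.congr_fun fun z => ?_
    have e : ∀ t, y z.1 * ((kerA A z.2 * Lg (s - t) + kerB A K z.2) * (ee z.2.1 s * ee (z.1 + z.2.2) t))
        = (y z.1 * kerA A z.2 * ee z.2.1 s) * ((Lg (s - t) : ℂ) * ee (z.1 + z.2.2) t)
          + (y z.1 * kerB A K z.2 * ee z.2.1 s) * ee (z.1 + z.2.2) t := by intro t; ring
    simp only [e]
    have hi : IntervalIntegrable (fun t => (Lg (s - t) : ℂ) * ee (z.1 + z.2.2) t) volume 0 1 := by
      refine (integrable_Lg_sub s).mono_fun ?_ ?_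
      · have : Measurable (fun t => Lg (s - t)) := measurable_Lg.comp (by fun_prop)
        exact ((Complex.measurable_ofReal.comp this).mul (continuous_ee _).measurable).aestronglyMeasurable
      · refine Eventually.of_forall fun t => ?_
        simp only [norm_mul, norm_ee, mul_one, Complex.norm_real, norm_abs_eq_norm, le_refl]
    rw [intervalIntegral.integral_add (hi.const_mul _)
      (((continuous_ee _).intervalIntegrable 0 1).const_mul _),
      intervalIntegral.integral_const_mul, intervalIntegral.integral_const_mul, integral_Lg_ee, integral_ee]
    have e2 : ee (z.1 + (z.2.1 + z.2.2)) s = ee z.2.1 s * ee (z.1 + z.2.2) s := by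
      rw [← ee_add_left]; congr 1; ring
    rw [e2]; unfold sig
    split_ifs with hz
    · rw [hz]; simp; ring
    · ring
  · intro z
    have : Measurable (fun t => Lg (s - t)) := measurable_Lg.comp (by fun_prop)
    have h1 := Complex.measurable_ofReal.comp this
    have h2 := (continuous_ee (z.1 + z.2.2)).measurable
    exact (((h1.const_mul (kerA A z.2)).add_const (kerB A K z.2)).mul
      (h2.const_mul (ee z.2.1 s))).const_mul (y z.1) |>.aestronglyMeasurable
  · intro z
    refine Eventually.of_forall fun t _ => ?_
    rw [norm_mul, norm_mul, norm_mul, norm_ee, norm_ee, mul_one, mul_one, mul_assoc]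
    gcongr
    refine (norm_add_le _ _).trans ?_
    rw [norm_mul, Complex.norm_real, Real.norm_eq_abs]
    nlinarith [norm_nonneg (kerA A z.2), norm_nonneg (kerB A K z.2), abs_nonneg (Lg (s - t)),
      mul_nonneg (norm_nonneg (kerB A K z.2)) (abs_nonneg (Lg (s - t)))]
  · exact Eventually.of_forall fun t _ => hsum.mul_right _
  · simp only [tsum_mul_right]
    exact ((integrable_Lg_sub s).add intervalIntegrable_const).const_mul _
  · filter_upwards [ae_sin_sub_ne s] with t ht _
    have h1 := ker_rep hA hK ht
    have h2 := (summable_ser hy.summable_norm t).hasSum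
    have hs : Summable (fun z : ℤ × (ℤ × ℤ) => (y z.1 * ee z.1 t) *
        ((kerA A z.2 * Lg (s - t) + kerB A K z.2) * (ee z.2.1 s * ee z.2.2 t))) := by
      refine Summable.of_norm_bounded (hsum.mul_right (|Lg (s - t)| + 1)) fun z => ?_
      rw [norm_mul, norm_mul, norm_mul, norm_mul, norm_ee, norm_ee, norm_ee, mul_one, mul_one, mul_one, mul_assoc]
      gcongr
      refine (norm_add_le _ _).trans ?_
      rw [norm_mul, Complex.norm_real, Real.norm_eq_abs]
      nlinarith [norm_nonneg (kerA A z.2), norm_nonneg (kerB A K z.2), abs_nonneg (Lg (s - t)),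
        mul_nonneg (norm_nonneg (kerB A K z.2)) (abs_nonneg (Lg (s - t)))]
    have h3 := h2.mul h1 hs
    rw [mul_comm (logKer A K s t)]
    refine h3.congr_fun fun z => ?_
    rw [ee_add_left]; ring

/-- Symbol of the hypersingular operator. -/
noncomputable def om (a1 b1 a2 b2 : ℤ × ℤ → ℂ) (n : ℤ) (x : ℤ × ℤ) : ℂ :=
  4 * Real.pi ^ 2 * n * (n + (x.1 + x.2) : ℤ) * sig a1 b1 (n + x.2) x + sig a2 b2 (n + x.2) x

lemma norm_two_pi_I_mul (n : ℤ) : ‖(2 * Real.pi * Complex.I * n : ℂ)‖ = 2 * Real.pi * |(n : ℝ)| := by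
  simp [abs_of_pos Real.pi_pos]

/-- Fourier representation of the hypersingular operator. -/
lemma Wop_hasSum {A1 K1 A2 K2 : ℝ → ℝ → ℂ} (hA1 : SPK A1) (hK1 : SPK K1) (hA2 : SPK A2) (hK2 : SPK K2)
    {y : ℤ → ℂ} (hy : RD1 y) (s : ℝ) :
    HasSum (fun z : ℤ × (ℤ × ℤ) => y z.1 * om (kerA A1) (kerB A1 K1) (kerA A2) (kerB A2 K2) z.1 z.2
      * ee (z.1 + (z.2.1 + z.2.2)) s) (Wop (logKer A1 K1) (logKer A2 K2) (ser y) s) := by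
  have hy' : RD1 (fun n => 2 * Real.pi * Complex.I * n * y n) := hy.smul_n
  have h2 := Vop_hasSum hA2 hK2 hy s
  have h1 := fun s => Vop_hasSum hA1 hK1 hy' s
  rw [← deriv_ser hy] at h1
  have hfun : Vop (logKer A1 K1) (deriv (ser y)) = fun s => ∑' z : ℤ × (ℤ × ℤ),
      2 * Real.pi * Complex.I * z.1 * y z.1 * sig (kerA A1) (kerB A1 K1) (z.1 + z.2.2) z.2
      * ee (z.1 + (z.2.1 + z.2.2)) s := funext fun s => (h1 s).tsum_eq.symm
  have hu : Summable (fun z : ℤ × (ℤ × ℤ) => ‖2 * Real.pi * Complex.I * (z.1 + (z.2.1 + z.2.2) : ℤ) *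
      (2 * Real.pi * Complex.I * z.1 * y z.1 * sig (kerA A1) (kerB A1 K1) (z.1 + z.2.2) z.2)‖) := by
    refine Summable.of_nonneg_of_le (fun _ => norm_nonneg _) (fun z => ?_)
      ((summable_prod hy (RD2_kerA hA1) (RD2_kerB hA1 hK1) 2).mul_left (4 * Real.pi ^ 2))
    rw [norm_mul, norm_mul (2 * Real.pi * Complex.I * z.1 * y z.1), norm_mul (2 * Real.pi * Complex.I * z.1) (y z.1),
      norm_two_pi_I_mul, norm_two_pi_I_mul]
    have b1 := norm_sig_le (kerA A1) (kerB A1 K1) (z.1 + z.2.2) z.2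
    have b2 : |((z.1 + (z.2.1 + z.2.2) : ℤ) : ℝ)| ≤ jb z.1 * J z.2 :=
      (abs_le_jb _).trans ((jb_add _ _).trans (by have := jb_pos z.1; gcongr; exact jb_add_le_J _))
    have b3 := abs_le_jb z.1
    have p1 := one_le_jb z.1
    have p2 := one_le_J z.2
    have p0 := Real.pi_pos
    calc _ ≤ 2 * Real.pi * (jb z.1 * J z.2) * (2 * Real.pi * jb z.1 * ‖y z.1‖ *
          (‖kerA A1 z.2‖ + ‖kerB A1 K1 z.2‖)) := by gcongr
      _ = 4 * Real.pi ^ 2 * (jb z.1 ^ 2 * ‖y z.1‖ * (J z.2 ^ 1 * (‖kerA A1 z.2‖ + ‖kerB A1 K1 z.2‖))) := by ring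
      _ ≤ _ := by
        gcongr
        norm_num
  have hd := hasDerivAt_tsum (g := fun (z : ℤ × (ℤ × ℤ)) s =>
      2 * Real.pi * Complex.I * z.1 * y z.1 * sig (kerA A1) (kerB A1 K1) (z.1 + z.2.2) z.2
      * ee (z.1 + (z.2.1 + z.2.2)) s)
    (g' := fun z s => 2 * Real.pi * Complex.I * (z.1 + (z.2.1 + z.2.2) : ℤ) *
      (2 * Real.pi * Complex.I * z.1 * y z.1 * sig (kerA A1) (kerB A1 K1) (z.1 + z.2.2) z.2)
      * ee (z.1 + (z.2.1 + z.2.2)) s) hu ?_ ?_ (y₀ := 0) (h1 0).summable s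
  · have hs : Summable (fun z : ℤ × (ℤ × ℤ) => 2 * Real.pi * Complex.I * (z.1 + (z.2.1 + z.2.2) : ℤ) *
      (2 * Real.pi * Complex.I * z.1 * y z.1 * sig (kerA A1) (kerB A1 K1) (z.1 + z.2.2) z.2)
      * ee (z.1 + (z.2.1 + z.2.2)) s) := by
      refine Summable.of_norm_bounded hu fun z => ?_
      rw [norm_mul _ (ee _ s), norm_ee, mul_one]
    have h3 := hs.hasSum.neg.add h2
    unfold Wop
    rw [hfun, hd.deriv]
    refine h3.congr_fun fun z => ?_
    unfold om
    push_cast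
    linear_combination ((4 * (Real.pi : ℂ) ^ 2 * z.1 * (z.1 + (z.2.1 + z.2.2)) * y z.1 *
      sig (kerA A1) (kerB A1 K1) (z.1 + z.2.2) z.2 * ee (z.1 + (z.2.1 + z.2.2)) s)) * Complex.I_sq
  · intro z t
    have := (hasDerivAt_ee (z.1 + (z.2.1 + z.2.2)) t).const_mul
      (2 * Real.pi * Complex.I * z.1 * y z.1 * sig (kerA A1) (kerB A1 K1) (z.1 + z.2.2) z.2)
    refine this.congr_deriv ?_
    ring
  · intro z t
    rw [norm_mul _ (ee _ t), norm_ee, mul_one]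

/-! ### The symbol of the Nyström matrix -/

/-- Discrete Fourier coefficients of grid values `v` on the unshifted grid. -/
noncomputable def xv (N : ℕ) (v : ℤ → ℂ) (n : ℤ) : ℂ :=
  (1 / (N : ℂ)) * ∑ j ∈ Finset.range N, v j * ee (-n) (tg (1 / (N : ℝ)) 0 (j : ℤ))

/-- Discrete analogue of `sig`. -/
noncomputable def sigN (N : ℕ) (ε : ℝ) (a b : ℤ × ℤ → ℂ) (k : ℤ) (x : ℤ × ℤ) : ℂ :=
  a x * gN N ε k + b x * kN N ε k

/-- Discrete analogue of `om`: the symbol of the Nyström matrix. -/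
noncomputable def omN (N : ℕ) (ε : ℝ) (a1 b1 a2 b2 : ℤ × ℤ → ℂ) (n : ℤ) (x : ℤ × ℤ) : ℂ :=
  4 * sn N n * sn N (n + (x.1 + x.2)) * sigN N ε a1 b1 (n + x.2) x + sigN N ε a2 b2 (n + x.2) x

lemma xv_shift {N : ℕ} (hN : 0 < N) (v : ℤ → ℂ) (n l : ℤ) : xv N v (n + l * N) = xv N v n := by
  unfold xv
  congr 1
  refine Finset.sum_congr rfl fun j _ => ?_
  have e : -(n + l * N) = -n + (-l) * (N : ℤ) := by ring
  rw [e, ee_add_left, ee_mul_N hN, ee_zero_right, mul_one]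

lemma av_shift {N : ℕ} (hN : 0 < N) (ε : ℝ) {u : ℝ → ℂ} (hu : Function.Periodic u 1) (c : ℤ) :
    av N ε (fun s => u (s + c * (1 / (N : ℝ)))) = av N ε u := by
  unfold av
  congr 1
  have h := sum_range_shift (N := N) (f := fun j => u (tg (1 / (N : ℝ)) ε j))
    (fun j => by rw [tg_add N ε j hN, hu]) c
  rw [← h]
  refine Finset.sum_congr rfl fun j _ => congrArg u ?_
  unfold tg; push_cast; ring

/-- Discrete Fourier coefficient at frequency `m` of a sampled kernel with one Fourier mode `(p, q)`.
The rows are sampled at offset `a` and the columns at offset `b` (in units of the mesh width); since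
`a - b` is an integer, the argument of `Lg` always lies on the shifted
grid. -/
lemma D1 {N : ℕ} (hN : 0 < N) (ε : ℝ) (A B : ℂ) (p q m c : ℤ) (a b : ℝ) (hc : a - b = c) (v : ℤ → ℂ) :
    av N ε (fun s => ee (-m) s * ((1 / (N : ℂ)) * ∑ j ∈ Finset.range N,
      (A * Lg (s + a * (1 / (N : ℝ)) - (tg (1 / (N : ℝ)) 0 (j : ℤ) + b * (1 / (N : ℝ)))) + B) *
      (ee p (s + a * (1 / (N : ℝ))) * ee q (tg (1 / (N : ℝ)) 0 (j : ℤ) + b * (1 / (N : ℝ)))) * v j))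
    = ee m (a * (1 / (N : ℝ))) * ee (-(m - (p + q))) (b * (1 / (N : ℝ))) *
      ((A * gN N ε (m - p) + B * kN N ε (m - p)) * xv N v (m - (p + q))) := by
  obtain ⟨u, hu⟩ : ∃ u : ℝ → ℂ, u = fun s => (A * Lg s + B) * ee (-(m - p)) s := ⟨_, rfl⟩
  have hup : Function.Periodic u 1 := by
    intro s; rw [hu]; simp only; rw [Lg_periodic, ee_add_one]
  have hav : av N ε u = A * gN N ε (m - p) + B * kN N ε (m - p) := by
    have : u = fun s => A * ((Lg s : ℂ) * ee (-(m - p)) s) + B * ee (-(m - p)) s := by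
      rw [hu]; ext s; ring
    rw [this, av_add, av_const_mul, av_const_mul]; rfl
  have e1 : (fun s => ee (-m) s * ((1 / (N : ℂ)) * ∑ j ∈ Finset.range N,
      (A * Lg (s + a * (1 / (N : ℝ)) - (tg (1 / (N : ℝ)) 0 (j : ℤ) + b * (1 / (N : ℝ)))) + B) *
      (ee p (s + a * (1 / (N : ℝ))) * ee q (tg (1 / (N : ℝ)) 0 (j : ℤ) + b * (1 / (N : ℝ)))) * v j))
      = fun s => ∑ j ∈ Finset.range N, (1 / (N : ℂ)) * (ee m (a * (1 / (N : ℝ))) *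
        ee (-(m - (p + q))) (b * (1 / (N : ℝ))) * (v j * ee (-(m - (p + q))) (tg (1 / (N : ℝ)) 0 (j : ℤ))))
        * u (s + (c - (j : ℤ) : ℤ) * (1 / (N : ℝ))) := by
    ext s
    rw [Finset.mul_sum, Finset.mul_sum]
    refine Finset.sum_congr rfl fun j _ => ?_
    have ez : s + a * (1 / (N : ℝ)) - (tg (1 / (N : ℝ)) 0 (j : ℤ) + b * (1 / (N : ℝ)))
        = s + (c - (j : ℤ) : ℤ) * (1 / (N : ℝ)) := by
      push_cast; rw [← hc]; unfold tg; push_cast; ring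
    rw [hu]; simp only
    rw [ez]
    obtain ⟨L, hL⟩ : ∃ L, L = (A * (Lg (s + (c - (j : ℤ) : ℤ) * (1 / (N : ℝ))) : ℂ) + B) := ⟨_, rfl⟩
    rw [← hL, ← ez]
    simp only [sub_eq_add_neg, ee_add_right, ee_add_left, neg_add, neg_neg, ee_neg_right]
    have c1 := ee_neg_left m (a * (1 / (N : ℝ)))
    have c2 := ee_neg_left m (tg (1 / (N : ℝ)) 0 (j : ℤ))
    have c3 := ee_neg_left p (tg (1 / (N : ℝ)) 0 (j : ℤ))
    have c4 := ee_neg_left m (b * (1 / (N : ℝ)))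
    have c5 := ee_neg_left p (b * (1 / (N : ℝ)))
    generalize ee m (a * (1 / (N : ℝ))) = z1 at *
    generalize ee (-m) (a * (1 / (N : ℝ))) = z1' at *
    generalize ee m (tg (1 / (N : ℝ)) 0 (j : ℤ)) = z2 at *
    generalize ee (-m) (tg (1 / (N : ℝ)) 0 (j : ℤ)) = z2' at *
    generalize ee p (tg (1 / (N : ℝ)) 0 (j : ℤ)) = z3 at *
    generalize ee (-p) (tg (1 / (N : ℝ)) 0 (j : ℤ)) = z3' at *
    generalize ee m (b * (1 / (N : ℝ))) = z4 at *
    generalize ee (-m) (b * (1 / (N : ℝ))) = z4' at *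
    generalize ee p (b * (1 / (N : ℝ))) = z5 at *
    generalize ee (-p) (b * (1 / (N : ℝ))) = z5' at *
    trans (1 / (N : ℂ)) * v j * L * ee (-m) s * ee p s * ee p (a * (1 / (N : ℝ))) *
        ee q (tg (1 / (N : ℝ)) 0 (j : ℤ)) * ee q (b * (1 / (N : ℝ))) * ((z1' * z1) * (z2' * z2) * (z3' * z3)
          * (z4' * z4) * (z5' * z5))
    · rw [c1, c2, c3, c4, c5]; ring
    · ring
  rw [e1]
  have e2 : ∀ (f : ℕ → ℝ → ℂ), av N ε (fun s => ∑ j ∈ Finset.range N, f j s)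
      = ∑ j ∈ Finset.range N, av N ε (f j) := by
    intro f
    unfold av
    rw [Finset.sum_comm, Finset.mul_sum]
  rw [e2]
  simp only [av_const_mul]
  have e3 : ∀ j : ℕ, av N ε (fun s => u (s + (c - (j : ℤ) : ℤ) * (1 / (N : ℝ)))) = av N ε u :=
    fun j => av_shift hN ε hup _
  simp only [e3]
  rw [hav, ← Finset.sum_mul, ← Finset.mul_sum, ← Finset.mul_sum]
  unfold xv
  ring

/-- The single-mode identity `D1` summed over the Fourier modes of a logarithmic kernel. -/
lemma D0 {A K : ℝ → ℝ → ℂ} (hA : SPK A) (hK : SPK K) {ε : ℝ} (hε : ε = 1 / 6 ∨ ε = -(1 / 6))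
    {N : ℕ} (hN : 0 < N) (m c : ℤ) (a b : ℝ) (hc : a - b = c) (v : ℤ → ℂ) :
    HasSum (fun x : ℤ × ℤ => ee m (a * (1 / (N : ℝ))) * ee (-(m - (x.1 + x.2))) (b * (1 / (N : ℝ))) *
      (sigN N ε (kerA A) (kerB A K) (m - x.1) x * xv N v (m - (x.1 + x.2))))
    (av N ε (fun s => ee (-m) s * ((1 / (N : ℂ)) * ∑ j ∈ Finset.range N,
      logKer A K (s + a * (1 / (N : ℝ))) (tg (1 / (N : ℝ)) 0 (j : ℤ) + b * (1 / (N : ℝ))) * v j))) := by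
  have h := av_hasSum (N := N) (ε := ε) (u := fun s => ee (-m) s * ((1 / (N : ℂ)) * ∑ j ∈ Finset.range N,
      logKer A K (s + a * (1 / (N : ℝ))) (tg (1 / (N : ℝ)) 0 (j : ℤ) + b * (1 / (N : ℝ))) * v j))
    (f := fun (x : ℤ × ℤ) s => ee (-m) s * ((1 / (N : ℂ)) * ∑ j ∈ Finset.range N,
      (kerA A x * Lg (s + a * (1 / (N : ℝ)) - (tg (1 / (N : ℝ)) 0 (j : ℤ) + b * (1 / (N : ℝ)))) + kerB A K x) *
      (ee x.1 (s + a * (1 / (N : ℝ))) * ee x.2 (tg (1 / (N : ℝ)) 0 (j : ℤ) + b * (1 / (N : ℝ)))) * v j)) ?_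
  · refine h.congr_fun fun x => ?_
    rw [D1 hN ε _ _ _ _ m c a b hc v]
    rfl
  · intro i
    refine ((hasSum_sum (s := Finset.range N) fun j _ => ?_).mul_left _).mul_left _
    refine (ker_rep hA hK ?_).mul_right _
    have e : tg (1 / (N : ℝ)) ε i + a * (1 / (N : ℝ)) - (tg (1 / (N : ℝ)) 0 (j : ℤ) + b * (1 / (N : ℝ)))
        = tg (1 / (N : ℝ)) ε (i - j + c) := by
      unfold tg; push_cast; rw [← hc]; ring
    rw [e]
    exact sin_grid hε hN _

lemma ee_sub_half (N : ℕ) (m : ℤ) :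
    (N : ℂ) * (ee m (1 / 2 * (1 / (N : ℝ))) - ee m (-(1 / 2) * (1 / (N : ℝ)))) = 2 * Complex.I * sn N m := by
  have e : -(1 / 2) * (1 / (N : ℝ)) = -(1 / 2 * (1 / (N : ℝ))) := by ring
  rw [e, ee_neg_right]
  unfold ee sn
  have h : Complex.exp (2 * Real.pi * Complex.I * m * (1 / 2 * (1 / (N : ℝ)) : ℝ)) -
      Complex.exp (2 * Real.pi * Complex.I * (-m : ℤ) * (1 / 2 * (1 / (N : ℝ)) : ℝ))
      = 2 * Complex.I * Complex.sin (Real.pi * m / N) := by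
    rw [Complex.sin]
    have e1 : (2 * Real.pi * Complex.I * m * (1 / 2 * (1 / (N : ℝ)) : ℝ) : ℂ) = (Real.pi * m / N) * Complex.I := by
      push_cast; ring
    have e2 : (2 * Real.pi * Complex.I * (-m : ℤ) * (1 / 2 * (1 / (N : ℝ)) : ℝ) : ℂ) = -(Real.pi * m / N) * Complex.I := by
      push_cast; ring
    rw [e1, e2]
    linear_combination (-(Complex.exp (-(Real.pi * m / N) * Complex.I) - Complex.exp ((Real.pi * m / N) * Complex.I))) * Complex.I_sq
  rw [h]
  push_cast; ring

/-- Action of the Nyström matrix on discrete Fourier coefficients. -/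
lemma D_res {A1 K1 A2 K2 : ℝ → ℝ → ℂ} (hA1 : SPK A1) (hK1 : SPK K1) (hA2 : SPK A2) (hK2 : SPK K2)
    {ε : ℝ} (hε : ε = 1 / 6 ∨ ε = -(1 / 6)) {N : ℕ} (hN : 0 < N) (m : ℤ) (v : ℤ → ℂ) :
    HasSum (fun x : ℤ × ℤ => omN N ε (kerA A1) (kerB A1 K1) (kerA A2) (kerB A2 K2) (m - (x.1 + x.2)) x *
      xv N v (m - (x.1 + x.2)))
    ((1 / (N : ℂ)) * ∑ i ∈ Finset.range N, ee (-m) (tg (1 / (N : ℝ)) ε (i : ℤ)) * ((N : ℂ) *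
      ∑ j ∈ Finset.range N, Wmat (logKer A1 K1) (logKer A2 K2) (1 / (N : ℝ)) ε i j * v j)) := by
  have hpp := D0 hA1 hK1 hε hN m 0 (1 / 2) (1 / 2) (by norm_num) v
  have hmp := D0 hA1 hK1 hε hN m (-1) (-(1 / 2)) (1 / 2) (by norm_num) v
  have hpm := D0 hA1 hK1 hε hN m 1 (1 / 2) (-(1 / 2)) (by norm_num) v
  have hmm := D0 hA1 hK1 hε hN m 0 (-(1 / 2)) (-(1 / 2)) (by norm_num) v
  have h2 := D0 hA2 hK2 hε hN m 0 0 0 (by norm_num) v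
  have h := ((((hpp.sub hmp).sub hpm).add hmm).mul_left ((N : ℂ) ^ 2)).add h2
  have hN' : (N : ℂ) ≠ 0 := by exact_mod_cast hN.ne'
  obtain ⟨T, hT⟩ : ∃ T, T = (1 / (N : ℂ)) * ∑ i ∈ Finset.range N, ee (-m) (tg (1 / (N : ℝ)) ε (i : ℤ)) * ((N : ℂ) *
      ∑ j ∈ Finset.range N, Wmat (logKer A1 K1) (logKer A2 K2) (1 / (N : ℝ)) ε i j * v j) := ⟨_, rfl⟩
  rw [← hT]
  suffices hh : T = _ by
    rw [hh]
    refine h.congr_fun fun x => ?_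
    have s1 := ee_sub_half N m
    have s2 := ee_sub_half N (-(m - (x.1 + x.2)))
    have s3 : sn N (-(m - (x.1 + x.2))) = - sn N (m - (x.1 + x.2)) := by
      unfold sn
      rw [← mul_neg, ← Real.sin_neg]; congr 2; push_cast; ring
    rw [s3] at s2
    unfold omN
    have e1 : m - (x.1 + x.2) + (x.1 + x.2) = m := by ring
    have e2 : m - (x.1 + x.2) + x.2 = m - x.1 := by ring
    rw [e1, e2]
    simp only [zero_mul, ee_zero_right, one_mul]
    generalize sigN N ε (kerA A1) (kerB A1 K1) (m - x.1) x = S1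
    generalize sigN N ε (kerA A2) (kerB A2 K2) (m - x.1) x = S2
    generalize xv N v (m - (x.1 + x.2)) = X
    push_cast at s2
    generalize ee m (1 / 2 * (1 / (N : ℝ))) = p1 at *
    generalize ee m (-(1 / 2) * (1 / (N : ℝ))) = p2 at *
    generalize ee (-(m - (x.1 + x.2))) (1 / 2 * (1 / (N : ℝ))) = p3 at *
    generalize ee (-(m - (x.1 + x.2))) (-(1 / 2) * (1 / (N : ℝ))) = p4 at *
    linear_combination (-S1 * X) * ((N : ℂ) * (p3 - p4)) * s1 - S1 * X * (2 * Complex.I * sn N m) * s2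
      + 4 * (sn N (m - (x.1 + x.2)) : ℂ) * sn N m * S1 * X * Complex.I_sq
  rw [hT]
  unfold av
  rw [← mul_sub, ← mul_sub, ← mul_add, ← mul_assoc, mul_comm ((N : ℂ) ^ 2), mul_assoc, ← mul_add]
  congr 1
  rw [← Finset.sum_sub_distrib, ← Finset.sum_sub_distrib, ← Finset.sum_add_distrib, Finset.mul_sum,
    ← Finset.sum_add_distrib]
  refine Finset.sum_congr rfl fun i _ => ?_
  simp only [← mul_sub, ← mul_add]
  rw [← Finset.sum_sub_distrib, ← Finset.sum_sub_distrib, ← Finset.sum_add_distrib]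
  rw [mul_left_comm ((N : ℂ) ^ 2), ← mul_add]
  congr 1
  rw [mul_left_comm ((N : ℂ) ^ 2), ← mul_add, Finset.mul_sum, Finset.mul_sum, ← Finset.sum_add_distrib, Finset.mul_sum]
  refine Finset.sum_congr rfl fun j _ => ?_
  unfold Wmat
  have f1 : sg (1 / (N : ℝ)) ε ((i : ℤ) + 1) = tg (1 / (N : ℝ)) ε (i : ℤ) + 1 / 2 * (1 / (N : ℝ)) := by
    unfold sg tg; push_cast; ring
  have f2 : sg (1 / (N : ℝ)) ε (i : ℤ) = tg (1 / (N : ℝ)) ε (i : ℤ) + -(1 / 2) * (1 / (N : ℝ)) := by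
    unfold sg tg; push_cast; ring
  have f3 : sg (1 / (N : ℝ)) 0 ((j : ℤ) + 1) = tg (1 / (N : ℝ)) 0 (j : ℤ) + 1 / 2 * (1 / (N : ℝ)) := by
    unfold sg tg; push_cast; ring
  have f4 : sg (1 / (N : ℝ)) 0 (j : ℤ) = tg (1 / (N : ℝ)) 0 (j : ℤ) + -(1 / 2) * (1 / (N : ℝ)) := by
    unfold sg tg; push_cast; ring
  rw [f1, f2, f3, f4]
  simp only [zero_mul, add_zero]
  push_cast
  field_simp

/-! ### Growth of the symbols -/

/-- Total size of the Fourier data of the two kernels. -/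
noncomputable def Dx (a1 b1 a2 b2 : ℤ × ℤ → ℂ) (x : ℤ × ℤ) : ℝ :=
  (‖a1 x‖ + ‖b1 x‖) + (‖a2 x‖ + ‖b2 x‖)

lemma Dx_nonneg (a1 b1 a2 b2 : ℤ × ℤ → ℂ) (x : ℤ × ℤ) : 0 ≤ Dx a1 b1 a2 b2 x := by
  unfold Dx; positivity

lemma summable_Dx {a1 b1 a2 b2 : ℤ × ℤ → ℂ} (h1 : RD2 a1) (h2 : RD2 b1) (h3 : RD2 a2) (h4 : RD2 b2) (k : ℕ) :
    Summable (fun x => J x ^ k * Dx a1 b1 a2 b2 x) := by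
  simp only [Dx, mul_add]
  exact ((h1.summable k).add (h2.summable k)).add ((h3.summable k).add (h4.summable k))

lemma abs_sn_le_N (N : ℕ) (n : ℤ) : |sn N n| ≤ N := by
  unfold sn
  rw [abs_mul, Nat.abs_cast]
  exact mul_le_of_le_one_right (Nat.cast_nonneg N) (Real.abs_sin_le_one _)

lemma norm_sigN_le {ε : ℝ} (hε : ε = 1 / 6 ∨ ε = -(1 / 6)) {N : ℕ} (hN : 0 < N) (a b : ℤ × ℤ → ℂ)
    (k : ℤ) (x : ℤ × ℤ) : ‖sigN N ε a b k x‖ ≤ C1 * (‖a x‖ + ‖b x‖) := by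
  unfold sigN
  refine (norm_add_le _ _).trans ?_
  rw [norm_mul, norm_mul]
  have h1 := (gN_bounds hε hN k).1
  have h2 := (norm_kN_le hN ε k).trans one_le_C1
  have := norm_nonneg (a x); have := norm_nonneg (b x)
  nlinarith

lemma one_le_pi : (1:ℝ) ≤ Real.pi := by linarith [Real.pi_gt_three]

lemma abs_Lh (k : ℤ) : ‖(Lh k : ℂ)‖ = |(k : ℝ)|⁻¹ := by
  rw [Complex.norm_real, Lh, norm_neg, norm_inv, norm_abs_eq_norm, Real.norm_eq_abs]

lemma abs_mul_sig_le (a b : ℤ × ℤ → ℂ) (n : ℤ) (x : ℤ × ℤ) :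
    |(n : ℝ)| * ‖sig a b (n + x.2) x‖ ≤ J x * (‖a x‖ + ‖b x‖) := by
  have hJ : 1 + |(x.2 : ℝ)| ≤ J x := jb_snd_le_J x
  have e1 : |(n : ℝ)| * ‖(Lh (n + x.2) : ℂ)‖ ≤ J x := by
    have t : |(n : ℝ)| ≤ |((n + x.2 : ℤ) : ℝ)| + |(x.2 : ℝ)| := by
      have := abs_sub ((n + x.2 : ℤ) : ℝ) (x.2 : ℝ)
      push_cast at this ⊢
      simpa using this
    have u : |((n + x.2 : ℤ) : ℝ)| * ‖(Lh (n + x.2) : ℂ)‖ ≤ 1 := by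
      rw [abs_Lh]; exact mul_inv_le_one
    have w := abs_Lh_le (n + x.2)
    have := norm_nonneg (Lh (n + x.2) : ℂ)
    have := abs_nonneg (x.2 : ℝ)
    nlinarith
  have e2 : |(n : ℝ)| * ‖(if n + x.2 = 0 then (1:ℂ) else 0)‖ ≤ J x := by
    split_ifs with h
    · have : (n : ℝ) = - x.2 := by have := congrArg (Int.cast (R := ℝ)) h; push_cast at this; linarith
      rw [this, abs_neg]; simp; linarith
    · simp; exact (J_pos x).le
  unfold sig
  calc _ ≤ |(n : ℝ)| * (‖a x‖ * ‖(Lh (n + x.2) : ℂ)‖ + ‖b x‖ * ‖(if n + x.2 = 0 then (1:ℂ) else 0)‖) := by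
        gcongr; refine (norm_add_le _ _).trans ?_; rw [norm_mul, norm_mul]
    _ = ‖a x‖ * (|(n : ℝ)| * ‖(Lh (n + x.2) : ℂ)‖) + ‖b x‖ * (|(n : ℝ)| * ‖(if n + x.2 = 0 then (1:ℂ) else 0)‖) := by ring
    _ ≤ ‖a x‖ * J x + ‖b x‖ * J x := by gcongr
    _ = _ := by ring

lemma abs_add_r_le (n : ℤ) (x : ℤ × ℤ) : |((n + (x.1 + x.2) : ℤ) : ℝ)| ≤ jb n * J x :=
  (abs_le_jb _).trans ((jb_add _ _).trans (by have := jb_pos n; gcongr; exact jb_add_le_J _))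

/-- A common growth constant for `om` and `omN`. -/
noncomputable def Bc : ℝ := 4 * Real.pi ^ 2 * C1

lemma Bc_pos : 0 < Bc := by
  have := one_le_C1; have := Real.pi_pos; unfold Bc; positivity

/-- First-order growth of the symbol of the hypersingular operator. -/
lemma norm_om_le (a1 b1 a2 b2 : ℤ × ℤ → ℂ) (n : ℤ) (x : ℤ × ℤ) :
    ‖om a1 b1 a2 b2 n x‖ ≤ Bc * (jb n * J x ^ 2 * Dx a1 b1 a2 b2 x) := by
  have p1 := one_le_jb n
  have p2 := one_le_J x
  have p3 := one_le_C1
  have p4 := Real.pi_pos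
  have p5 := one_le_pi
  have e : ‖(4 * Real.pi ^ 2 * n * (n + (x.1 + x.2) : ℤ) * sig a1 b1 (n + x.2) x : ℂ)‖
      = 4 * Real.pi ^ 2 * |((n + (x.1 + x.2) : ℤ) : ℝ)| * (|(n : ℝ)| * ‖sig a1 b1 (n + x.2) x‖) := by
    rw [norm_mul, norm_mul, norm_mul]
    simp only [norm_mul, norm_pow, Complex.norm_real, Complex.norm_intCast, Real.norm_eq_abs, abs_of_pos p4]
    simp; ring
  unfold om
  refine (norm_add_le _ _).trans ?_
  rw [e]
  have h1 := abs_mul_sig_le a1 b1 n x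
  have h2 := norm_sig_le a2 b2 (n + x.2) x
  have h3 := abs_add_r_le n x
  have hb : (1:ℝ) ≤ 4 * Real.pi ^ 2 * (jb n * J x ^ 2) := by
    have : (1:ℝ) ≤ jb n * J x ^ 2 := one_le_mul_of_one_le_of_one_le p1 (one_le_pow₀ p2)
    nlinarith
  calc _ ≤ 4 * Real.pi ^ 2 * (jb n * J x) * (J x * (‖a1 x‖ + ‖b1 x‖)) +
        (4 * Real.pi ^ 2 * (jb n * J x ^ 2)) * (‖a2 x‖ + ‖b2 x‖) := by
        refine add_le_add ?_ (h2.trans (le_mul_of_one_le_left (by positivity) hb))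
        gcongr
    _ = 4 * Real.pi ^ 2 * 1 * (jb n * J x ^ 2 * Dx a1 b1 a2 b2 x) := by unfold Dx; ring
    _ ≤ _ := by unfold Bc; have := Dx_nonneg a1 b1 a2 b2 x; gcongr

lemma norm_four_sn (N : ℕ) (n m : ℤ) (z : ℂ) :
    ‖(4 * sn N n * sn N m * z : ℂ)‖ = 4 * |sn N m| * (|sn N n| * ‖z‖) := by
  rw [norm_mul, norm_mul, norm_mul]
  simp only [Complex.norm_real, Real.norm_eq_abs]
  simp; ring

lemma sn_neg (N : ℕ) (n : ℤ) : sn N (-n) = - sn N n := by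
  unfold sn
  rw [← mul_neg, ← Real.sin_neg]; congr 2; push_cast; ring

/-- On the support of `kN`, the factor `sn` only sees the residue. -/
lemma sn_mul_kN {N : ℕ} (hN : 0 < N) (ε : ℝ) (k q : ℤ) :
    |sn N (k - q)| * ‖kN N ε k‖ ≤ Real.pi * |(q : ℝ)| := by
  by_cases h : (N : ℤ) ∣ k
  · obtain ⟨l, hl⟩ := h
    have e : k - q = -q + l * N := by rw [hl]; ring
    rw [e, sn_add_mul hN, sn_neg, abs_neg]
    have h1 := abs_sn_le N q
    have h2 := norm_kN_le hN ε k
    have := abs_nonneg (sn N q); have := norm_nonneg (kN N ε k)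
    nlinarith
  · rw [kN_not hN ε h]; simp
    have := Real.pi_pos; positivity

lemma sn_mul_sigN_le {ε : ℝ} (hε : ε = 1 / 6 ∨ ε = -(1 / 6)) {N : ℕ} (hN : 0 < N) (a b : ℤ × ℤ → ℂ)
    (n : ℤ) (x : ℤ × ℤ) :
    |sn N n| * ‖sigN N ε a b (n + x.2) x‖ ≤ Real.pi * C1 * (J x * (‖a x‖ + ‖b x‖)) := by
  have hJ : 1 + |(x.2 : ℝ)| ≤ J x := jb_snd_le_J x
  have p3 := one_le_C1
  have p4 := Real.pi_pos
  have p5 := one_le_pi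
  have q0 := abs_nonneg (x.2 : ℝ)
  have e1 : |sn N n| * ‖gN N ε (n + x.2)‖ ≤ Real.pi * C1 * J x := by
    obtain ⟨g1, g2⟩ := gN_bounds hε hN (n + x.2)
    have t : |sn N n| ≤ |sn N (n + x.2)| + Real.pi * |(x.2 : ℝ)| := by
      have h := abs_sn_add N (n + x.2) (-x.2)
      rw [sn_neg, abs_neg] at h
      rw [add_neg_cancel_right] at h
      linarith [abs_sn_le N x.2]
    calc _ ≤ (|sn N (n + x.2)| + Real.pi * |(x.2 : ℝ)|) * ‖gN N ε (n + x.2)‖ := by gcongr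
      _ = |sn N (n + x.2)| * ‖gN N ε (n + x.2)‖ + Real.pi * |(x.2 : ℝ)| * ‖gN N ε (n + x.2)‖ := by ring
      _ ≤ 1 * C1 + Real.pi * |(x.2 : ℝ)| * C1 := by rw [one_mul]; gcongr
      _ ≤ Real.pi * C1 + Real.pi * |(x.2 : ℝ)| * C1 := by gcongr
      _ = Real.pi * C1 * (1 + |(x.2 : ℝ)|) := by ring
      _ ≤ _ := by gcongr
  have e2 : |sn N n| * ‖kN N ε (n + x.2)‖ ≤ Real.pi * C1 * J x := by
    have h := sn_mul_kN hN ε (n + x.2) x.2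
    rw [add_sub_cancel_right] at h
    refine h.trans ?_
    rw [mul_assoc]
    gcongr
    nlinarith [one_le_J x]
  unfold sigN
  calc _ ≤ |sn N n| * (‖a x‖ * ‖gN N ε (n + x.2)‖ + ‖b x‖ * ‖kN N ε (n + x.2)‖) := by
        gcongr; refine (norm_add_le _ _).trans ?_; rw [norm_mul, norm_mul]
    _ = ‖a x‖ * (|sn N n| * ‖gN N ε (n + x.2)‖) + ‖b x‖ * (|sn N n| * ‖kN N ε (n + x.2)‖) := by ring
    _ ≤ ‖a x‖ * (Real.pi * C1 * J x) + ‖b x‖ * (Real.pi * C1 * J x) := by gcongr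
    _ = _ := by ring

/-- First-order growth of the discrete symbol, uniformly in `N`. -/
lemma norm_omN_le {ε : ℝ} (hε : ε = 1 / 6 ∨ ε = -(1 / 6)) {N : ℕ} (hN : 0 < N)
    (a1 b1 a2 b2 : ℤ × ℤ → ℂ) (n : ℤ) (x : ℤ × ℤ) :
    ‖omN N ε a1 b1 a2 b2 n x‖ ≤ Bc * (jb n * J x ^ 2 * Dx a1 b1 a2 b2 x) := by
  have p1 := one_le_jb n
  have p2 := one_le_J x
  have p3 := one_le_C1
  have p4 := Real.pi_pos
  have p5 := one_le_pi
  unfold omN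
  refine (norm_add_le _ _).trans ?_
  rw [norm_four_sn]
  have h1 := sn_mul_sigN_le hε hN a1 b1 n x
  have h2 := norm_sigN_le hε hN a2 b2 (n + x.2) x
  have h3 := (abs_sn_le N (n + (x.1 + x.2))).trans (mul_le_mul_of_nonneg_left (abs_add_r_le n x) p4.le)
  have hb : (1:ℝ) ≤ 4 * Real.pi ^ 2 * (jb n * J x ^ 2) := by
    have : (1:ℝ) ≤ jb n * J x ^ 2 := one_le_mul_of_one_le_of_one_le p1 (one_le_pow₀ p2)
    nlinarith
  calc _ ≤ 4 * (Real.pi * (jb n * J x)) * (Real.pi * C1 * (J x * (‖a1 x‖ + ‖b1 x‖))) +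
        (4 * Real.pi ^ 2 * (jb n * J x ^ 2)) * (C1 * (‖a2 x‖ + ‖b2 x‖)) := by
        refine add_le_add ?_ (h2.trans (le_mul_of_one_le_left (by positivity) hb))
        gcongr
    _ = _ := by unfold Dx Bc; ring

/-- `sn` approximates `πn` to second order. -/
lemma abs_sub_sn_le {N : ℕ} (hN : 0 < N) (n : ℤ) :
    |Real.pi * n - sn N n| ≤ Real.pi ^ 3 * |(n : ℝ)| ^ 3 / (N : ℝ) ^ 2 := by
  have hN' : (0:ℝ) < N := by exact_mod_cast hN
  have key : ∀ x : ℝ, |x - Real.sin x| ≤ |x| ^ 3 := by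
    have pos : ∀ x : ℝ, 0 ≤ x → |x - Real.sin x| ≤ |x| ^ 3 := by
      intro x hx
      rw [abs_of_nonneg hx, abs_of_nonneg (by linarith [Real.sin_le hx])]
      rcases hx.eq_or_lt with h0 | h0
      · rw [← h0]; simp
      · have := Real.sin_gt_sub_cube h0
        nlinarith [pow_pos h0 3]
    intro x
    rcases le_total 0 x with h | h
    · exact pos x h
    · have := pos (-x) (by linarith)
      rw [Real.sin_neg, abs_neg, show -x - -Real.sin x = -(x - Real.sin x) by ring, abs_neg] at this
      exact this
  have h := key (Real.pi * n / N)
  have e : Real.pi * n - sn N n = N * (Real.pi * n / N - Real.sin (Real.pi * n / N)) := by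
    unfold sn; field_simp
  rw [e, abs_mul, abs_of_pos hN']
  calc _ ≤ (N : ℝ) * |Real.pi * n / N| ^ 3 := by gcongr
    _ = _ := by rw [abs_div, abs_mul, abs_of_pos hN', abs_of_pos Real.pi_pos]; field_simp

/-! ### Consistency and leading part of the symbols -/

/-- Constant in the second-order symbol estimate. -/
noncomputable def Bd : ℝ := 8 * Bc + 8 * Real.pi ^ 4 + 4 * Real.pi ^ 2 * C0 + C0

lemma Bd_pos : 0 < Bd := by
  have := Bc_pos; have := C0_nonneg; have := Real.pi_pos; unfold Bd; positivity

lemma sn_prod_diff {N : ℕ} (hN : 0 < N) (n k : ℤ) (Q : ℝ) (hn : |(n : ℝ)| ≤ Q) (hk : |(k : ℝ)| ≤ Q) :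
    |Real.pi ^ 2 * n * k - sn N n * sn N k| ≤ 2 * Real.pi ^ 4 * |(n : ℝ)| * Q ^ 3 / (N : ℝ) ^ 2 := by
  have hN' : (0:ℝ) < N := by exact_mod_cast hN
  have p4 := Real.pi_pos
  have hQ : 0 ≤ Q := (abs_nonneg _).trans hn
  have e : Real.pi ^ 2 * n * k - sn N n * sn N k
      = (Real.pi * n - sn N n) * (Real.pi * k) + sn N n * (Real.pi * k - sn N k) := by ring
  rw [e]
  refine (abs_add_le _ _).trans ?_
  rw [abs_mul (Real.pi * n - sn N n), abs_mul (sn N n), abs_mul Real.pi (k:ℝ), abs_of_pos p4]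
  calc _ ≤ (Real.pi ^ 3 * |(n : ℝ)| ^ 3 / (N : ℝ) ^ 2) * (Real.pi * Q) +
        (Real.pi * |(n : ℝ)|) * (Real.pi ^ 3 * Q ^ 3 / (N : ℝ) ^ 2) := by
        have h1 := abs_sub_sn_le hN n
        have h2 := (abs_sub_sn_le hN k).trans (b := _) (c := Real.pi ^ 3 * Q ^ 3 / (N : ℝ) ^ 2) (by gcongr)
        have h3 := abs_sn_le N n
        gcongr
    _ = (Real.pi ^ 4 / (N : ℝ) ^ 2) * (|(n : ℝ)| * |(n : ℝ)| ^ 2 * Q) + (Real.pi ^ 4 / (N : ℝ) ^ 2) * (|(n : ℝ)| * Q ^ 3) := by ring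
    _ ≤ (Real.pi ^ 4 / (N : ℝ) ^ 2) * (|(n : ℝ)| * Q ^ 2 * Q) + (Real.pi ^ 4 / (N : ℝ) ^ 2) * (|(n : ℝ)| * Q ^ 3) := by
        gcongr
    _ = _ := by ring

lemma kN_eq_ite {N : ℕ} (hN : 0 < N) (ε : ℝ) {k : ℤ} (hk : 2 * |(k : ℝ)| < N) :
    kN N ε k = if k = 0 then 1 else 0 := by
  split_ifs with h
  · rw [h, kN_zero hN]
  · refine kN_not hN ε fun hd => h ?_
    refine Int.eq_zero_of_abs_lt_dvd hd ?_
    have : |k| * 2 < (N : ℤ) := by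
      have h1 : |(k : ℝ)| * 2 < N := by linarith
      exact_mod_cast h1
    have := abs_nonneg k
    omega

/-- Second-order consistency of the discrete symbol. -/
lemma om_sub_omN {ε : ℝ} (hε : ε = 1 / 6 ∨ ε = -(1 / 6)) {N : ℕ} (hN : 0 < N)
    (a1 b1 a2 b2 : ℤ × ℤ → ℂ) (n : ℤ) (x : ℤ × ℤ) :
    ‖om a1 b1 a2 b2 n x - omN N ε a1 b1 a2 b2 n x‖ ≤
      Bd * (jb n ^ 3 * J x ^ 4 * Dx a1 b1 a2 b2 x) / (N : ℝ) ^ 2 := by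
  have hN' : (0:ℝ) < N := by exact_mod_cast hN
  have p1 := one_le_jb n
  have p2 := one_le_J x
  have p3 := one_le_C1
  have p4 := Real.pi_pos
  have p6 := C0_nonneg
  have p7 := Bc_pos
  have pD := Dx_nonneg a1 b1 a2 b2 x
  have hq : |((n + x.2 : ℤ) : ℝ)| ≤ jb n * J x :=
    (abs_le_jb _).trans ((jb_add _ _).trans (by gcongr; exact jb_snd_le_J _))
  rcases le_or_gt (N : ℝ) (2 * |((n + x.2 : ℤ) : ℝ)|) with hc | hc
  · have h1 : ‖om a1 b1 a2 b2 n x - omN N ε a1 b1 a2 b2 n x‖ ≤ 2 * Bc * (jb n * J x ^ 2 * Dx a1 b1 a2 b2 x) := by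
      refine (norm_sub_le _ _).trans ?_
      linarith [norm_om_le a1 b1 a2 b2 n x, norm_omN_le hε hN a1 b1 a2 b2 n x]
    refine h1.trans ?_
    rw [le_div_iff₀ (by positivity)]
    have hNn : (N : ℝ) ≤ 2 * (jb n * J x) := by linarith
    calc _ ≤ 2 * Bc * (jb n * J x ^ 2 * Dx a1 b1 a2 b2 x) * (2 * (jb n * J x)) ^ 2 := by gcongr
      _ = 8 * Bc * (jb n ^ 3 * J x ^ 4 * Dx a1 b1 a2 b2 x) := by ring
      _ ≤ _ := by
        gcongr
        unfold Bd
        have : 0 ≤ 8 * Real.pi ^ 4 + 4 * Real.pi ^ 2 * C0 + C0 := by positivity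
        linarith
  · have hk := kN_eq_ite hN ε hc
    have hg := gN_approx hε hN (k := n + x.2) (by linarith)
    have hs : ∀ a b : ℤ × ℤ → ℂ, ‖sig a b (n + x.2) x - sigN N ε a b (n + x.2) x‖ ≤
        C0 * (jb n * J x) / (N : ℝ) ^ 2 * (‖a x‖ + ‖b x‖) := by
      intro a b
      have e : sig a b (n + x.2) x - sigN N ε a b (n + x.2) x = - (a x * (gN N ε (n + x.2) - Lh (n + x.2))) := by
        unfold sig sigN; rw [hk]; ring
      rw [e, norm_neg, norm_mul]
      calc _ ≤ ‖a x‖ * (C0 * |((n + x.2 : ℤ) : ℝ)| / (N : ℝ) ^ 2) := by gcongr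
        _ ≤ (‖a x‖ + ‖b x‖) * (C0 * (jb n * J x) / (N : ℝ) ^ 2) := by
          gcongr
          linarith [norm_nonneg (b x)]
        _ = _ := by ring
    have e : om a1 b1 a2 b2 n x - omN N ε a1 b1 a2 b2 n x =
        ((4 * (Real.pi ^ 2 * n * (n + (x.1 + x.2) : ℤ) - sn N n * sn N (n + (x.1 + x.2))) : ℝ) : ℂ) * sig a1 b1 (n + x.2) x
        + 4 * sn N n * sn N (n + (x.1 + x.2)) * (sig a1 b1 (n + x.2) x - sigN N ε a1 b1 (n + x.2) x)
        + (sig a2 b2 (n + x.2) x - sigN N ε a2 b2 (n + x.2) x) := by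
      unfold om omN; push_cast; ring
    rw [e]
    refine norm_add₃_le.trans ?_
    rw [norm_four_sn, norm_mul, Complex.norm_real, Real.norm_eq_abs, abs_mul]
    have hr := abs_add_r_le n x
    have hn : |(n : ℝ)| ≤ jb n * J x := (abs_le_jb n).trans (le_mul_of_one_le_right (by linarith) p2)
    have t1 := sn_prod_diff hN n (n + (x.1 + x.2)) (jb n * J x) hn hr
    have t2 := abs_mul_sig_le a1 b1 n x
    have t3 := (abs_sn_le N (n + (x.1 + x.2))).trans (mul_le_mul_of_nonneg_left hr p4.le)
    have t4 := (abs_sn_le N n).trans (mul_le_mul_of_nonneg_left (abs_le_jb n) p4.le)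
    have u1 : abs (4:ℝ) * |Real.pi ^ 2 * n * (n + (x.1 + x.2) : ℤ) - sn N n * sn N (n + (x.1 + x.2))| *
        ‖sig a1 b1 (n + x.2) x‖ ≤ 8 * Real.pi ^ 4 * (jb n ^ 3 * J x ^ 4 * (‖a1 x‖ + ‖b1 x‖)) / (N : ℝ) ^ 2 := by
      calc _ ≤ 4 * (2 * Real.pi ^ 4 * |(n : ℝ)| * (jb n * J x) ^ 3 / (N : ℝ) ^ 2) * ‖sig a1 b1 (n + x.2) x‖ := by
            rw [show abs (4:ℝ) = 4 by norm_num]; gcongr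
        _ = (8 * Real.pi ^ 4 * (jb n * J x) ^ 3 / (N : ℝ) ^ 2) * (|(n : ℝ)| * ‖sig a1 b1 (n + x.2) x‖) := by ring
        _ ≤ (8 * Real.pi ^ 4 * (jb n * J x) ^ 3 / (N : ℝ) ^ 2) * (J x * (‖a1 x‖ + ‖b1 x‖)) := by gcongr
        _ = _ := by ring
    have u2 : 4 * |sn N (n + (x.1 + x.2))| * (|sn N n| * ‖sig a1 b1 (n + x.2) x - sigN N ε a1 b1 (n + x.2) x‖)
        ≤ 4 * Real.pi ^ 2 * C0 * (jb n ^ 3 * J x ^ 4 * (‖a1 x‖ + ‖b1 x‖)) / (N : ℝ) ^ 2 := by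
      calc _ ≤ 4 * (Real.pi * (jb n * J x)) * ((Real.pi * jb n) * (C0 * (jb n * J x) / (N : ℝ) ^ 2 * (‖a1 x‖ + ‖b1 x‖))) := by
            gcongr; exact hs a1 b1
        _ = 4 * Real.pi ^ 2 * C0 * (jb n ^ 3 * J x ^ 2 * (‖a1 x‖ + ‖b1 x‖)) / (N : ℝ) ^ 2 := by ring
        _ ≤ _ := by gcongr; norm_num
    have u3 : ‖sig a2 b2 (n + x.2) x - sigN N ε a2 b2 (n + x.2) x‖ ≤
        C0 * (jb n ^ 3 * J x ^ 4 * (‖a2 x‖ + ‖b2 x‖)) / (N : ℝ) ^ 2 := by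
      calc _ ≤ _ := hs a2 b2
        _ = C0 * (jb n ^ 1 * J x ^ 1 * (‖a2 x‖ + ‖b2 x‖)) / (N : ℝ) ^ 2 := by ring
        _ ≤ _ := by gcongr <;> norm_num
    refine (add_le_add (add_le_add u1 u2) u3).trans ?_
    rw [← add_div, ← add_div]
    gcongr
    obtain ⟨P, hP⟩ : ∃ P, P = jb n ^ 3 * J x ^ 4 := ⟨_, rfl⟩
    have hP0 : 0 ≤ P := by rw [hP]; positivity
    rw [← hP]
    have q1 : 0 ≤ P * (‖a1 x‖ + ‖b1 x‖) := by positivity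
    have q2 : 0 ≤ P * (‖a2 x‖ + ‖b2 x‖) := by positivity
    have z1 : 0 ≤ 8 * Bc * (P * (‖a1 x‖ + ‖b1 x‖)) := by positivity
    have z2 : 0 ≤ C0 * (P * (‖a1 x‖ + ‖b1 x‖)) := by positivity
    have z3 : 0 ≤ (8 * Bc + 8 * Real.pi ^ 4 + 4 * Real.pi ^ 2 * C0) * (P * (‖a2 x‖ + ‖b2 x‖)) := by positivity
    have : Bd * (P * Dx a1 b1 a2 b2 x) = 8 * Real.pi ^ 4 * (P * (‖a1 x‖ + ‖b1 x‖)) +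
      4 * Real.pi ^ 2 * C0 * (P * (‖a1 x‖ + ‖b1 x‖)) + C0 * (P * (‖a2 x‖ + ‖b2 x‖)) +
      (8 * Bc * (P * (‖a1 x‖ + ‖b1 x‖)) + C0 * (P * (‖a1 x‖ + ‖b1 x‖)) + 
      (8 * Bc + 8 * Real.pi ^ 4 + 4 * Real.pi ^ 2 * C0) * (P * (‖a2 x‖ + ‖b2 x‖))) := by
      unfold Bd Dx; ring
    rw [this]
    linarith

/-- Constant bounding the compact remainder of the discrete symbol. -/
noncomputable def Be : ℝ := 4 * (32 * C1 + C0 + Real.pi ^ 2) + 4 * Real.pi ^ 2 + C1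

lemma Be_pos : 0 < Be := by
  have := one_le_C1; have := C0_nonneg; have := Real.pi_pos; unfold Be; positivity

lemma Lh_diff (m p : ℤ) (Q : ℝ) (hQ : 0 ≤ Q) :
    (|((m - p : ℤ) : ℝ)| + Q) * (|(m : ℝ)| * ‖(Lh (m - p) - Lh m : ℂ)‖) ≤ |(p : ℝ)| + |(p : ℝ)| * Q + Q := by
  have hp := abs_nonneg (p : ℝ)
  have hpQ := mul_nonneg hp hQ
  have en : ‖(Lh (m - p) - Lh m : ℂ)‖ = abs (|((m - p : ℤ) : ℝ)|⁻¹ - |(m : ℝ)|⁻¹) := by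
    rw [← Complex.ofReal_sub, Complex.norm_real, Real.norm_eq_abs, Lh, Lh, abs_sub_comm]
    congr 1; ring
  rw [en]
  by_cases hm : m = 0
  · simp [hm]; positivity
  have hm' : 0 < |(m : ℝ)| := by positivity
  by_cases hmp : m - p = 0
  · have : m = p := by omega
    subst this
    simp only [sub_self, Int.cast_zero, abs_zero, inv_zero, zero_sub, abs_neg, zero_add, abs_inv, abs_abs]
    rw [mul_inv_cancel₀ hm'.ne']
    linarith
  have hmp' : 1 ≤ |((m - p : ℤ) : ℝ)| := by exact_mod_cast Int.one_le_abs hmp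
  obtain ⟨M, hM⟩ : ∃ M, M = |(m : ℝ)| := ⟨_, rfl⟩
  obtain ⟨T, hT⟩ : ∃ T, T = |((m - p : ℤ) : ℝ)| := ⟨_, rfl⟩
  have hd : |M - T| ≤ |(p : ℝ)| := by
    rw [hM, hT]
    have := abs_abs_sub_abs_le (m : ℝ) ((m - p : ℤ) : ℝ)
    push_cast at this ⊢
    simpa using this
  rw [← hM] at hm' ⊢
  rw [← hT] at hmp' ⊢
  have hT0 : 0 < T := by linarith
  have e : T⁻¹ - M⁻¹ = (M - T) / (T * M) := by field_simp
  rw [e, abs_div, abs_of_pos (mul_pos hT0 hm')]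
  have e2 : (T + Q) * (M * (|M - T| / (T * M))) = |M - T| + Q / T * |M - T| := by field_simp
  rw [e2]
  have : Q / T ≤ Q := div_le_self hQ hmp'
  have : Q / T * |M - T| ≤ Q * |(p : ℝ)| := by gcongr
  linarith

/-- After removal of its leading part the discrete symbol is bounded uniformly in `N`. -/
lemma omN_rem {ε : ℝ} (hε : ε = 1 / 6 ∨ ε = -(1 / 6)) {N : ℕ} (hN : 0 < N)
    (a1 b1 a2 b2 : ℤ × ℤ → ℂ) {m : ℤ} (hm : |(m : ℝ)| ≤ 1 / 2 * N) (x : ℤ × ℤ) :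
    ‖omN N ε a1 b1 a2 b2 (m - (x.1 + x.2)) x - a1 x * (4 * sn N (m - (x.1 + x.2)) * sn N m * gN N ε m)‖
      ≤ Be * (J x ^ 2 * Dx a1 b1 a2 b2 x) := by
  have hN' : (0:ℝ) < N := by exact_mod_cast hN
  have p2 := one_le_J x
  have p3 := one_le_C1
  have p4 := Real.pi_pos
  have p6 := C0_nonneg
  have e1 : m - (x.1 + x.2) + (x.1 + x.2) = m := by ring
  have e2 : m - (x.1 + x.2) + x.2 = m - x.1 := by ring
  have hJ : J x = 1 + |(x.1 : ℝ)| + |(x.1 : ℝ)| * |(x.2 : ℝ)| + |(x.2 : ℝ)| := by unfold J jb; ring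
  have hJ2 : J x ≤ J x ^ 2 := by nlinarith
  have h1p := abs_nonneg (x.1 : ℝ)
  have h2p := abs_nonneg (x.2 : ℝ)
  have h12 := mul_nonneg h1p h2p
  have e : omN N ε a1 b1 a2 b2 (m - (x.1 + x.2)) x - a1 x * (4 * sn N (m - (x.1 + x.2)) * sn N m * gN N ε m)
      = 4 * sn N (m - (x.1 + x.2)) * sn N m * (a1 x * (gN N ε (m - x.1) - gN N ε m)) +
        4 * sn N (m - (x.1 + x.2)) * sn N m * (b1 x * kN N ε (m - x.1)) + sigN N ε a2 b2 (m - x.1) x := by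
    unfold omN; rw [e1, e2]; unfold sigN; ring
  rw [e]
  refine norm_add₃_le.trans ?_
  rw [norm_four_sn, norm_four_sn, norm_mul, norm_mul]
  have k1 : |sn N (m - (x.1 + x.2))| * |sn N m| * ‖kN N ε (m - x.1)‖ ≤ Real.pi ^ 2 * J x ^ 2 := by
    have u1 := sn_mul_kN hN ε (m - x.1) x.2
    have u1' : m - x.1 - x.2 = m - (x.1 + x.2) := by ring
    rw [u1'] at u1
    by_cases hd : (N : ℤ) ∣ m - x.1
    · obtain ⟨l, hl⟩ := hd
      have em : m = x.1 + l * N := by linarith [mul_comm l (N : ℤ)]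
      have u2 : |sn N m| ≤ Real.pi * |(x.1 : ℝ)| := by
        rw [em, sn_add_mul hN]; exact abs_sn_le N x.1
      calc _ = |sn N m| * (|sn N (m - (x.1 + x.2))| * ‖kN N ε (m - x.1)‖) := by ring
        _ ≤ (Real.pi * |(x.1 : ℝ)|) * (Real.pi * |(x.2 : ℝ)|) := by gcongr
        _ = Real.pi ^ 2 * (|(x.1 : ℝ)| * |(x.2 : ℝ)|) := by ring
        _ ≤ _ := by gcongr; linarith
    · rw [kN_not hN ε hd]; simp; positivity
  have g1 : |sn N (m - (x.1 + x.2))| * |sn N m| * ‖gN N ε (m - x.1) - gN N ε m‖ ≤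
      (32 * C1 + C0 + Real.pi ^ 2) * J x ^ 2 := by
    have s1 := abs_sn_le_N N (m - (x.1 + x.2))
    have s2 := abs_sn_le_N N m
    rcases lt_or_ge (N : ℝ) (4 * |(x.1 : ℝ)|) with hc | hc
    · have b1 : ‖gN N ε (m - x.1) - gN N ε m‖ ≤ 2 * C1 := by
        refine (norm_sub_le _ _).trans ?_
        linarith [(gN_bounds hε hN (m - x.1)).1, (gN_bounds hε hN m).1]
      have hNJ : (N : ℝ) ≤ 4 * J x := by nlinarith
      calc _ ≤ (4 * J x) * (4 * J x) * (2 * C1) := by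
            gcongr
            · exact s1.trans hNJ
            · exact s2.trans hNJ
        _ = 32 * C1 * J x ^ 2 := by ring
        _ ≤ _ := by gcongr; nlinarith [sq_nonneg Real.pi]
    · have hmp : |((m - x.1 : ℤ) : ℝ)| ≤ 3 / 4 * N := by
        push_cast
        have := abs_sub (m : ℝ) (x.1 : ℝ)
        linarith
      have hl := gN_lip hε hN hmp (show |(m : ℝ)| ≤ 3 / 4 * N by linarith)
      have b1 : ‖gN N ε (m - x.1) - gN N ε m‖ ≤ C0 * |(x.1 : ℝ)| / (N : ℝ) ^ 2 + ‖(Lh (m - x.1) - Lh m : ℂ)‖ := by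
        have ea : |((m - x.1 : ℤ) : ℝ) - m| = |(x.1 : ℝ)| := by
          push_cast; rw [show (m : ℝ) - x.1 - m = - x.1 by ring, abs_neg]
        rw [ea] at hl
        have : gN N ε (m - x.1) - gN N ε m = ((gN N ε (m - x.1) - Lh (m - x.1)) - (gN N ε m - Lh m)) + (Lh (m - x.1) - Lh m) := by ring
        rw [this]
        exact (norm_add_le _ _).trans (by linarith)
      have t1 : |sn N (m - (x.1 + x.2))| ≤ Real.pi * (|((m - x.1 : ℤ) : ℝ)| + |(x.2 : ℝ)|) := by
        refine (abs_sn_le N _).trans ?_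
        gcongr
        have := abs_sub ((m - x.1 : ℤ) : ℝ) (x.2 : ℝ)
        push_cast at this ⊢
        rwa [show (m : ℝ) - (x.1 + x.2) = m - x.1 - x.2 by ring]
      have t2 := abs_sn_le N m
      have t3 := Lh_diff m x.1 |(x.2 : ℝ)| h2p
      calc _ ≤ |sn N (m - (x.1 + x.2))| * |sn N m| * (C0 * |(x.1 : ℝ)| / (N : ℝ) ^ 2 + ‖(Lh (m - x.1) - Lh m : ℂ)‖) := by gcongr
        _ = |sn N (m - (x.1 + x.2))| * |sn N m| * (C0 * |(x.1 : ℝ)| / (N : ℝ) ^ 2) +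
          |sn N (m - (x.1 + x.2))| * (|sn N m| * ‖(Lh (m - x.1) - Lh m : ℂ)‖) := by ring
        _ ≤ (N : ℝ) * N * (C0 * |(x.1 : ℝ)| / (N : ℝ) ^ 2) +
          (Real.pi * (|((m - x.1 : ℤ) : ℝ)| + |(x.2 : ℝ)|)) * ((Real.pi * |(m : ℝ)|) * ‖(Lh (m - x.1) - Lh m : ℂ)‖) := by gcongr
        _ = C0 * |(x.1 : ℝ)| + Real.pi ^ 2 * ((|((m - x.1 : ℤ) : ℝ)| + |(x.2 : ℝ)|) * (|(m : ℝ)| * ‖(Lh (m - x.1) - Lh m : ℂ)‖)) := by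
          field_simp
        _ ≤ C0 * J x ^ 2 + Real.pi ^ 2 * J x ^ 2 := by
          gcongr
          · linarith
          · linarith
        _ ≤ _ := by nlinarith [mul_nonneg (show (0:ℝ) ≤ 32 * C1 by linarith) (sq_nonneg (J x))]
  have h2 := norm_sigN_le hε hN a2 b2 (m - x.1) x
  have w1 : 4 * |sn N m| * (|sn N (m - (x.1 + x.2))| * (‖a1 x‖ * ‖gN N ε (m - x.1) - gN N ε m‖))
      ≤ 4 * ‖a1 x‖ * ((32 * C1 + C0 + Real.pi ^ 2) * J x ^ 2) := by
    calc _ = 4 * ‖a1 x‖ * (|sn N (m - (x.1 + x.2))| * |sn N m| * ‖gN N ε (m - x.1) - gN N ε m‖) := by ring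
      _ ≤ _ := by gcongr
  have w2 : 4 * |sn N m| * (|sn N (m - (x.1 + x.2))| * (‖b1 x‖ * ‖kN N ε (m - x.1)‖))
      ≤ 4 * ‖b1 x‖ * (Real.pi ^ 2 * J x ^ 2) := by
    calc _ = 4 * ‖b1 x‖ * (|sn N (m - (x.1 + x.2))| * |sn N m| * ‖kN N ε (m - x.1)‖) := by ring
      _ ≤ _ := by gcongr
  have w3 : ‖sigN N ε a2 b2 (m - x.1) x‖ ≤ C1 * (J x ^ 2 * (‖a2 x‖ + ‖b2 x‖)) := by
    refine h2.trans ?_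
    gcongr
    exact le_mul_of_one_le_left (by positivity) (one_le_pow₀ p2)
  refine (add_le_add (add_le_add w1 w2) w3).trans ?_
  have c1 : 4 * (32 * C1 + C0 + Real.pi ^ 2) ≤ Be := by unfold Be; nlinarith [sq_nonneg Real.pi]
  have c2 : 4 * Real.pi ^ 2 ≤ Be := by unfold Be; nlinarith [sq_nonneg Real.pi]
  have c3 : C1 ≤ Be := by unfold Be; nlinarith [sq_nonneg Real.pi]
  calc _ = 4 * (32 * C1 + C0 + Real.pi ^ 2) * (J x ^ 2 * ‖a1 x‖) + 4 * Real.pi ^ 2 * (J x ^ 2 * ‖b1 x‖)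
        + C1 * (J x ^ 2 * (‖a2 x‖ + ‖b2 x‖)) := by ring
    _ ≤ Be * (J x ^ 2 * ‖a1 x‖) + Be * (J x ^ 2 * ‖b1 x‖) + Be * (J x ^ 2 * (‖a2 x‖ + ‖b2 x‖)) := by gcongr
    _ = _ := by unfold Dx; ring

/-! ### The diagonal identity and discrete ellipticity -/

/-- Reindexing `(m, x) ↦ (m - (x.1 + x.2), x)`: the output frequency `m` becomes the outer index. -/
def shiftE : ℤ × (ℤ × ℤ) ≃ ℤ × (ℤ × ℤ) where
  toFun z := (z.1 - (z.2.1 + z.2.2), z.2)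
  invFun z := (z.1 + (z.2.1 + z.2.2), z.2)
  left_inv z := by simp
  right_inv z := by simp

/-- Reindexing `(r, q) ↦ (r - q, q)`, which groups pairs by their sum. -/
def sumE : ℤ × ℤ ≃ ℤ × ℤ where
  toFun z := (z.1 - z.2, z.2)
  invFun z := (z.1 + z.2, z.2)
  left_inv z := by simp
  right_inv z := by simp

/-- Since `A(s,s)` is constant, the anti-diagonal sums of the Fourier coefficients of `A` vanish
except at frequency `0`. -/
lemma diag_hasSum {A : ℝ → ℝ → ℂ} (hA : SPK A) {α : ℂ} (hd : ∀ s, A s s = α) (f : ℤ → ℂ)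
    (hf : ∃ C, ∀ n, ‖f n‖ ≤ C) :
    HasSum (fun x : ℤ × ℤ => kerA A x * f (x.1 + x.2)) (Complex.I / (2 * Real.pi) * α * f 0) := by
  obtain ⟨C, hC⟩ := hf
  have hs0 : Summable (fun x : ℤ × ℤ => ‖c2 A x.1 x.2‖) := hA.RD2.summable_norm
  have hs : Summable (fun z : ℤ × ℤ => ‖c2 A (z.1 - z.2) z.2‖) := sumE.summable_iff.2 hs0
  obtain ⟨y, hy⟩ : ∃ y : ℤ → ℂ, y = fun r => ∑' q, c2 A (r - q) q := ⟨_, rfl⟩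
  have hfib : ∀ r, HasSum (fun q => c2 A (r - q) q) (y r) := fun r => by
    rw [hy]; exact (hs.of_norm.prod_factor r).hasSum
  have hyn : Summable (fun r => ‖y r‖) := by
    have h1 := hs.prod
    refine Summable.of_nonneg_of_le (fun _ => norm_nonneg _) (fun r => ?_) h1
    rw [hy]; exact norm_tsum_le_tsum_norm (hs.prod_factor r)
  have hfubini : ∀ g : ℤ → ℂ, ∀ S, HasSum (fun x : ℤ × ℤ => c2 A x.1 x.2 * g (x.1 + x.2)) S →
      HasSum (fun r => y r * g r) S := fun g S h => by
    have h1 := sumE.hasSum_iff.2 h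
    exact h1.prod_fiberwise fun r => ((hfib r).mul_right (g r)).congr_fun fun q => by
      simp [sumE]
  have hser : ser y = fun _ => α := funext fun s => by
    have := hfubini (fun r => ee r s) (A s s) ((hA.hasSum s s).congr_fun fun x => by
      rw [ee_add_left])
    rw [← hd s]; exact this.tsum_eq
  have hyv : ∀ r, y r = if r = 0 then α else 0 := fun r => by
    rw [← fc_ser hyn r, hser, fc_eq]
    rw [intervalIntegral.integral_const_mul, integral_ee]
    simp
  have hsm : Summable (fun x : ℤ × ℤ => c2 A x.1 x.2 * f (x.1 + x.2)) := by
    refine Summable.of_norm_bounded (hs0.mul_right C) fun x => ?_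
    rw [norm_mul]
    exact mul_le_mul_of_nonneg_left (hC _) (norm_nonneg _)
  have h2 := hfubini f _ hsm.hasSum
  have h3 : HasSum (fun r => y r * f r) (α * f 0) := by
    have := hasSum_single (f := fun r => y r * f r) 0 (fun r hr => by simp [hyv, hr])
    simpa [hyv] using this
  have h4 := hsm.hasSum
  rw [h2.unique h3] at h4
  have h5 := h4.mul_left (Complex.I / (2 * Real.pi))
  rw [mul_assoc]
  exact h5.congr_fun fun x => by unfold kerA; ring

/-- A rapidly decaying sequence annihilated by the symbol of `W` is the Fourier transform of an
element of the kernel of `W`. -/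
lemma symbol_inj {A1 K1 A2 K2 : ℝ → ℝ → ℂ} (hA1 : SPK A1) (hK1 : SPK K1) (hA2 : SPK A2) (hK2 : SPK K2)
    (hinj : ∀ φ : ℝ → ℂ, ContDiff ℝ (⊤ : ℕ∞) φ → Function.Periodic φ 1 →
      (∀ s, Wop (logKer A1 K1) (logKer A2 K2) φ s = 0) → ∀ s, φ s = 0)
    (y : ℤ → ℂ) (hy : RD1 y)
    (h0 : ∀ m : ℤ, HasSum (fun x : ℤ × ℤ =>
      om (kerA A1) (kerB A1 K1) (kerA A2) (kerB A2 K2) (m - (x.1 + x.2)) x * y (m - (x.1 + x.2))) 0)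
    (n : ℤ) : y n = 0 := by
  have hW : ∀ s, Wop (logKer A1 K1) (logKer A2 K2) (ser y) s = 0 := fun s => by
    have h1 := shiftE.hasSum_iff.2 (Wop_hasSum hA1 hK1 hA2 hK2 hy s)
    have h2 := h1.prod_fiberwise (g := fun _ => (0:ℂ)) fun m => by
      have h3 := (h0 m).mul_right (ee m s)
      rw [zero_mul] at h3
      exact h3.congr_fun fun x => by
        simp only [Function.comp, shiftE, Equiv.coe_fn_mk, sub_add_cancel]; ring
    exact h2.unique hasSum_zero
  have hz := hinj (ser y) (contDiff_ser hy) (periodic_ser y) hW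
  rw [← fc_ser hy.summable_norm n, fc_eq]
  simp [hz]

/-- Discrete ellipticity: the leading part of the system at output frequency `m` reduces, by the
anti-diagonal identity `hdg`, to the scalar `4 β sn(m)² gN(m) X(m)`, whose modulus is at least
`16 ‖β‖ |m| ‖X m‖`. The remainder is bounded by `omN_rem`. -/
lemma key_ineq {ε : ℝ} (hε : ε = 1 / 6 ∨ ε = -(1 / 6)) {N : ℕ} (hN : 0 < N)
    {a1 b1 a2 b2 : ℤ × ℤ → ℂ} (h1 : RD2 a1) (h2 : RD2 b1) (h3 : RD2 a2) (h4 : RD2 b2) {β : ℂ}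
    (hdg : ∀ f : ℤ → ℂ, (∃ C, ∀ n, ‖f n‖ ≤ C) →
      HasSum (fun x : ℤ × ℤ => a1 x * f (x.1 + x.2)) (β * f 0))
    {X : ℤ → ℂ} (hX : ∃ C, ∀ n, ‖X n‖ ≤ C) {m : ℤ} (hm : |(m : ℝ)| ≤ 1 / 2 * N) {S : ℂ}
    (hS : HasSum (fun x : ℤ × ℤ => omN N ε a1 b1 a2 b2 (m - (x.1 + x.2)) x * X (m - (x.1 + x.2))) S) :
    16 * ‖β‖ * (|(m : ℝ)| * ‖X m‖) ≤
      ‖S‖ + ∑' x : ℤ × ℤ, Be * (J x ^ 2 * Dx a1 b1 a2 b2 x) * ‖X (m - (x.1 + x.2))‖ := by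
  obtain ⟨C, hC⟩ := hX
  have hC0 : 0 ≤ C := (norm_nonneg _).trans (hC 0)
  have hsd := summable_Dx h1 h2 h3 h4 2
  have hb : ∀ x, 0 ≤ Be * (J x ^ 2 * Dx a1 b1 a2 b2 x) := fun x => by
    have := Be_pos; have := J_pos x; have := Dx_nonneg a1 b1 a2 b2 x; positivity
  have hs1 : Summable (fun x : ℤ × ℤ => Be * (J x ^ 2 * Dx a1 b1 a2 b2 x) * ‖X (m - (x.1 + x.2))‖) :=
    Summable.of_nonneg_of_le (fun x => mul_nonneg (hb x) (norm_nonneg _))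
      (fun x => mul_le_mul_of_nonneg_left (hC _) (hb x)) ((hsd.mul_left Be).mul_right C)
  have hA := hdg (fun r => 4 * sn N (m - r) * sn N m * gN N ε m * X (m - r))
    ⟨4 * N * N * ‖gN N ε m‖ * C, fun r => by
      simp only [norm_mul, Complex.norm_real, Real.norm_eq_abs, Complex.norm_ofNat]
      have e1 := abs_sn_le_N N (m - r)
      have e2 := abs_sn_le_N N m
      have e3 := hC (m - r)
      gcongr⟩
  have hB := hS.sub hA
  have hle : ‖S - β * (4 * sn N (m - 0) * sn N m * gN N ε m * X (m - 0))‖ ≤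
      ∑' x : ℤ × ℤ, Be * (J x ^ 2 * Dx a1 b1 a2 b2 x) * ‖X (m - (x.1 + x.2))‖ := by
    rw [← hB.tsum_eq]
    refine tsum_of_norm_bounded hs1.hasSum fun x => ?_
    have e : omN N ε a1 b1 a2 b2 (m - (x.1 + x.2)) x * X (m - (x.1 + x.2)) -
        a1 x * (4 * sn N (m - (x.1 + x.2)) * sn N m * gN N ε m * X (m - (x.1 + x.2)))
        = (omN N ε a1 b1 a2 b2 (m - (x.1 + x.2)) x -
          a1 x * (4 * sn N (m - (x.1 + x.2)) * sn N m * gN N ε m)) * X (m - (x.1 + x.2)) := by ring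
    rw [e, norm_mul]
    exact mul_le_mul_of_nonneg_right (omN_rem hε hN a1 b1 a2 b2 hm x) (norm_nonneg _)
  rw [sub_zero] at hle
  have hlow : 16 * ‖β‖ * (|(m : ℝ)| * ‖X m‖) ≤ ‖β * (4 * sn N m * sn N m * gN N ε m * X m)‖ := by
    simp only [norm_mul, Complex.norm_real, Real.norm_eq_abs, Complex.norm_ofNat]
    have e1 := sn_lower hN hm
    have e2 := gN_lower hε hN hm
    have e3 : 16 * |(m : ℝ)| ≤ 4 * |sn N m| * |sn N m| * ‖gN N ε m‖ := by
      rcases eq_or_ne m 0 with h | h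
      · simp [h]; positivity
      · have hp : 0 < |(m : ℝ)| := by simpa using h
        calc 16 * |(m : ℝ)| = 4 * (2 * |(m : ℝ)|) * (2 * |(m : ℝ)|) * |(m : ℝ)|⁻¹ := by
              field_simp; norm_num
          _ ≤ _ := by gcongr
    calc _ = ‖β‖ * (16 * |(m : ℝ)|) * ‖X m‖ := by ring
      _ ≤ ‖β‖ * (4 * |sn N m| * |sn N m| * ‖gN N ε m‖) * ‖X m‖ := by gcongr
      _ = _ := by ring
  refine hlow.trans ?_
  have := norm_sub_norm_le (β * (4 * sn N m * sn N m * gN N ε m * X m)) S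
  rw [norm_sub_rev] at this
  linarith

/-! ### Stability -/

/-- An `N`-periodic sequence attains its maximal modulus at a frequency in `[-N/2, N/2]`. -/
lemma exists_max_periodic {N : ℕ} (hN : 0 < N) (X : ℤ → ℂ) (hX : ∀ n l : ℤ, X (n + l * N) = X n) :
    ∃ m : ℤ, |(m : ℝ)| ≤ 1 / 2 * N ∧ ∀ n, ‖X n‖ ≤ ‖X m‖ := by
  obtain ⟨m0, -, h0⟩ := (Finset.Icc (-(N:ℤ)) N).exists_max_image (fun n => ‖X n‖) ⟨0, by simp⟩
  obtain ⟨l, m, hk, hm⟩ := exists_reduce hN m0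
  refine ⟨m, hm, fun n => ?_⟩
  obtain ⟨l', m', hk', hm'⟩ := exists_reduce hN n
  rw [hk'] 
  rw [hX, ← hX m l, ← hk]
  refine h0 m' ?_
  have h2 : |(m' : ℝ)| ≤ N := hm'.trans (by have : (0:ℝ) ≤ N := by positivity
                                            linarith)
  have h3 : |m'| ≤ (N : ℤ) := by exact_mod_cast h2
  rw [Finset.mem_Icc]; exact abs_le.1 h3

/-- Elliptic regularity: the ellipticity estimate gains one power of `⟨m⟩` at a time. -/
lemma RD1_bootstrap {a1 b1 a2 b2 : ℤ × ℤ → ℂ} (h1 : RD2 a1) (h2 : RD2 b1) (h3 : RD2 a2) (h4 : RD2 b2)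
    {c : ℝ} (hc : 0 < c) {y : ℤ → ℂ} (hy : ∀ n, ‖y n‖ ≤ 1)
    (h : ∀ m : ℤ, c * (|(m : ℝ)| * ‖y m‖) ≤
      ∑' x : ℤ × ℤ, Be * (J x ^ 2 * Dx a1 b1 a2 b2 x) * ‖y (m - (x.1 + x.2))‖) : RD1 y := by
  intro k
  induction k with
  | zero => exact ⟨1, fun n => by simpa using hy n⟩
  | succ k ih =>
    obtain ⟨C, hC⟩ := ih
    have hsd := summable_Dx h1 h2 h3 h4 (k + 2)
    obtain ⟨S, hS⟩ := hsd
    refine ⟨C + Be * S * C / c, fun m => ?_⟩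
    have hb : ∀ x, 0 ≤ Be * (J x ^ 2 * Dx a1 b1 a2 b2 x) := fun x => by
      have := Be_pos; have := J_pos x; have := Dx_nonneg a1 b1 a2 b2 x; positivity
    have hs0 : Summable (fun x : ℤ × ℤ => Be * (J x ^ 2 * Dx a1 b1 a2 b2 x) * ‖y (m - (x.1 + x.2))‖) :=
      Summable.of_nonneg_of_le (fun x => mul_nonneg (hb x) (norm_nonneg _))
        (fun x => mul_le_mul_of_nonneg_left (hy _) (hb x))
        (((summable_Dx h1 h2 h3 h4 2).mul_left Be).mul_right 1)
    have key : jb m ^ k * ∑' x : ℤ × ℤ, Be * (J x ^ 2 * Dx a1 b1 a2 b2 x) * ‖y (m - (x.1 + x.2))‖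
        ≤ Be * S * C := by
      rw [← tsum_mul_left, ← ((hS.mul_left Be).mul_right C).tsum_eq]
      refine (hs0.mul_left _).tsum_le_tsum (fun x => ?_) ((hS.mul_left Be).mul_right C).summable
      have e1 : jb m ≤ jb (m - (x.1 + x.2)) * J x := by
        calc jb m = jb ((m - (x.1 + x.2)) + (x.1 + x.2)) := by congr 1; ring
          _ ≤ jb (m - (x.1 + x.2)) * jb (x.1 + x.2) := jb_add _ _
          _ ≤ _ := mul_le_mul_of_nonneg_left (jb_add_le_J x) (jb_pos _).le
      have e2 : jb m ^ k ≤ jb (m - (x.1 + x.2)) ^ k * J x ^ k := by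
        rw [← mul_pow]; exact pow_le_pow_left₀ (jb_pos _).le e1 k
      have hD := Dx_nonneg a1 b1 a2 b2 x
      have hB := Be_pos
      have hJ := J_pos x
      calc _ ≤ (jb (m - (x.1 + x.2)) ^ k * J x ^ k) *
            (Be * (J x ^ 2 * Dx a1 b1 a2 b2 x) * ‖y (m - (x.1 + x.2))‖) :=
            mul_le_mul_of_nonneg_right e2 (mul_nonneg (hb x) (norm_nonneg _))
        _ = Be * (J x ^ (k + 2) * Dx a1 b1 a2 b2 x) * (jb (m - (x.1 + x.2)) ^ k * ‖y (m - (x.1 + x.2))‖) := by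
            ring
        _ ≤ _ := mul_le_mul_of_nonneg_left (hC _) (by positivity)
    have h5 : c * (jb m ^ k * (|(m : ℝ)| * ‖y m‖)) ≤ Be * S * C := by
      refine le_trans ?_ key
      calc _ = jb m ^ k * (c * (|(m : ℝ)| * ‖y m‖)) := by ring
        _ ≤ _ := mul_le_mul_of_nonneg_left (h m) (pow_nonneg (jb_pos _).le _)
    have h6 : jb m ^ k * (|(m : ℝ)| * ‖y m‖) ≤ Be * S * C / c := by
      rw [le_div_iff₀ hc]; linarith
    have h7 := hC m
    calc jb m ^ (k + 1) * ‖y m‖ = jb m ^ k * ‖y m‖ + jb m ^ k * (|(m : ℝ)| * ‖y m‖) := by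
          rw [pow_succ]; nth_rewrite 2 [jb]; ring
      _ ≤ _ := by linarith

lemma omN_tendsto {ε : ℝ} (hε : ε = 1 / 6 ∨ ε = -(1 / 6)) (a1 b1 a2 b2 : ℤ × ℤ → ℂ) (n : ℤ) (x : ℤ × ℤ)
    {Nk : ℕ → ℕ} (hNk : Tendsto Nk atTop atTop) (hpos : ∀ k, 0 < Nk k) :
    Tendsto (fun k => omN (Nk k) ε a1 b1 a2 b2 n x) atTop (𝓝 (om a1 b1 a2 b2 n x)) := by
  rw [tendsto_iff_norm_sub_tendsto_zero]
  have hz : Tendsto (fun k => Bd * (jb n ^ 3 * J x ^ 4 * Dx a1 b1 a2 b2 x) / ((Nk k : ℕ) : ℝ) ^ 2) atTop (𝓝 0) := by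
    refine Tendsto.div_atTop tendsto_const_nhds ?_
    exact (tendsto_pow_atTop (two_ne_zero)).comp (tendsto_natCast_atTop_atTop.comp hNk)
  refine squeeze_zero (fun _ => norm_nonneg _) (fun k => ?_) hz
  rw [norm_sub_rev]
  exact om_sub_omN hε (hpos k) a1 b1 a2 b2 n x

lemma jb_mul_le (m : ℤ) (x : ℤ × ℤ) (d : ℝ) (hd : 0 ≤ d) :
    Bc * (jb (m - (x.1 + x.2)) * J x ^ 2 * d) ≤ Bc * jb m * (J x ^ 3 * d) := by
  have e1 : jb (m - (x.1 + x.2)) ≤ jb m * J x :=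
    (jb_sub _ _).trans (mul_le_mul_of_nonneg_left (jb_add_le_J x) (jb_pos _).le)
  have := Bc_pos
  have := J_pos x
  calc _ ≤ Bc * ((jb m * J x) * J x ^ 2 * d) := by gcongr
    _ = _ := by ring

/-- Uniform stability of the Nyström symbol in the maximum norm of the discrete Fourier
coefficients.  A sequence of counterexamples would, by compactness of the unit ball for pointwise
convergence and by the ellipticity estimate `key_ineq`, produce a nonzero rapidly decaying sequence
annihilated by the limiting symbol. -/
lemma stability {ε : ℝ} (hε : ε = 1 / 6 ∨ ε = -(1 / 6))
    {a1 b1 a2 b2 : ℤ × ℤ → ℂ} (h1 : RD2 a1) (h2 : RD2 b1) (h3 : RD2 a2) (h4 : RD2 b2) {β : ℂ} (hβ : β ≠ 0)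
    (hdg : ∀ f : ℤ → ℂ, (∃ C, ∀ n, ‖f n‖ ≤ C) →
      HasSum (fun x : ℤ × ℤ => a1 x * f (x.1 + x.2)) (β * f 0))
    (hin : ∀ y : ℤ → ℂ, RD1 y → (∀ m : ℤ, HasSum (fun x : ℤ × ℤ =>
      om a1 b1 a2 b2 (m - (x.1 + x.2)) x * y (m - (x.1 + x.2))) 0) → ∀ n, y n = 0) :
    ∃ C > (0:ℝ), ∃ N0 : ℕ, ∀ N : ℕ, N0 ≤ N → 0 < N → ∀ X : ℤ → ℂ, (∀ n l : ℤ, X (n + l * N) = X n) →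
      ∀ (R : ℤ → ℂ) (ρ : ℝ), (∀ m : ℤ, HasSum (fun x : ℤ × ℤ =>
        omN N ε a1 b1 a2 b2 (m - (x.1 + x.2)) x * X (m - (x.1 + x.2))) (R m)) →
        (∀ m, ‖R m‖ ≤ ρ) → ∀ n, ‖X n‖ ≤ C * ρ := by
  by_contra hcon
  push Not at hcon
  have hk : ∀ k : ℕ, ∃ (N : ℕ) (X : ℤ → ℂ) (S : ℤ → ℂ) (m : ℤ), k + 1 ≤ N ∧ (∀ n, ‖X n‖ ≤ 1) ∧
      ‖X m‖ = 1 ∧ |(m : ℝ)| ≤ 1 / 2 * N ∧ (∀ m : ℤ, HasSum (fun x : ℤ × ℤ =>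
        omN N ε a1 b1 a2 b2 (m - (x.1 + x.2)) x * X (m - (x.1 + x.2))) (S m)) ∧
      ∀ m, ‖S m‖ ≤ 1 / ((k : ℝ) + 1) := by
    intro k
    obtain ⟨N, hN0, hN, X, hX, R, ρ, hR, hρ, n, hn⟩ := hcon ((k : ℝ) + 1) (by positivity) (k + 1)
    obtain ⟨m, hm, hmax⟩ := exists_max_periodic hN X hX
    have hρ0 : 0 ≤ ρ := (norm_nonneg _).trans (hρ 0)
    have hXm : ((k : ℝ) + 1) * ρ < ‖X m‖ := hn.trans_le (hmax n)
    have hp : 0 < ‖X m‖ := lt_of_le_of_lt (by positivity) hXm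
    have hpc : (‖X m‖ : ℂ) ≠ 0 := by exact_mod_cast hp.ne'
    have hnn : ∀ z : ℂ, ‖z / (‖X m‖ : ℂ)‖ = ‖z‖ / ‖X m‖ := fun z => by simp
    refine ⟨N, fun n => X n / (‖X m‖ : ℂ), fun n => R n / (‖X m‖ : ℂ), m, hN0, fun n => ?_, ?_, hm,
      fun m' => ?_, fun m' => ?_⟩
    · rw [hnn, div_le_one hp]; exact hmax n
    · rw [hnn, div_self hp.ne']
    · exact ((hR m').div_const _).congr_fun fun x => by ring
    · rw [hnn, div_le_div_iff₀ hp (by positivity)]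
      have := mul_le_mul_of_nonneg_right (hρ m') (by positivity : (0:ℝ) ≤ k + 1)
      linarith
  choose N X S m hNk hX1 hXm hm hS hS1 using hk
  have hNpos : ∀ k, 0 < N k := fun k => by have := hNk k; omega
  have hsd := summable_Dx h1 h2 h3 h4
  have hb : ∀ x, 0 ≤ Be * (J x ^ 2 * Dx a1 b1 a2 b2 x) := fun x => by
    have := Be_pos; have := J_pos x; have := Dx_nonneg a1 b1 a2 b2 x; positivity
  have hβ' : 0 < 16 * ‖β‖ := by have := norm_pos_iff.2 hβ; positivity
  obtain ⟨T, hT⟩ : ∃ T, T = ∑' x : ℤ × ℤ, Be * (J x ^ 2 * Dx a1 b1 a2 b2 x) := ⟨_, rfl⟩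
  have hkey : ∀ k (n : ℤ), |(n : ℝ)| ≤ 1 / 2 * N k → 16 * ‖β‖ * (|(n : ℝ)| * ‖X k n‖) ≤
      ‖S k n‖ + ∑' x : ℤ × ℤ, Be * (J x ^ 2 * Dx a1 b1 a2 b2 x) * ‖X k (n - (x.1 + x.2))‖ :=
    fun k n hn => key_ineq hε (hNpos k) h1 h2 h3 h4 hdg ⟨1, hX1 k⟩ hn (hS k n)
  -- the maximizing frequencies stay bounded
  obtain ⟨M, hM⟩ := exists_nat_ge ((1 + T) / (16 * ‖β‖))
  have hmM : ∀ k, |m k| ≤ (M : ℤ) := fun k => by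
    have e1 := hkey k (m k) (hm k)
    rw [hXm k, mul_one] at e1
    have e2 : ∑' x : ℤ × ℤ, Be * (J x ^ 2 * Dx a1 b1 a2 b2 x) * ‖X k (m k - (x.1 + x.2))‖ ≤ T := by
      rw [hT]
      refine Summable.tsum_le_tsum (fun x => mul_le_of_le_one_right (hb x) (hX1 k _)) ?_ ((hsd 2).mul_left Be)
      exact Summable.of_nonneg_of_le (fun x => mul_nonneg (hb x) (norm_nonneg _))
        (fun x => mul_le_of_le_one_right (hb x) (hX1 k _)) ((hsd 2).mul_left Be)
    have e3 : ‖S k (m k)‖ ≤ 1 := (hS1 k _).trans (by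
      rw [div_le_one (by positivity)]; linarith [(Nat.cast_nonneg k : (0:ℝ) ≤ k)])
    have e4 : |(m k : ℝ)| ≤ (1 + T) / (16 * ‖β‖) := by
      rw [le_div_iff₀ hβ']; linarith
    have e5 := e4.trans hM
    exact_mod_cast e5
  -- Tychonoff: pass to a subsequence converging pointwise, along which the maximizing frequencies converge
  have hcomp : IsCompact ((Set.univ.pi fun _ : ℤ => Metric.closedBall (0:ℂ) 1) ×ˢ Set.Icc (-(M:ℤ)) M) :=
    (isCompact_univ_pi fun _ => isCompact_closedBall _ _).prod isCompact_Icc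
  obtain ⟨⟨y, m0⟩, hy, f, hf, hlim⟩ := hcomp.tendsto_subseq (x := fun k => (X k, m k)) fun k =>
    ⟨fun n _ => by simpa using hX1 k n, abs_le.1 (hmM k)⟩
  have hlim1 : Tendsto (fun k => X (f k)) atTop (𝓝 y) := (continuous_fst.tendsto _).comp hlim
  have hlim2 : Tendsto (fun k => m (f k)) atTop (𝓝 m0) := (continuous_snd.tendsto _).comp hlim
  have hlimX : ∀ n, Tendsto (fun k => X (f k) n) atTop (𝓝 (y n)) := fun n => (tendsto_pi_nhds.1 hlim1) n
  have hym0 : ‖y m0‖ = 1 := by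
    have e1 : Tendsto (fun k => ‖X (f k) m0‖) atTop (𝓝 ‖y m0‖) := (hlimX m0).norm
    have e2 : ∀ᶠ k in atTop, m (f k) = m0 := by
      rw [nhds_discrete, tendsto_pure] at hlim2; exact hlim2
    refine tendsto_nhds_unique e1 (tendsto_const_nhds.congr' ?_)
    filter_upwards [e2] with k hk
    rw [← hk, hXm]
  have hy1 : ∀ n, ‖y n‖ ≤ 1 := fun n => le_of_tendsto' (hlimX n).norm fun k => hX1 _ _
  have hNt : Tendsto (fun k => N (f k)) atTop atTop :=
    tendsto_atTop_mono (fun k => ((hf.id_le k).trans (Nat.le_succ _)).trans (hNk (f k))) tendsto_id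
  have hSt : ∀ n, Tendsto (fun k => S (f k) n) atTop (𝓝 0) := fun n => by
    refine squeeze_zero_norm (fun k => hS1 (f k) n) ?_
    exact (tendsto_one_div_add_atTop_nhds_zero_nat (𝕜 := ℝ)).comp hf.tendsto_atTop
  have hdom : ∀ k (n : ℤ) (x : ℤ × ℤ),
      ‖omN (N k) ε a1 b1 a2 b2 (n - (x.1 + x.2)) x * X k (n - (x.1 + x.2))‖ ≤
        Bc * jb n * (J x ^ 3 * Dx a1 b1 a2 b2 x) := fun k n x => by
    rw [norm_mul]
    refine (mul_le_of_le_one_right (norm_nonneg _) (hX1 k _)).trans ?_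
    exact (norm_omN_le hε (hNpos k) a1 b1 a2 b2 _ x).trans (jb_mul_le n x _ (Dx_nonneg _ _ _ _ _))
  -- the limit is annihilated by the limiting symbol, by dominated convergence
  have hann : ∀ n : ℤ, HasSum (fun x : ℤ × ℤ =>
      om a1 b1 a2 b2 (n - (x.1 + x.2)) x * y (n - (x.1 + x.2))) 0 := fun n => by
    have e1 := tendsto_tsum_of_dominated_convergence (𝓕 := atTop)
      (f := fun k (x : ℤ × ℤ) => omN (N (f k)) ε a1 b1 a2 b2 (n - (x.1 + x.2)) x * X (f k) (n - (x.1 + x.2)))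
      (g := fun x : ℤ × ℤ => om a1 b1 a2 b2 (n - (x.1 + x.2)) x * y (n - (x.1 + x.2)))
      ((hsd 3).mul_left (Bc * jb n))
      (fun x => (omN_tendsto hε a1 b1 a2 b2 _ x hNt fun k => hNpos _).mul (hlimX _))
      (Eventually.of_forall fun k x => hdom (f k) n x)
    have e2 : ∀ k, ∑' x : ℤ × ℤ, omN (N (f k)) ε a1 b1 a2 b2 (n - (x.1 + x.2)) x * X (f k) (n - (x.1 + x.2))
        = S (f k) n := fun k => (hS (f k) n).tsum_eq
    simp only [e2] at e1
    have e3 : Summable (fun x : ℤ × ℤ => om a1 b1 a2 b2 (n - (x.1 + x.2)) x * y (n - (x.1 + x.2))) := by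
      refine Summable.of_norm_bounded ((hsd 3).mul_left (Bc * jb n)) fun x => ?_
      rw [norm_mul]
      refine (mul_le_of_le_one_right (norm_nonneg _) (hy1 _)).trans ?_
      exact (norm_om_le a1 b1 a2 b2 _ x).trans (jb_mul_le n x _ (Dx_nonneg _ _ _ _ _))
    rw [← tendsto_nhds_unique e1 (hSt n)]
    exact e3.hasSum
  -- the ellipticity estimate passes to the limit, since every fixed `n` is eventually below `N/2`
  have hineq : ∀ n : ℤ, 16 * ‖β‖ * (|(n : ℝ)| * ‖y n‖) ≤
      ∑' x : ℤ × ℤ, Be * (J x ^ 2 * Dx a1 b1 a2 b2 x) * ‖y (n - (x.1 + x.2))‖ := fun n => by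
    have e1 := tendsto_tsum_of_dominated_convergence (𝓕 := atTop)
      (f := fun k (x : ℤ × ℤ) => Be * (J x ^ 2 * Dx a1 b1 a2 b2 x) * ‖X (f k) (n - (x.1 + x.2))‖)
      (g := fun x : ℤ × ℤ => Be * (J x ^ 2 * Dx a1 b1 a2 b2 x) * ‖y (n - (x.1 + x.2))‖)
      ((hsd 2).mul_left Be)
      (fun x => ((hlimX _).norm).const_mul _)
      (Eventually.of_forall fun k x => by
        rw [Real.norm_of_nonneg (mul_nonneg (hb x) (norm_nonneg _))]
        exact mul_le_of_le_one_right (hb x) (hX1 _ _))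
    have e2 := (hSt n).norm.add e1
    rw [norm_zero, zero_add] at e2
    have e3 : Tendsto (fun k => 16 * ‖β‖ * (|(n : ℝ)| * ‖X (f k) n‖)) atTop
        (𝓝 (16 * ‖β‖ * (|(n : ℝ)| * ‖y n‖))) := ((hlimX n).norm.const_mul _).const_mul _
    refine le_of_tendsto_of_tendsto e3 e2 ?_
    have e4 : ∀ᶠ k in atTop, 2 * |(n : ℝ)| ≤ (N (f k) : ℝ) :=
      (tendsto_natCast_atTop_atTop.comp hNt).eventually_ge_atTop _
    filter_upwards [e4] with k hk
    exact hkey (f k) n (by linarith)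
  have hRD := RD1_bootstrap h1 h2 h3 h4 hβ' hy1 hineq
  have := hin y hRD hann m0
  rw [this, norm_zero] at hym0
  exact zero_ne_one hym0

/-! ### The consistency residual -/

/-- Quasi-periodicity of the discrete symbol, with the phase of the shifted grid. -/
lemma omN_shift {N : ℕ} (hN : 0 < N) (ε : ℝ) (a1 b1 a2 b2 : ℤ × ℤ → ℂ) (n l : ℤ) (x : ℤ × ℤ) :
    omN N ε a1 b1 a2 b2 (n + l * N) x = ee (-l) ε * omN N ε a1 b1 a2 b2 n x := by
  have e1 : (n + l * N) + (x.1 + x.2) = (n + (x.1 + x.2)) + l * N := by ring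
  have e2 : (n + l * N) + x.2 = (n + x.2) + l * N := by ring
  have e3 := sn_mul_sn hN n (n + (x.1 + x.2)) l
  have e4 : (sn N (n + l * N) : ℂ) * sn N ((n + (x.1 + x.2)) + l * N)
      = sn N n * sn N (n + (x.1 + x.2)) := by exact_mod_cast e3
  unfold omN sigN
  rw [e1, e2, gN_shift hN, kN_shift hN, mul_assoc (4:ℂ), e4]
  ring

/-- Aliasing: on the grid the frequencies `n` and `m - r` with `n ≡ m - r (mod N)` coincide, and the
quasi-periodicity of the discrete symbol matches the phase of the shifted grid. -/
lemma omN_alias {N : ℕ} (hN : 0 < N) (ε : ℝ) (a1 b1 a2 b2 : ℤ × ℤ → ℂ) (n k : ℤ) (x : ℤ × ℤ) :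
    omN N ε a1 b1 a2 b2 k x * av N 0 (ee (n - k)) = omN N ε a1 b1 a2 b2 n x * av N ε (ee (n - k)) := by
  by_cases h : (N : ℤ) ∣ n - k
  · obtain ⟨l, hl⟩ := h
    have hl' : n - k = l * N := by rw [hl]; ring
    have hn : n = k + l * N := by linarith
    rw [hl', av_ee_mul hN, av_ee_mul hN, hn, omN_shift hN]
    simp only [ee_zero_right]
    linear_combination (-omN N ε a1 b1 a2 b2 k x) * ee_neg_left l ε
  · rw [av_ee_not hN _ h, av_ee_not hN _ h, mul_zero, mul_zero]

lemma norm_av_ee_le {N : ℕ} (hN : 0 < N) (ε : ℝ) (k : ℤ) : ‖av N ε (ee k)‖ ≤ 1 :=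
  norm_av_le hN fun _ => (norm_ee _ _).le

/-- Aliasing formula for the discrete Fourier coefficients of a sampled Fourier series. -/
lemma xv_ser_hasSum {N : ℕ} {y : ℤ → ℂ} (hy : Summable fun n => ‖y n‖) (k : ℤ) :
    HasSum (fun n => y n * av N 0 (ee (n - k))) (xv N (fun j => ser y (tg (1 / (N : ℝ)) 0 j)) k) := by
  have h := av_hasSum (N := N) (ε := 0) (f := fun n t => y n * ee (n - k) t)
    (u := fun t => ser y t * ee (-k) t) fun j =>
      ((summable_ser hy _).hasSum.mul_right (ee (-k) (tg (1 / (N : ℝ)) 0 j))).congr_fun fun n => by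
        rw [sub_eq_add_neg, ee_add_left, mul_assoc]
  simp only [av_const_mul] at h
  exact h

/-- The consistency residual of the Nyström scheme, in frequency space. -/
lemma residual_hasSum {A1 K1 A2 K2 : ℝ → ℝ → ℂ} (hA1 : SPK A1) (hK1 : SPK K1) (hA2 : SPK A2) (hK2 : SPK K2)
    {ε : ℝ} (hε : ε = 1 / 6 ∨ ε = -(1 / 6)) {N : ℕ} (hN : 0 < N) {y : ℤ → ℂ} (hy : RD1 y) (V : ℤ → ℂ)
    (hV : ∀ i ∈ Finset.range N, (N : ℂ) * ∑ j ∈ Finset.range N,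
      Wmat (logKer A1 K1) (logKer A2 K2) (1 / (N : ℝ)) ε (i : ℤ) (j : ℤ) * V j =
        Wop (logKer A1 K1) (logKer A2 K2) (ser y) (tg (1 / (N : ℝ)) ε (i : ℤ))) (m : ℤ) :
    ∃ S : ℂ, HasSum (fun x : ℤ × ℤ =>
      omN N ε (kerA A1) (kerB A1 K1) (kerA A2) (kerB A2 K2) (m - (x.1 + x.2)) x *
        (xv N V (m - (x.1 + x.2)) - xv N (fun j => ser y (tg (1 / (N : ℝ)) 0 j)) (m - (x.1 + x.2)))) S ∧
      HasSum (fun z : ℤ × (ℤ × ℤ) => y z.1 *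
        (om (kerA A1) (kerB A1 K1) (kerA A2) (kerB A2 K2) z.1 z.2 -
          omN N ε (kerA A1) (kerB A1 K1) (kerA A2) (kerB A2 K2) z.1 z.2) *
        av N ε (ee (z.1 - (m - (z.2.1 + z.2.2))))) S := by
  obtain ⟨a1, ha1⟩ : ∃ a, a = kerA A1 := ⟨_, rfl⟩
  obtain ⟨b1, hb1⟩ : ∃ a, a = kerB A1 K1 := ⟨_, rfl⟩
  obtain ⟨a2, ha2⟩ : ∃ a, a = kerA A2 := ⟨_, rfl⟩
  obtain ⟨b2, hb2⟩ : ∃ a, a = kerB A2 K2 := ⟨_, rfl⟩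
  have r1 : RD2 a1 := ha1 ▸ RD2_kerA hA1
  have r2 : RD2 b1 := hb1 ▸ RD2_kerB hA1 hK1
  have r3 : RD2 a2 := ha2 ▸ RD2_kerA hA2
  have r4 : RD2 b2 := hb2 ▸ RD2_kerB hA2 hK2
  have hD1 := D_res hA1 hK1 hA2 hK2 hε hN m V
  have hD2 := D_res hA1 hK1 hA2 hK2 hε hN m (fun j => ser y (tg (1 / (N : ℝ)) 0 j))
  have hW := fun s => Wop_hasSum hA1 hK1 hA2 hK2 hy s
  rw [← ha1, ← hb1, ← ha2, ← hb2] at *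
  rw [Finset.sum_congr rfl (fun i hi => by rw [hV i hi])] at hD1
  -- the exact data, sampled on the shifted grid
  have hE : HasSum (fun z : ℤ × (ℤ × ℤ) => y z.1 * om a1 b1 a2 b2 z.1 z.2 *
      av N ε (ee (z.1 - (m - (z.2.1 + z.2.2)))))
      (av N ε fun s => ee (-m) s * Wop (logKer A1 K1) (logKer A2 K2) (ser y) s) := by
    have h := av_hasSum (N := N) (ε := ε)
      (f := fun (z : ℤ × (ℤ × ℤ)) s => y z.1 * om a1 b1 a2 b2 z.1 z.2 * ee (z.1 - (m - (z.2.1 + z.2.2))) s)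
      (u := fun s => ee (-m) s * Wop (logKer A1 K1) (logKer A2 K2) (ser y) s) fun j =>
        ((hW _).mul_left (ee (-m) (tg (1 / (N : ℝ)) ε j))).congr_fun fun z => by
          have e : z.1 - (m - (z.2.1 + z.2.2)) = -m + (z.1 + (z.2.1 + z.2.2)) := by ring
          rw [e, ee_add_left (-m)]; ring
    simp only [av_const_mul] at h
    exact h
  -- the discrete operator applied to the samples of the exact solution
  have hsum : Summable (fun z : ℤ × (ℤ × ℤ) => y z.1 * omN N ε a1 b1 a2 b2 z.1 z.2 *
      av N ε (ee (z.1 - (m - (z.2.1 + z.2.2))))) := by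
    have hb := (hy.summable 1).mul_of_nonneg ((summable_Dx r1 r2 r3 r4 2).mul_left Bc)
      (fun n => by have := jb_pos n; positivity)
      (fun x => by have := J_pos x; have := Bc_pos; have := Dx_nonneg a1 b1 a2 b2 x; positivity)
    refine Summable.of_norm_bounded hb fun z => ?_
    rw [norm_mul, norm_mul]
    refine (mul_le_of_le_one_right (by positivity) (norm_av_ee_le hN ε _)).trans ?_
    refine (mul_le_mul_of_nonneg_left (norm_omN_le hε hN a1 b1 a2 b2 z.1 z.2) (norm_nonneg _)).trans ?_
    exact le_of_eq (by ring)
  have hF : HasSum (fun x : ℤ × ℤ => omN N ε a1 b1 a2 b2 (m - (x.1 + x.2)) x *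
      xv N (fun j => ser y (tg (1 / (N : ℝ)) 0 j)) (m - (x.1 + x.2)))
      (∑' z : ℤ × (ℤ × ℤ), y z.1 * omN N ε a1 b1 a2 b2 z.1 z.2 *
        av N ε (ee (z.1 - (m - (z.2.1 + z.2.2))))) := by
    have h := (Equiv.prodComm (ℤ × ℤ) ℤ).hasSum_iff.2 hsum.hasSum
    refine h.prod_fiberwise fun x => ?_
    refine ((xv_ser_hasSum hy.summable_norm (m - (x.1 + x.2))).mul_left
      (omN N ε a1 b1 a2 b2 (m - (x.1 + x.2)) x)).congr_fun fun n => ?_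
    have := omN_alias hN ε a1 b1 a2 b2 n (m - (x.1 + x.2)) x
    simp only [Function.comp, Equiv.prodComm_apply, Prod.swap]
    linear_combination (-y n) * this
  have hS := hE.sub hsum.hasSum
  refine ⟨_, ?_, hS.congr_fun fun z => by ring⟩
  exact (hD1.sub hF).congr_fun fun x => by ring

/-- A sum supported on one residue class modulo `N` in its first index, whose terms are bounded,
up to summable weights in the second index, by `min (N⁻², ⟨n⟩⁻²)`, is `O(N⁻²)`. -/
lemma norm_le_of_residue {N : ℕ} (hN : 0 < N) {F : ℤ × (ℤ × ℤ) → ℂ} {S : ℂ} (hF : HasSum F S) {m : ℤ}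
    {K : ℝ} (hK : 0 ≤ K) {D : ℤ × ℤ → ℝ} (hD0 : ∀ x, 0 ≤ D x) (hD : Summable D)
    (hz : ∀ z, ¬ (N : ℤ) ∣ z.1 - (m - (z.2.1 + z.2.2)) → F z = 0)
    (hb1 : ∀ z, ‖F z‖ ≤ K * D z.2 * (1 / (N : ℝ) ^ 2))
    (hb2 : ∀ z, ‖F z‖ ≤ K * D z.2 * (jb z.1 ^ 2)⁻¹) :
    ‖S‖ ≤ 16 * K * (∑' l : ℤ, (jb l ^ 2)⁻¹) * (∑' x, D x) * (1 / (N : ℝ) ^ 2) := by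
  have hN' : (0:ℝ) < N := by exact_mod_cast hN
  choose l0 c0 hc0 hc1 using fun k => exists_reduce hN k
  obtain ⟨g, hg⟩ : ∃ g : ℤ × (ℤ × ℤ) → ℤ × (ℤ × ℤ),
    g = fun z => (c0 (m - (z.2.1 + z.2.2)) + z.1 * N, z.2) := ⟨_, rfl⟩
  have hinj : Function.Injective g := by
    rintro ⟨l, x⟩ ⟨l', x'⟩ h
    rw [hg] at h
    simp only [Prod.mk.injEq] at h
    obtain ⟨h1, rfl⟩ := h
    have h2 : l * (N:ℤ) = l' * N := by linarith
    have h3 : (N:ℤ) ≠ 0 := by exact_mod_cast hN.ne'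
    rw [mul_right_cancel₀ h3 h2]
  have hF' : HasSum (F ∘ g) S := by
    refine (hinj.hasSum_iff fun z hzr => hz z fun hd => hzr ?_).2 hF
    obtain ⟨k, hk⟩ := hd
    refine ⟨(k + l0 (m - (z.2.1 + z.2.2)), z.2), ?_⟩
    rw [hg]
    have := hc0 (m - (z.2.1 + z.2.2))
    refine Prod.ext ?_ rfl
    simp only
    have e : z.1 = (m - (z.2.1 + z.2.2)) + N * k := by linarith
    linear_combination -this - e
  have hbound := (summable_jb.hasSum.mul hD.hasSum (summable_jb.mul_of_nonneg hD
    (fun n => by have := jb_pos n; positivity) hD0)).mul_left (16 * K * (1 / (N : ℝ) ^ 2))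
  rw [← hF'.tsum_eq]
  refine (tsum_of_norm_bounded hbound fun z => ?_).trans (le_of_eq (by ring))
  obtain ⟨l, x⟩ := z
  have hDx := hD0 x
  have hJ := jb_pos l
  have e0 : F (g (l, x)) = F (c0 (m - (x.1 + x.2)) + l * N, x) := by rw [hg]
  simp only [Function.comp]
  rw [e0]
  obtain ⟨c, hc⟩ : ∃ c, c = c0 (m - (x.1 + x.2)) := ⟨_, rfl⟩
  have hcb := hc1 (m - (x.1 + x.2))
  rw [← hc] at hcb ⊢
  rcases eq_or_ne l 0 with h | h
  · refine (hb1 _).trans ?_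
    subst h
    simp only [jb, Int.cast_zero, abs_zero, add_zero, one_pow, inv_one, one_mul]
    have : 0 ≤ K * D x * (1 / (N : ℝ) ^ 2) := by positivity
    linarith
  · refine (hb2 _).trans ?_
    have e1 : jb l * N / 4 ≤ jb (c + l * N) := by
      have e2 := jb_le_two h
      have e3 : |(l : ℝ)| * N - |(c : ℝ)| ≤ |((c + l * N : ℤ) : ℝ)| := by
        push_cast
        have := abs_sub_abs_le_abs_sub ((l : ℝ) * N) (-(c : ℝ))
        rw [abs_mul, abs_neg, Nat.abs_cast, sub_neg_eq_add, add_comm ((l : ℝ) * N)] at this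
        exact this
      have e4 : (1:ℝ) ≤ |(l : ℝ)| := by exact_mod_cast Int.one_le_abs h
      have e5 : (N:ℝ) ≤ |(l : ℝ)| * N := le_mul_of_one_le_left hN'.le e4
      have e6 : jb l * N ≤ 2 * |(l : ℝ)| * N := mul_le_mul_of_nonneg_right e2 hN'.le
      have e7 := abs_le_jb (c + l * N)
      linarith
    have e2 : (jb (c + l * N) ^ 2)⁻¹ ≤ ((jb l * N / 4) ^ 2)⁻¹ := by gcongr
    calc K * D x * (jb (c + l * N) ^ 2)⁻¹ ≤ K * D x * ((jb l * N / 4) ^ 2)⁻¹ := by gcongr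
      _ = _ := by field_simp; norm_num

/-! ### Sobolev bounds and the trapezoidal rule -/

/-- Decay of single Fourier coefficients controlled by the Sobolev norm. Summability is assumed since
the `tsum` in `sobNorm` is otherwise `0`. -/
lemma sob_bound {u : ℝ → ℂ} (k : ℕ) (hs : Summable fun m : ℤ => |(m : ℝ)| ^ (2 * k) * ‖fc u m‖ ^ 2) (n : ℤ) :
    ‖fc u n‖ ≤ 2 ^ k * sobNorm k u * (jb n ^ k)⁻¹ := by
  have hJ := jb_pos n
  rw [← div_eq_mul_inv, le_div_iff₀ (by positivity)]
  have hterm : (fun m : ℤ => if m = 0 then 0 else |(m : ℝ)| ^ (2 * (k : ℝ)) * ‖fc u m‖ ^ 2)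
      = fun m : ℤ => if m = 0 then 0 else |(m : ℝ)| ^ (2 * k) * ‖fc u m‖ ^ 2 := by
    funext m
    have : (2 * (k : ℝ)) = ((2 * k : ℕ) : ℝ) := by push_cast; ring
    rw [this, Real.rpow_natCast]
  have hnn : ∀ m : ℤ, 0 ≤ if m = 0 then (0:ℝ) else |(m : ℝ)| ^ (2 * k) * ‖fc u m‖ ^ 2 := fun m => by
    split_ifs <;> positivity
  have hs' : Summable fun m : ℤ => if m = 0 then (0:ℝ) else |(m : ℝ)| ^ (2 * k) * ‖fc u m‖ ^ 2 := by
    refine Summable.of_nonneg_of_le hnn (fun m => ?_) hs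
    split_ifs
    · positivity
    · exact le_rfl
  have hsob : sobNorm k u = Real.sqrt (‖fc u 0‖ ^ 2 +
      ∑' m : ℤ, if m = 0 then (0:ℝ) else |(m : ℝ)| ^ (2 * k) * ‖fc u m‖ ^ 2) := by
    unfold sobNorm; rw [hterm]
  have hts : 0 ≤ ∑' m : ℤ, if m = 0 then (0:ℝ) else |(m : ℝ)| ^ (2 * k) * ‖fc u m‖ ^ 2 := tsum_nonneg hnn
  have h0 : 0 ≤ sobNorm k u := by unfold sobNorm; exact Real.sqrt_nonneg _
  rcases eq_or_ne n 0 with h | h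
  · subst h
    have e1 : ‖fc u 0‖ ≤ sobNorm k u := by
      rw [hsob]; exact Real.le_sqrt_of_sq_le (by linarith)
    have e2 : jb 0 = 1 := by simp [jb]
    have e3 : (1:ℝ) ≤ 2 ^ k := one_le_pow₀ (by norm_num)
    rw [e2, one_pow, mul_one]
    exact e1.trans (le_mul_of_one_le_left h0 e3)
  · have e1 : |(n : ℝ)| ^ k * ‖fc u n‖ ≤ sobNorm k u := by
      rw [hsob]
      refine Real.le_sqrt_of_sq_le ?_
      have e2 := hs'.le_tsum n fun m _ => hnn m
      rw [if_neg h] at e2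
      calc _ = |(n : ℝ)| ^ (2 * k) * ‖fc u n‖ ^ 2 := by ring
        _ ≤ _ := by have := sq_nonneg ‖fc u 0‖; linarith
    calc ‖fc u n‖ * jb n ^ k ≤ ‖fc u n‖ * (2 * |(n : ℝ)|) ^ k := by
          gcongr; exact jb_le_two h
      _ = 2 ^ k * (|(n : ℝ)| ^ k * ‖fc u n‖) := by rw [mul_pow]; ring
      _ ≤ _ := by gcongr

lemma fc_smooth_bound {φ : ℝ → ℂ} (hφ : ContDiff ℝ (⊤ : ℕ∞) φ) (hp : Function.Periodic φ 1) (n : ℤ) :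
    ‖fc φ n‖ ≤ 8 * sobNorm 3 φ * (jb n ^ 3)⁻¹ := by
  have hRD := RD1_fc hφ hp
  have hs : Summable fun m : ℤ => |(m : ℝ)| ^ (2 * 3) * ‖fc φ m‖ ^ 2 := by
    obtain ⟨C, hC⟩ := hRD 0
    refine Summable.of_nonneg_of_le (fun m => by positivity) (fun m => ?_) ((hRD.summable 6).mul_right C)
    have h1 := hC m
    rw [pow_zero, one_mul] at h1
    have := jb_pos m
    calc |(m : ℝ)| ^ (2 * 3) * ‖fc φ m‖ ^ 2 = |(m : ℝ)| ^ 6 * ‖fc φ m‖ * ‖fc φ m‖ := by ring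
      _ ≤ jb m ^ 6 * ‖fc φ m‖ * C := by gcongr; exact abs_le_jb m
  have h := sob_bound 3 hs n
  norm_num at h ⊢
  exact h

lemma fc_C2_bound {w : ℝ → ℂ} (hw : ContDiff ℝ 2 w) (hp : Function.Periodic w 1) (n : ℤ) :
    ‖fc w n‖ ≤ 4 * sobNorm 2 w * (jb n ^ 2)⁻¹ := by
  have hd0 : Differentiable ℝ w := hw.differentiable (by norm_num)
  have hw1 : ContDiff ℝ 1 (deriv w) := by
    have : ContDiff ℝ (1 + 1) w := by simpa [one_add_one_eq_two] using hw
    exact (contDiff_succ_iff_deriv.1 this).2.2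
  have hd1 : Differentiable ℝ (deriv w) := hw1.differentiable (by norm_num)
  have hc2 : Continuous (deriv (deriv w)) := hw1.continuous_deriv (by norm_num)
  have hp1 : Function.Periodic (deriv w) 1 := periodic_deriv hp
  have hp2 : Function.Periodic (deriv (deriv w)) 1 := periodic_deriv hp1
  have hs0 := summable_sq_fc hc2 hp2
  have hs : Summable fun m : ℤ => |(m : ℝ)| ^ (2 * 2) * ‖fc w m‖ ^ 2 := by
    refine Summable.of_nonneg_of_le (fun m => by positivity) (fun m => ?_) hs0
    have e1 := fc_deriv (fun t => (hd0 t).hasDerivAt) hw1.continuous hp m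
    have e2 := fc_deriv (fun t => (hd1 t).hasDerivAt) hc2 hp1 m
    rw [e2, e1, norm_mul (2 * Real.pi * Complex.I * m : ℂ), norm_mul (2 * Real.pi * Complex.I * m : ℂ),
      norm_two_pi_I_mul]
    have hpi : (1:ℝ) ≤ 2 * Real.pi := by linarith [Real.pi_gt_three]
    have e3 : |(m : ℝ)| ≤ 2 * Real.pi * |(m : ℝ)| := le_mul_of_one_le_left (abs_nonneg _) hpi
    calc |(m : ℝ)| ^ (2 * 2) * ‖fc w m‖ ^ 2 = (|(m : ℝ)| * (|(m : ℝ)| * ‖fc w m‖)) ^ 2 := by ring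
      _ ≤ _ := by gcongr
  have h := sob_bound 2 hs n
  norm_num at h ⊢
  exact h

lemma sobNorm_nonneg (r : ℝ) (u : ℝ → ℂ) : 0 ≤ sobNorm r u := Real.sqrt_nonneg _

/-- The constant `∑ ⟨n⟩⁻²`. -/
noncomputable def Zc : ℝ := ∑' n : ℤ, (jb n ^ 2)⁻¹

lemma Zc_nonneg : 0 ≤ Zc := tsum_nonneg fun n => by have := jb_pos n; positivity

lemma summable_fc_C2 {w : ℝ → ℂ} (hw : ContDiff ℝ 2 w) (hp : Function.Periodic w 1) :
    Summable fun n => ‖fc w n‖ :=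
  Summable.of_nonneg_of_le (fun _ => norm_nonneg _) (fc_C2_bound hw hp) (summable_jb.mul_left _)

/-- Termwise integration of an absolutely summable trigonometric series. -/
lemma integral_of_hasSum_ee {ι : Type*} [Countable ι] {c : ι → ℂ} (hc : Summable fun i => ‖c i‖) (k : ι → ℤ)
    {u : ℝ → ℂ} (hu : ∀ t, HasSum (fun i => c i * ee (k i) t) (u t)) :
    HasSum (fun i => c i * if k i = 0 then 1 else 0) (∫ t in (0:ℝ)..1, u t) := by
  have h := intervalIntegral.hasSum_integral_of_dominated_convergence (a := 0) (b := 1) (μ := volume)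
    (F := fun i t => c i * ee (k i) t) (f := u) (fun i _ => ‖c i‖)
    (fun i => (continuous_const.mul (continuous_ee (k i))).aestronglyMeasurable)
    (fun i => Eventually.of_forall fun t _ => by rw [norm_mul, norm_ee, mul_one])
    (Eventually.of_forall fun t _ => hc) intervalIntegrable_const
    (Eventually.of_forall fun t _ => hu t)
  refine h.congr_fun fun i => ?_
  rw [intervalIntegral.integral_const_mul, integral_ee]

set_option maxHeartbeats 1000000 in
/-- The trapezoidal rule for the product `φ w` is second-order accurate. -/
lemma trapezoid_error {φ w : ℝ → ℂ} (hφ : ContDiff ℝ (⊤ : ℕ∞) φ) (hφp : Function.Periodic φ 1)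
    (hw : ContDiff ℝ 2 w) (hwp : Function.Periodic w 1) {N : ℕ} (hN : 0 < N) :
    ‖av N 0 (fun t => φ t * w t) - ∫ t in (0:ℝ)..1, φ t * w t‖ ≤
      512 * Zc ^ 2 * (1 / (N : ℝ)) ^ 2 * sobNorm 3 φ * sobNorm 2 w := by
  have hN' : (0:ℝ) < N := by exact_mod_cast hN
  have s1 := (RD1_fc hφ hφp).summable_norm
  have s2 := summable_fc_C2 hw hwp
  have hφs := hasSum_fc hφ.continuous hφp s1
  have hws := hasSum_fc hw.continuous hwp s2
  have hsn : Summable fun z : ℤ × ℤ => ‖fc φ z.1 * fc w z.2‖ := by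
    simp only [norm_mul]
    exact s1.mul_of_nonneg s2 (fun _ => norm_nonneg _) (fun _ => norm_nonneg _)
  have hprod : ∀ t, HasSum (fun z : ℤ × ℤ => (fc φ z.1 * fc w z.2) * ee (z.1 + z.2) t) (φ t * w t) := fun t => by
    have h := (hφs t).mul (hws t) (Summable.of_norm (by
      refine hsn.congr fun z => ?_
      simp only [norm_mul, norm_ee, mul_one]))
    exact h.congr_fun fun z => by rw [ee_add_left]; ring
  have hI := integral_of_hasSum_ee hsn (fun z => z.1 + z.2) hprod
  have hA : HasSum (fun z : ℤ × ℤ => (fc φ z.1 * fc w z.2) * av N 0 (ee (z.1 + z.2)))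
      (av N 0 fun t => φ t * w t) := by
    have h := av_hasSum (N := N) (ε := 0) (f := fun (z : ℤ × ℤ) t => (fc φ z.1 * fc w z.2) * ee (z.1 + z.2) t)
      (u := fun t => φ t * w t) fun j => hprod _
    simp only [av_const_mul] at h
    exact h
  have hF := hA.sub hI
  obtain ⟨g, hg⟩ : ∃ g : ℤ × ℤ → ℤ × ℤ, g = fun z : ℤ × ℤ => (z.1, z.2 * (N:ℤ) - z.1) := ⟨_, rfl⟩
  have hNz : (N:ℤ) ≠ 0 := by exact_mod_cast hN.ne'
  have hinj : Function.Injective g := by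
    rintro ⟨n, l⟩ ⟨n', l'⟩ h
    rw [hg] at h
    simp only [Prod.mk.injEq] at h
    obtain ⟨rfl, h2⟩ := h
    rw [mul_right_cancel₀ hNz (by linarith : l * (N:ℤ) = l' * N)]
  have hF' := (hinj.hasSum_iff fun z hz => by
    have hnd : ¬ (N:ℤ) ∣ z.1 + z.2 := fun hd => hz (by
      obtain ⟨k, hk⟩ := hd
      exact ⟨(z.1, k), by rw [hg]; exact Prod.ext rfl (by simp only; linarith)⟩)
    have hnz : z.1 + z.2 ≠ 0 := fun h0 => hnd (h0 ▸ dvd_zero _)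
    rw [av_ee_not hN _ hnd, if_neg hnz, sub_self]).2 hF
  obtain ⟨P, hP⟩ : ∃ P, P = sobNorm 3 φ := ⟨_, rfl⟩
  obtain ⟨Q, hQ⟩ : ∃ Q, Q = sobNorm 2 w := ⟨_, rfl⟩
  have hP0 : 0 ≤ P := hP ▸ sobNorm_nonneg _ _
  have hQ0 : 0 ≤ Q := hQ ▸ sobNorm_nonneg _ _
  have hjs : ∀ n : ℤ, 0 ≤ (jb n ^ 2)⁻¹ := fun n => by have := jb_pos n; positivity
  have hZ : HasSum (fun n : ℤ => (jb n ^ 2)⁻¹) Zc := summable_jb.hasSum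
  have hZ2 : HasSum (fun z : ℤ × ℤ => (jb z.1 ^ 2)⁻¹ * (jb z.2 ^ 2)⁻¹) (Zc * Zc) :=
    hZ.mul hZ (summable_jb.mul_of_nonneg summable_jb hjs hjs)
  have hZ3 : HasSum (fun z : ℤ × ℤ => (jb (z.2 * N - z.1) ^ 2)⁻¹ * (jb z.2 ^ 2)⁻¹) (Zc * Zc) := by
    have e : Function.Involutive (fun z : ℤ × ℤ => (z.2 * (N:ℤ) - z.1, z.2)) := fun z => by simp
    exact (Equiv.hasSum_iff e.toPerm).2 hZ2
  have hG := (hZ2.add hZ3).mul_left (256 * P * Q * (1 / (N : ℝ)) ^ 2)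
  rw [← hF'.tsum_eq, ← hP, ← hQ]
  refine (tsum_of_norm_bounded hG fun z => ?_).trans (le_of_eq (by ring))
  obtain ⟨n, l⟩ := z
  have e0 : n + (l * (N:ℤ) - n) = l * N := by ring
  simp only [Function.comp, hg]
  rw [e0, av_ee_mul hN, ee_zero_right, ← mul_sub]
  obtain ⟨k, hk⟩ : ∃ k, k = l * (N:ℤ) - n := ⟨_, rfl⟩
  rw [← hk]
  have j1 := jb_pos n
  have j2 := jb_pos k
  have j3 := jb_pos l
  rcases eq_or_ne l 0 with h | h
  · have : l * (N:ℤ) = 0 := by rw [h, zero_mul]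
    rw [if_pos this, sub_self, mul_zero, norm_zero]
    positivity
  · rw [if_neg (mul_ne_zero h hNz), sub_zero, mul_one, norm_mul]
    have b1 : ‖fc φ n‖ ≤ 8 * P * (jb n ^ 2)⁻¹ := by
      rw [hP]
      refine (fc_smooth_bound hφ hφp n).trans ?_
      have := sobNorm_nonneg 3 φ
      have h1 := one_le_jb n
      gcongr
      norm_num
    have b2 : ‖fc w k‖ ≤ 4 * Q * (jb k ^ 2)⁻¹ := hQ ▸ fc_C2_bound hw hwp k
    -- one of the two frequencies is at least half of `l N`
    have b3 : jb l * N ≤ 2 * (jb n + jb k) := by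
      have e2 := jb_le_two h
      have e3 : |(l : ℝ)| * N ≤ |(n : ℝ)| + |(k : ℝ)| := by
        have e4 : (l : ℝ) * N = n + k := by
          have : l * (N:ℤ) = n + k := by linarith
          exact_mod_cast this
        calc |(l : ℝ)| * N = |(l : ℝ) * N| := by rw [abs_mul, Nat.abs_cast]
          _ = |(n : ℝ) + k| := by rw [e4]
          _ ≤ _ := abs_add_le _ _
      have e5 : jb l * N ≤ 2 * |(l : ℝ)| * N := mul_le_mul_of_nonneg_right e2 hN'.le
      have := abs_le_jb n
      have := abs_le_jb k
      linarith
    have b4 : (jb n ^ 2)⁻¹ * (jb k ^ 2)⁻¹ ≤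
        8 * (1 / (N : ℝ)) ^ 2 * (jb l ^ 2)⁻¹ * ((jb n ^ 2)⁻¹ + (jb k ^ 2)⁻¹) := by
      have e1 : (jb l * N) ^ 2 ≤ 8 * (jb n ^ 2 + jb k ^ 2) := by
        calc (jb l * N) ^ 2 ≤ (2 * (jb n + jb k)) ^ 2 := by gcongr
          _ ≤ _ := by nlinarith [sq_nonneg (jb n - jb k)]
      have e2 : 8 * (1 / (N : ℝ)) ^ 2 * (jb l ^ 2)⁻¹ * ((jb n ^ 2)⁻¹ + (jb k ^ 2)⁻¹)
          = (8 * (jb n ^ 2 + jb k ^ 2)) * ((jb l * N) ^ 2)⁻¹ * ((jb n ^ 2)⁻¹ * (jb k ^ 2)⁻¹) := by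
        field_simp; ring
      rw [e2]
      refine le_mul_of_one_le_left (by positivity) ?_
      rw [← div_eq_mul_inv, le_div_iff₀ (by positivity), one_mul]
      exact e1
    calc ‖fc φ n‖ * ‖fc w k‖ ≤ (8 * P * (jb n ^ 2)⁻¹) * (4 * Q * (jb k ^ 2)⁻¹) := by gcongr
      _ = 32 * P * Q * ((jb n ^ 2)⁻¹ * (jb k ^ 2)⁻¹) := by ring
      _ ≤ 32 * P * Q * (8 * (1 / (N : ℝ)) ^ 2 * (jb l ^ 2)⁻¹ * ((jb n ^ 2)⁻¹ + (jb k ^ 2)⁻¹)) := by gcongr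
      _ = _ := by ring

/-! ### The quadrature error -/

lemma sum_zmod (N : ℕ) [NeZero N] (g : ZMod N → ℂ) :
    ∑ j : ZMod N, g j = ∑ j ∈ Finset.range N, g (((j : ℕ) : ℤ) : ZMod N) := by
  refine Finset.sum_nbij' (fun j => j.val) (fun j => (j : ZMod N)) ?_ ?_ ?_ ?_ ?_
  · intro j _; simpa using ZMod.val_lt j
  · intro j _; simp
  · intro j _; simp
  · intro j hj; simpa using ZMod.val_cast_of_lt (Finset.mem_range.1 hj)
  · intro j _; simp

lemma ee_tg_comm (N : ℕ) (j n : ℤ) : ee j (tg (1 / (N : ℝ)) 0 n) = ee n (tg (1 / (N : ℝ)) 0 j) := by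
  unfold ee tg; congr 1; push_cast; ring

/-- The discrete Fourier transform is injective. -/
lemma eq_zero_of_xv {N : ℕ} (hN : 0 < N) (V : ℤ → ℂ) (h : ∀ n, xv N V n = 0) {k : ℕ} (hk : k < N) :
    V k = 0 := by
  have hN' : (N : ℂ) ≠ 0 := by exact_mod_cast hN.ne'
  have h1 : ∑ j ∈ Finset.range N, V (j : ℤ) * av N 0 (ee ((k : ℤ) - j)) = V k := by
    rw [Finset.sum_eq_single_of_mem k (Finset.mem_range.2 hk)]
    · have := av_ee_mul hN 0 0
      rw [zero_mul] at this
      rw [sub_self, this, ee_zero_right, mul_one]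
    · intro j hj hjk
      rw [av_ee_not hN, mul_zero]
      intro hd
      have := Int.eq_zero_of_abs_lt_dvd hd (by
        have := Finset.mem_range.1 hj
        rw [abs_lt]; constructor <;> omega)
      omega
  have h2 : ∀ n : ℕ, ∑ j ∈ Finset.range N, V (j : ℤ) * ee (-(n:ℤ)) (tg (1 / (N : ℝ)) 0 (j : ℤ)) = 0 := fun n => by
    have := h n
    unfold xv at this
    exact (mul_eq_zero.1 this).resolve_left (one_div_ne_zero hN')
  rw [← h1]
  unfold av
  calc _ = (1 / (N : ℂ)) * ∑ n ∈ Finset.range N, ee k (tg (1 / (N : ℝ)) 0 (n : ℤ)) *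
        ∑ j ∈ Finset.range N, V (j : ℤ) * ee (-(n:ℤ)) (tg (1 / (N : ℝ)) 0 (j : ℤ)) := by
        simp only [Finset.mul_sum]
        rw [Finset.sum_comm]
        refine Finset.sum_congr rfl fun n _ => Finset.sum_congr rfl fun j _ => ?_
        have e : ee (-(n:ℤ)) (tg (1 / (N : ℝ)) 0 (j : ℤ)) = ee (-(j:ℤ)) (tg (1 / (N : ℝ)) 0 (n : ℤ)) := by
          rw [← ee_neg_right, ← ee_neg_right]
          have : ∀ a b : ℤ, ee a (-tg (1 / (N : ℝ)) 0 b) = ee b (-tg (1 / (N : ℝ)) 0 a) := fun a b => by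
            unfold ee tg; congr 1; push_cast; ring
          exact this _ _
        rw [e, sub_eq_add_neg, ee_add_left]; ring
    _ = 0 := by simp only [h2, mul_zero, Finset.sum_const_zero]

/-- The residual is `O(N⁻²)` at every frequency. Each term is `O(N⁻²)` by `om_sub_omN`, and also
`O(⟨n⟩⁻²)` by the growth bounds, so that `norm_le_of_residue` applies. -/
lemma residual_bound {A1 K1 A2 K2 : ℝ → ℝ → ℂ} (hA1 : SPK A1) (hK1 : SPK K1) (hA2 : SPK A2) (hK2 : SPK K2)
    {ε : ℝ} (hε : ε = 1 / 6 ∨ ε = -(1 / 6)) :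
    ∃ C ≥ (0:ℝ), ∀ (N : ℕ), 0 < N → ∀ (y : ℤ → ℂ), RD1 y → ∀ P : ℝ, 0 ≤ P →
      (∀ n, ‖y n‖ ≤ P * (jb n ^ 3)⁻¹) → ∀ (m : ℤ) (S : ℂ),
      HasSum (fun z : ℤ × (ℤ × ℤ) => y z.1 *
        (om (kerA A1) (kerB A1 K1) (kerA A2) (kerB A2 K2) z.1 z.2 -
          omN N ε (kerA A1) (kerB A1 K1) (kerA A2) (kerB A2 K2) z.1 z.2) *
        av N ε (ee (z.1 - (m - (z.2.1 + z.2.2))))) S → ‖S‖ ≤ C * P * (1 / (N : ℝ)) ^ 2 := by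
  obtain ⟨a1, ha1⟩ : ∃ a, a = kerA A1 := ⟨_, rfl⟩
  obtain ⟨b1, hb1⟩ : ∃ a, a = kerB A1 K1 := ⟨_, rfl⟩
  obtain ⟨a2, ha2⟩ : ∃ a, a = kerA A2 := ⟨_, rfl⟩
  obtain ⟨b2, hb2⟩ : ∃ a, a = kerB A2 K2 := ⟨_, rfl⟩
  have r1 : RD2 a1 := ha1 ▸ RD2_kerA hA1
  have r2 : RD2 b1 := hb1 ▸ RD2_kerB hA1 hK1
  have r3 : RD2 a2 := ha2 ▸ RD2_kerA hA2
  have r4 : RD2 b2 := hb2 ▸ RD2_kerB hA2 hK2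
  rw [← ha1, ← hb1, ← ha2, ← hb2]
  have hsd := summable_Dx r1 r2 r3 r4 4
  have hD0 : ∀ x, 0 ≤ J x ^ 4 * Dx a1 b1 a2 b2 x := fun x => by
    have := J_pos x; have := Dx_nonneg a1 b1 a2 b2 x; positivity
  have hBd := Bd_pos
  have hBc := Bc_pos
  have hZ := Zc_nonneg
  have hT : 0 ≤ ∑' x, J x ^ 4 * Dx a1 b1 a2 b2 x := tsum_nonneg hD0
  refine ⟨16 * (Bd + 2 * Bc) * Zc * ∑' x, J x ^ 4 * Dx a1 b1 a2 b2 x, by positivity,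
    fun N hN y hy P hP hyP m S hS => ?_⟩
  refine (norm_le_of_residue hN hS (m := m) (K := (Bd + 2 * Bc) * P) (by positivity) hD0 hsd
    (fun z hz => ?_) (fun z => ?_) (fun z => ?_)).trans (le_of_eq (by unfold Zc; ring))
  · rw [av_ee_not hN _ hz, mul_zero]
  · obtain ⟨n, x⟩ := z
    have j1 := jb_pos n
    have := hD0 x
    rw [norm_mul, norm_mul]
    refine (mul_le_of_le_one_right (by positivity) (norm_av_ee_le hN ε _)).trans ?_
    calc _ ≤ (P * (jb n ^ 3)⁻¹) * (Bd * (jb n ^ 3 * J x ^ 4 * Dx a1 b1 a2 b2 x) / (N : ℝ) ^ 2) :=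
          mul_le_mul (hyP n) (om_sub_omN hε hN a1 b1 a2 b2 n x) (norm_nonneg _) (by positivity)
      _ = Bd * P * (J x ^ 4 * Dx a1 b1 a2 b2 x) * (1 / (N : ℝ) ^ 2) := by field_simp
      _ ≤ (Bd + 2 * Bc) * P * (J x ^ 4 * Dx a1 b1 a2 b2 x) * (1 / (N : ℝ) ^ 2) := by
          gcongr; linarith
  · obtain ⟨n, x⟩ := z
    have j1 := jb_pos n
    have := hD0 x
    have hD := Dx_nonneg a1 b1 a2 b2 x
    have hJ := one_le_J x
    rw [norm_mul, norm_mul]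
    refine (mul_le_of_le_one_right (by positivity) (norm_av_ee_le hN ε _)).trans ?_
    have e1 := (norm_sub_le _ _).trans (add_le_add (norm_om_le a1 b1 a2 b2 n x)
      (norm_omN_le hε hN a1 b1 a2 b2 n x))
    have hJ0 := J_pos x
    calc _ ≤ (P * (jb n ^ 3)⁻¹) * (Bc * (jb n * J x ^ 2 * Dx a1 b1 a2 b2 x) +
          Bc * (jb n * J x ^ 2 * Dx a1 b1 a2 b2 x)) :=
          mul_le_mul (hyP n) e1 (norm_nonneg _) (by positivity)
      _ = 2 * Bc * P * (J x ^ 2 * Dx a1 b1 a2 b2 x) * (jb n ^ 2)⁻¹ := by field_simp; ring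
      _ ≤ (Bd + 2 * Bc) * P * (J x ^ 4 * Dx a1 b1 a2 b2 x) * (jb n ^ 2)⁻¹ := by
          gcongr
          · linarith
          · norm_num

/-- Postprocessing the error of the nodal values against a `C²` function. -/
lemma quad_error {w : ℝ → ℂ} (hw : ContDiff ℝ 2 w) (hwp : Function.Periodic w 1) {N : ℕ}
    (V U : ℤ → ℂ) {ρ : ℝ} (h : ∀ n, ‖xv N V n - xv N U n‖ ≤ ρ) :
    ‖(1 / (N : ℂ)) * (∑ j ∈ Finset.range N, V (j : ℤ) * w (tg (1 / (N : ℝ)) 0 (j : ℤ))) -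
      (1 / (N : ℂ)) * (∑ j ∈ Finset.range N, U (j : ℤ) * w (tg (1 / (N : ℝ)) 0 (j : ℤ)))‖ ≤
        4 * sobNorm 2 w * Zc * ρ := by
  have hws := hasSum_fc hw.continuous hwp (summable_fc_C2 hw hwp)
  have hsum : ∀ V : ℤ → ℂ, HasSum (fun k => fc w k * xv N V (-k))
      ((1 / (N : ℂ)) * (∑ j ∈ Finset.range N, V (j : ℤ) * w (tg (1 / (N : ℝ)) 0 (j : ℤ)))) := fun V => by
    have h1 := (hasSum_sum (s := Finset.range N) fun j _ =>
      (hws (tg (1 / (N : ℝ)) 0 (j : ℤ))).mul_left (V (j : ℤ))).mul_left (1 / (N : ℂ))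
    refine h1.congr_fun fun k => ?_
    unfold xv
    rw [neg_neg, mul_left_comm, Finset.mul_sum]
    congr 1
    exact Finset.sum_congr rfl fun j _ => by ring
  rw [← ((hsum V).sub (hsum U)).tsum_eq]
  have hb : HasSum (fun n : ℤ => 4 * sobNorm 2 w * (jb n ^ 2)⁻¹ * ρ) (4 * sobNorm 2 w * Zc * ρ) :=
    (summable_jb.hasSum.mul_left _).mul_right _
  refine tsum_of_norm_bounded hb fun k => ?_
  rw [← mul_sub, norm_mul]
  have := sobNorm_nonneg 2 w
  have := jb_pos k
  exact mul_le_mul (fc_C2_bound hw hwp k) (h _) (norm_nonneg _) (by positivity)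

/-- The linear system over `ZMod N`, rewritten with the index range `0, …, N - 1`. -/
lemma nys_range {V1 V2 : ℝ → ℝ → ℂ} {ε : ℝ} {N : ℕ} [NeZero N] (v : ZMod N → ℂ) (f : ℕ → ℂ)
    (h : ∀ i : ZMod N, (∑ j : ZMod N,
        Wmat V1 V2 (1 / (N : ℝ)) ε ((i.val : ℕ) : ℤ) ((j.val : ℕ) : ℤ) * v j) = f i.val) :
    ∀ i ∈ Finset.range N, ∑ j ∈ Finset.range N,
      Wmat V1 V2 (1 / (N : ℝ)) ε (i : ℤ) (j : ℤ) * v ((j : ℤ) : ZMod N) = f i := by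
  intro i hi
  have h1 := h (i : ZMod N)
  rw [sum_zmod, ZMod.val_cast_of_lt (Finset.mem_range.1 hi)] at h1
  rw [← h1]
  refine Finset.sum_congr rfl fun j hj => ?_
  rw [Int.cast_natCast, ZMod.val_cast_of_lt (Finset.mem_range.1 hj)]

/-- for `ε = ±1/6`, second-order convergence of the postprocessed
quadrature: `|h Σ_j φ_j v(t_j) − ∫₀¹ φ v| ≤ C h² ‖φ‖₃ ‖v‖₂`. -/
theorem stmt_16
    (A1 K1 A2 K2 : ℝ → ℝ → ℂ) (hA1 : SPK A1) (hK1 : SPK K1) (hA2 : SPK A2) (hK2 : SPK K2)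
    (α : ℂ) (hα : α ≠ 0) (hdiag : ∀ s : ℝ, A1 s s = α)
    (hinj : ∀ φ : ℝ → ℂ, ContDiff ℝ (⊤ : ℕ∞) φ → Function.Periodic φ 1 →
      (∀ s, Wop (logKer A1 K1) (logKer A2 K2) φ s = 0) → ∀ s, φ s = 0)
    (ε : ℝ) (hε : ε = 1 / 6 ∨ ε = -(1 / 6)) :
    ∃ h0 > (0:ℝ), ∃ C > (0:ℝ), ∀ φ : ℝ → ℂ, ContDiff ℝ (⊤ : ℕ∞) φ → Function.Periodic φ 1 →
      ∀ w : ℝ → ℂ, ContDiff ℝ 2 w → Function.Periodic w 1 →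
        ∀ (N : ℕ) [NeZero N], 1 / (N : ℝ) ≤ h0 →
          (∃! v : ZMod N → ℂ, Nys (logKer A1 K1) (logKer A2 K2) ε N φ v) ∧
          ∀ v : ZMod N → ℂ, Nys (logKer A1 K1) (logKer A2 K2) ε N φ v →
            ‖(1 / (N : ℂ)) * (∑ j : ZMod N, v j * w (tg (1 / (N : ℝ)) 0 ((j.val : ℕ) : ℤ)))
                - ∫ t in (0:ℝ)..1, φ t * w t‖ ≤
              C * (1 / (N : ℝ)) ^ 2 * sobNorm 3 φ * sobNorm 2 w := by
  have hβ : Complex.I / (2 * Real.pi) * α ≠ 0 :=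
    mul_ne_zero (div_ne_zero Complex.I_ne_zero (by
      have : (Real.pi : ℂ) ≠ 0 := by exact_mod_cast Real.pi_ne_zero
      exact mul_ne_zero two_ne_zero this)) hα
  obtain ⟨Cs, hCs, N0, hstab⟩ := stability hε (RD2_kerA hA1) (RD2_kerB hA1 hK1) (RD2_kerA hA2)
    (RD2_kerB hA2 hK2) hβ (fun f hf => diag_hasSum hA1 hdiag f hf)
    (fun y hy h => symbol_inj hA1 hK1 hA2 hK2 hinj y hy h)
  obtain ⟨Cr, hCr, hres⟩ := residual_bound hA1 hK1 hA2 hK2 hε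
  have hZ := Zc_nonneg
  refine ⟨1 / ((N0 : ℝ) + 1), by positivity, 32 * Zc * Cs * Cr + 512 * Zc ^ 2 + 1, by positivity,
    fun φ hφ hφp w hw hwp N _ hNh => ?_⟩
  have hN : 0 < N := Nat.pos_of_ne_zero (NeZero.ne N)
  have hNr : (0:ℝ) < N := by exact_mod_cast hN
  have hNc : (N : ℂ) ≠ 0 := by exact_mod_cast hN.ne'
  have hN0 : N0 ≤ N := by
    rw [div_le_div_iff₀ hNr (by positivity)] at hNh
    have : (N0 : ℝ) ≤ N := by linarith
    exact_mod_cast this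
  constructor
  ·
    -- a square linear system: stability gives injectivity, hence bijectivity
    obtain ⟨L, hL⟩ : ∃ L : (ZMod N → ℂ) →ₗ[ℂ] (ZMod N → ℂ), L = Matrix.mulVecLin (Matrix.of fun i j : ZMod N =>
      Wmat (logKer A1 K1) (logKer A2 K2) (1 / (N : ℝ)) ε ((i.val : ℕ) : ℤ) ((j.val : ℕ) : ℤ)) := ⟨_, rfl⟩
    have hLv : ∀ v i, L v i = ∑ j : ZMod N, Wmat (logKer A1 K1) (logKer A2 K2) (1 / (N : ℝ)) ε
        ((i.val : ℕ) : ℤ) ((j.val : ℕ) : ℤ) * v j := fun v i => by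
      rw [hL]; simp [Matrix.mulVec, dotProduct]
    have hLinj : Function.Injective L := by
      rw [← LinearMap.ker_eq_bot, LinearMap.ker_eq_bot']
      intro v hv
      have h1 := nys_range (V1 := logKer A1 K1) (V2 := logKer A2 K2) (ε := ε) v (fun _ => 0) fun i => by
        rw [← hLv, hv]; rfl
      have h2 : ∀ n, ‖xv N (fun j => v ((j : ℤ) : ZMod N)) n‖ ≤ Cs * 0 :=
        hstab N hN0 hN _ (fun n l => xv_shift hN _ n l) (fun _ => 0) 0 (fun m => by
          have h3 := D_res hA1 hK1 hA2 hK2 hε hN m (fun j => v ((j : ℤ) : ZMod N))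
          rw [Finset.sum_congr rfl (fun i hi => by rw [h1 i hi, mul_zero, mul_zero]),
            Finset.sum_const_zero, mul_zero] at h3
          exact h3) (fun m => by simp)
      funext i
      have h4 := eq_zero_of_xv hN (fun j => v ((j : ℤ) : ZMod N)) (fun n => by simpa using h2 n) (ZMod.val_lt i)
      simpa using h4
    have hLsur := LinearMap.injective_iff_surjective.1 hLinj
    obtain ⟨v, hv⟩ := hLsur (fun i => (1 / (N : ℂ)) *
      Wop (logKer A1 K1) (logKer A2 K2) φ (tg (1 / (N : ℝ)) ε ((i.val : ℕ) : ℤ)))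
    refine ⟨v, fun i => by rw [← hLv, hv], fun v' hv' => hLinj ?_⟩
    rw [hv]; funext i; rw [hLv]; exact hv' i
  · intro v hv
    have hφs := eq_ser hφ hφp
    have hy := RD1_fc hφ hφp
    obtain ⟨V, hVdef⟩ : ∃ V : ℤ → ℂ, V = fun j => v ((j : ℤ) : ZMod N) := ⟨_, rfl⟩
    have h1 := nys_range v (fun i => (1 / (N : ℂ)) *
      Wop (logKer A1 K1) (logKer A2 K2) φ (tg (1 / (N : ℝ)) ε (i : ℤ))) hv
    have hV : ∀ i ∈ Finset.range N, (N : ℂ) * ∑ j ∈ Finset.range N,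
        Wmat (logKer A1 K1) (logKer A2 K2) (1 / (N : ℝ)) ε (i : ℤ) (j : ℤ) * V j =
        Wop (logKer A1 K1) (logKer A2 K2) (ser (fc φ)) (tg (1 / (N : ℝ)) ε (i : ℤ)) := fun i hi => by
      rw [hVdef, h1 i hi, ← hφs]; field_simp
    have hP : 0 ≤ sobNorm 3 φ := sobNorm_nonneg _ _
    have hQ : 0 ≤ sobNorm 2 w := sobNorm_nonneg _ _
    choose R hR1 hR2 using residual_hasSum hA1 hK1 hA2 hK2 hε hN hy V hV
    rw [← hφs] at hR1
    have hX := hstab N hN0 hN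
      (fun n => xv N V n - xv N (fun j => φ (tg (1 / (N : ℝ)) 0 j)) n)
      (fun n l => by simp only [xv_shift hN]) R (Cr * (8 * sobNorm 3 φ) * (1 / (N : ℝ)) ^ 2) hR1
      (fun m => hres N hN (fc φ) hy (8 * sobNorm 3 φ) (by positivity) (fc_smooth_bound hφ hφp) m (R m) (hR2 m))
    have hq := quad_error hw hwp V (fun j => φ (tg (1 / (N : ℝ)) 0 j)) hX
    have ht := trapezoid_error hφ hφp hw hwp hN
    unfold av at ht
    have hsumv : ∑ j : ZMod N, v j * w (tg (1 / (N : ℝ)) 0 ((j.val : ℕ) : ℤ)) =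
        ∑ j ∈ Finset.range N, V (j : ℤ) * w (tg (1 / (N : ℝ)) 0 (j : ℤ)) := by
      rw [sum_zmod, hVdef]
      refine Finset.sum_congr rfl fun j hj => ?_
      simp only [Int.cast_natCast, ZMod.val_cast_of_lt (Finset.mem_range.1 hj)]
    rw [hsumv]
    refine (norm_sub_le_norm_sub_add_norm_sub _ _ _).trans ((add_le_add hq ht).trans ?_)
    have : 0 ≤ (1 / (N : ℝ)) ^ 2 * sobNorm 3 φ * sobNorm 2 w := by positivity
    nlinarith
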